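/- Let X be a locally simply connected Peano space with infinitely many maximal cyclic subsets, enumerated (T_n). Then there exists N such that for all n ≥ N, π₁(X) is isomorphic to the free product π₁(T₁) * ⋯ * π₁(T_n). -/

import Mathlib

open Metric Set

/-- A Jordan curve: a subset homeomorphic to the circle. -/
def IsJordanCurve {X : Type} [TopologicalSpace X] (J : Set X) : Prop :=
  Nonempty (AddCircle (1 : ℝ) ≃ₜ J)

/-- A set is cyclicly connected if every pair of its points lies on a Jordan curve in it. -/
def CyclicallyConnected {X : Type} [TopologicalSpace X] (C : Set X) : Prop :=
  ∀ x ∈ C, ∀ y ∈ C, ∃ J : Set X, J ⊆ C ∧ IsJordanCurve J ∧ x ∈ J ∧ y ∈ J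

/-- A maximal cyclic subset: non-degenerate, cyclicly connected, and not a proper subset
of any cyclicly connected subset. -/
def MaximalCyclic {X : Type} [TopologicalSpace X] (T : Set X) : Prop :=
  ¬ T.Subsingleton ∧ CyclicallyConnected T ∧
    ∀ C : Set X, CyclicallyConnected C → T ⊆ C → C = T
/-- Locally simply connected: every point has arbitrarily small simply connected
open neighborhoods. -/
def LocSimplyConnected (X : Type) [TopologicalSpace X] : Prop :=
  ∀ x : X, ∀ U ∈ nhds x, ∃ V ∈ nhds x, V ⊆ U ∧ IsOpen V ∧ SimplyConnectedSpace ↥V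

open Filter Topology

/-- `S` is an arc from `u` to `v`. -/
def IsArc {X : Type} [TopologicalSpace X] (u v : X) (S : Set X) : Prop :=
  ∃ (a b : ℝ) (f : ℝ → X), a < b ∧ ContinuousOn f (Icc a b) ∧ InjOn f (Icc a b) ∧
    f a = u ∧ f b = v ∧ f '' Icc a b = S

namespace IsArc

variable {X : Type} [MetricSpace X] {u v w x y : X} {S S' K : Set X}

theorem of_image {a b : ℝ} {f : ℝ → X} (hab : a < b) (hf : ContinuousOn f (Icc a b))
    (hi : InjOn f (Icc a b)) : IsArc (f a) (f b) (f '' Icc a b) :=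
  ⟨a, b, f, hab, hf, hi, rfl, rfl, rfl⟩

theorem left_mem (h : IsArc u v S) : u ∈ S := by
  obtain ⟨a, b, f, hab, -, -, rfl, -, rfl⟩ := h
  exact mem_image_of_mem f (left_mem_Icc.2 hab.le)

theorem right_mem (h : IsArc u v S) : v ∈ S := by
  obtain ⟨a, b, f, hab, -, -, -, rfl, rfl⟩ := h
  exact mem_image_of_mem f (right_mem_Icc.2 hab.le)

theorem ne (h : IsArc u v S) : u ≠ v := by
  obtain ⟨a, b, f, hab, -, hi, rfl, rfl, rfl⟩ := h
  exact fun e => hab.ne (hi (left_mem_Icc.2 hab.le) (right_mem_Icc.2 hab.le) e)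

theorem isCompact (h : IsArc u v S) : IsCompact S := by
  obtain ⟨a, b, f, hab, hf, -, -, -, rfl⟩ := h
  exact isCompact_Icc.image_of_continuousOn hf

theorem isClosed (h : IsArc u v S) : IsClosed S := h.isCompact.isClosed

theorem isPathConnected (h : IsArc u v S) : IsPathConnected S := by
  obtain ⟨a, b, f, hab, hf, -, -, -, rfl⟩ := h
  exact ((convex_Icc a b).isPathConnected (nonempty_Icc.2 hab.le)).image' hf

theorem isPathConnected_diff_right (h : IsArc u v S) : IsPathConnected (S \ {v}) := by
  obtain ⟨a, b, f, hab, hf, hi, -, rfl, rfl⟩ := h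
  have : f '' Icc a b \ {f b} = f '' Ico a b := by
    rw [← Icc_sdiff_right, hi.image_sdiff_subset, image_singleton]
    exact singleton_subset_iff.2 (right_mem_Icc.2 hab.le)
  rw [this]
  exact ((convex_Ico a b).isPathConnected (nonempty_Ico.2 hab)).image' (hf.mono Ico_subset_Icc_self)

theorem symm (h : IsArc u v S) : IsArc v u S := by
  obtain ⟨a, b, f, hab, hf, hi, rfl, rfl, rfl⟩ := h
  refine ⟨-b, -a, fun t => f (-t), by linarith, ?_, ?_, by simp, by simp, ?_⟩
  · refine hf.comp continuous_neg.continuousOn fun t ht => ?_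
    exact ⟨by linarith [ht.2], by linarith [ht.1]⟩
  · intro s hs t ht hst
    have := hi (x₁ := -s) (x₂ := -t) ⟨by linarith [hs.2], by linarith [hs.1]⟩
      ⟨by linarith [ht.2], by linarith [ht.1]⟩ hst
    linarith
  · rw [← image_image f (fun t => -t), image_neg_Icc]
    simp

theorem isPathConnected_diff_left (h : IsArc u v S) : IsPathConnected (S \ {u}) :=
  h.symm.isPathConnected_diff_right

theorem exists_split (h : IsArc u v S) (hw : w ∈ S) (hu : w ≠ u) (hv : w ≠ v) :
    ∃ A B, IsArc u w A ∧ IsArc w v B ∧ A ∪ B = S ∧ A ∩ B = {w} := by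
  obtain ⟨a, b, f, hab, hf, hi, rfl, rfl, rfl⟩ := h
  obtain ⟨c, hc, rfl⟩ := hw
  have hac : a < c := lt_of_le_of_ne hc.1 (by rintro rfl; exact hu rfl)
  have hcb : c < b := lt_of_le_of_ne hc.2 (by rintro rfl; exact hv rfl)
  have h1 : Icc a c ⊆ Icc a b := Icc_subset_Icc_right hc.2
  have h2 : Icc c b ⊆ Icc a b := Icc_subset_Icc_left hc.1
  refine ⟨_, _, of_image hac (hf.mono h1) (hi.mono h1), of_image hcb (hf.mono h2) (hi.mono h2),
    ?_, ?_⟩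
  · rw [← image_union, Icc_union_Icc_eq_Icc hc.1 hc.2]
  · rw [← hi.image_inter h1 h2, Icc_inter_Icc_eq_singleton hc.1 hc.2, image_singleton]

theorem join {A B : Set X} (hA : IsArc u w A) (hB : IsArc w v B) (hAB : A ∩ B = {w}) :
    IsArc u v (A ∪ B) := by
  obtain ⟨a, b, f, hab, hf, hfi, rfl, rfl, rfl⟩ := hA
  obtain ⟨c, d, g, hcd, hg, hgi, hgc, rfl, rfl⟩ := hB
  set G : ℝ → X := fun t => g (t - b + c) with hG
  have hGc : ContinuousOn G (Icc b (b + (d - c))) := by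
    refine hg.comp (by fun_prop) fun t ht => ⟨by linarith [ht.1], by linarith [ht.2]⟩
  have hGi : InjOn G (Icc b (b + (d - c))) := by
    intro s hs t ht hst
    have := hgi (x₁ := s - b + c) (x₂ := t - b + c) ⟨by linarith [hs.1], by linarith [hs.2]⟩
      ⟨by linarith [ht.1], by linarith [ht.2]⟩ hst
    linarith
  have hGim : G '' Icc b (b + (d - c)) = g '' Icc c d := by
    ext z; constructor
    · rintro ⟨t, ht, rfl⟩
      exact ⟨t - b + c, ⟨by linarith [ht.1], by linarith [ht.2]⟩, rfl⟩
    · rintro ⟨t, ht, rfl⟩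
      exact ⟨t + b - c, ⟨by linarith [ht.1], by linarith [ht.2]⟩, by simp only [hG]; congr 1; ring⟩
  have hGb : G b = f b := by simp [hG, hgc]
  rw [← hGim] at hAB ⊢
  set e := b + (d - c) with he
  have hbe : b < e := by simp only [he]; linarith
  have hGe : G e = g d := by simp only [hG, he]; congr 1; ring
  rw [← hGe]
  clear_value G e
  clear hGim
  set H : ℝ → X := fun t => if t ≤ b then f t else G t with hH
  have H1 : EqOn H f (Icc a b) := fun t ht => by simp [hH, ht.2]
  have H2 : EqOn H G (Icc b e) := fun t ht => by
    rcases eq_or_lt_of_le ht.1 with rfl | h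
    · simp [hH, hGb]
    · simp [hH, not_le.2 h]
  have hU : Icc a e = Icc a b ∪ Icc b e := (Icc_union_Icc_eq_Icc hab.le hbe.le).symm
  have hae := hab.trans hbe
  refine ⟨a, e, H, hae, ?_, ?_, H1 (left_mem_Icc.2 hab.le), H2 (right_mem_Icc.2 hbe.le), ?_⟩
  · rw [hU]
    exact (hf.congr H1).union_of_isClosed (hGc.congr H2) isClosed_Icc isClosed_Icc
  · have key : ∀ s ∈ Icc a b, ∀ t ∈ Icc b e, H s = H t → s = t := by
      intro s hs t ht hst
      rw [H1 hs, H2 ht] at hst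
      have : f s ∈ f '' Icc a b ∩ G '' Icc b e := ⟨mem_image_of_mem _ hs, hst ▸ mem_image_of_mem _ ht⟩
      rw [hAB, mem_singleton_iff] at this
      have h1 := hfi hs (right_mem_Icc.2 hab.le) this
      have h2 := hGi ht (left_mem_Icc.2 hbe.le) (by rw [← hst, this, hGb])
      rw [h1, h2]
    intro s hs t ht hst
    rw [hU] at hs ht
    rcases hs with hs | hs <;> rcases ht with ht | ht
    · exact hfi hs ht (by rwa [H1 hs, H1 ht] at hst)
    · exact key s hs t ht hst
    · exact (key t ht s hs hst.symm).symm
    · exact hGi hs ht (by rwa [H2 hs, H2 ht] at hst)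
  · rw [hU, image_union, H1.image_eq, H2.image_eq]

/-- The initial part of an arc up to the first point in a closed set. -/
theorem exists_first_hit (h : IsArc u v S) (hK : IsClosed K) (hu : u ∉ K) (hne : (S ∩ K).Nonempty) :
    ∃ w A, IsArc u w A ∧ A ⊆ S ∧ A ∩ K = {w} := by
  obtain ⟨a, b, f, hab, hf, hi, rfl, rfl, rfl⟩ := h
  have hcl : IsCompact (Icc a b ∩ f ⁻¹' K) :=
    isCompact_Icc.of_isClosed_subset (hf.preimage_isClosed_of_isClosed isClosed_Icc hK)
      inter_subset_left
  have hn : (Icc a b ∩ f ⁻¹' K).Nonempty := by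
    obtain ⟨_, ⟨t, ht, rfl⟩, hk⟩ := hne
    exact ⟨t, ht, hk⟩
  obtain ⟨c, hc⟩ := hcl.exists_isLeast hn
  have hac : a < c := lt_of_le_of_ne hc.1.1.1 (by rintro rfl; exact hu hc.1.2)
  have h1 : Icc a c ⊆ Icc a b := Icc_subset_Icc_right hc.1.1.2
  refine ⟨f c, _, of_image hac (hf.mono h1) (hi.mono h1), image_mono h1, ?_⟩
  ext z; constructor
  · rintro ⟨⟨t, ht, rfl⟩, hz⟩
    have : c ≤ t := hc.2 ⟨h1 ht, hz⟩
    rw [le_antisymm ht.2 this]; rfl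
  · rintro rfl
    exact ⟨mem_image_of_mem f (right_mem_Icc.2 hac.le), hc.1.2⟩

end IsArc

/-- A map which is constant between any two points with the same value has an arc as image. -/
theorem IsArc.of_monotone {X : Type} [MetricSpace X] {g : ℝ → X} (hg : Continuous g)
    (hmono : ∀ s ∈ Icc (0 : ℝ) 1, ∀ t ∈ Icc (0 : ℝ) 1, g s = g t → ∀ r ∈ Icc s t, g r = g s)
    (h01 : g 0 ≠ g 1) : IsArc (g 0) (g 1) (g '' Icc 0 1) := by
  -- running maxima
  let q : ℝ → ℝ → ℝ → ℝ := fun p t τ => dist (g p) (g (p + τ * max 0 (t - p)))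
  have hq : ∀ p, Continuous ↿(q p) := fun p => by
    change Continuous (fun z : ℝ × ℝ => dist (g p) (g (p + z.2 * max 0 (z.1 - p))))
    fun_prop
  let m : ℝ → ℝ → ℝ := fun p t => sSup (q p t '' Icc 0 1)
  have hm : ∀ p, Continuous (m p) := fun p => isCompact_Icc.continuous_sSup (hq p)
  have hbdd : ∀ p t, BddAbove (q p t '' Icc 0 1) := fun p t =>
    (isCompact_Icc.image_of_continuousOn
      (((hq p).comp (Continuous.prodMk_right t)).continuousOn)).bddAbove
  have hne : ∀ p t, (q p t '' Icc (0 : ℝ) 1).Nonempty := fun p t =>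
    (nonempty_Icc.2 zero_le_one).image _
  have hmle : ∀ p t c, p ≤ t → (∀ r ∈ Icc p t, dist (g p) (g r) ≤ c) → m p t ≤ c := by
    intro p t c hpt h
    refine csSup_le (hne p t) ?_
    rintro _ ⟨τ, hτ, rfl⟩
    apply h
    rw [max_eq_right (by linarith)]
    constructor <;> nlinarith [hτ.1, hτ.2]
  have hlem : ∀ p t r, r ∈ Icc p t → dist (g p) (g r) ≤ m p t := by
    intro p t r hr
    refine le_csSup (hbdd p t) ?_
    rcases eq_or_lt_of_le hr.1 with rfl | hlt
    · exact ⟨0, by simp, by simp [q]⟩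
    · have h0 : 0 < t - p := by linarith [hr.2]
      refine ⟨(r - p) / (t - p), ⟨div_nonneg (by linarith) h0.le, ?_⟩, ?_⟩
      · rw [div_le_one h0]; linarith [hr.2]
      · simp only [q]
        rw [max_eq_right h0.le, div_mul_cancel₀ _ h0.ne']; simp
  have hm0 : ∀ p t, t ≤ p → m p t = 0 := by
    intro p t htp
    have : q p t '' Icc 0 1 = {0} := by
      refine (hne p t).subset_singleton_iff.1 ?_
      rintro _ ⟨τ, -, rfl⟩
      simp [q, max_eq_left (sub_nonpos.2 htp)]
    simp [m, this]
  have hmnn : ∀ p t, 0 ≤ m p t := fun p t => by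
    rcases le_total t p with h | h
    · exact (hm0 p t h).ge
    · exact dist_nonneg.trans (hlem p t p ⟨le_rfl, h⟩)
  have hmm : ∀ p, Monotone (m p) := by
    intro p s t hst
    rcases le_total s p with h | h
    · rw [hm0 p s h]; exact hmnn p t
    · exact hmle p s _ h fun r hr => hlem p t r ⟨hr.1, hr.2.trans hst⟩
  have hmc : ∀ p, ∀ s ∈ Icc (0 : ℝ) 1, ∀ t ∈ Icc (0 : ℝ) 1, s ≤ t → g s = g t → m p t = m p s := by
    intro p s hs t ht hst he
    have hc := hmono s hs t ht he
    rcases le_total s p with h | h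
    · rw [hm0 p s h]
      rcases le_total t p with h' | h'
      · exact hm0 p t h'
      · refine le_antisymm (hmle p t 0 h' fun r hr => ?_) (hmnn p t)
        rw [hc p ⟨h, h'⟩, hc r ⟨h.trans hr.1, hr.2⟩, dist_self]
    · refine le_antisymm (hmle p t _ (h.trans hst) fun r hr => ?_) (hmm p hst)
      rcases le_total r s with h' | h'
      · exact hlem p s r ⟨hr.1, h'⟩
      · rw [hc r ⟨h', hr.2⟩]; exact hlem p s s ⟨h, le_rfl⟩
  let term : ℕ → ℝ → ℝ := fun n t => (1 / 2) ^ n * min 1 (m (TopologicalSpace.denseSeq ℝ n) t)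
  have htle : ∀ n t, ‖term n t‖ ≤ (1 / 2 : ℝ) ^ n := by
    intro n t
    have h1 : 0 ≤ min 1 (m (TopologicalSpace.denseSeq ℝ n) t) := le_min zero_le_one (hmnn _ _)
    rw [Real.norm_of_nonneg (by positivity)]
    exact mul_le_of_le_one_right (by positivity) (min_le_left _ _)
  have hsum : ∀ t, Summable fun n => term n t := fun t =>
    Summable.of_norm_bounded summable_geometric_two (htle · t)
  have htm : ∀ n, Monotone (term n) := fun n s t hst =>
    mul_le_mul_of_nonneg_left (min_le_min_left _ (hmm _ hst)) (by positivity)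
  let h : ℝ → ℝ := fun t => ∑' n, term n t
  have hcont : Continuous h :=
    continuous_tsum (fun n => continuous_const.mul (continuous_const.min (hm _)))
      summable_geometric_two htle
  have hhm : Monotone h := fun s t hst => (hsum s).tsum_le_tsum (fun n => htm n hst) (hsum t)
  have hstrict : ∀ s t, s ≤ t → g s ≠ g t → h s < h t := by
    intro s t hst hne
    have hst' : s < t := lt_of_le_of_ne hst (by rintro rfl; exact hne rfl)
    have hopen : IsOpen {p | g p ≠ g t} := isOpen_ne_fun hg continuous_const
    have hnon : ({p | g p ≠ g t} ∩ Ioo s t).Nonempty := by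
      have hcl : s ∈ closure (Ioo s t) := by rw [closure_Ioo hst'.ne]; exact ⟨le_rfl, hst⟩
      exact mem_closure_iff.1 hcl _ hopen hne
    obtain ⟨n, hp1, hp2⟩ :=
      (TopologicalSpace.denseRange_denseSeq ℝ).exists_mem_open (hopen.inter isOpen_Ioo) hnon
    refine (hsum s).tsum_lt_tsum (fun n => htm n hst) (i := n) ?_ (hsum t)
    refine mul_lt_mul_of_pos_left ?_ (by positivity)
    rw [hm0 _ s hp2.1.le, min_eq_right zero_le_one]
    exact lt_min one_pos ((dist_pos.2 hp1).trans_le (hlem _ t t ⟨hp2.2.le, le_rfl⟩))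
  have hheq : ∀ s ∈ Icc (0 : ℝ) 1, ∀ t ∈ Icc (0 : ℝ) 1, (h s = h t ↔ g s = g t) := by
    have : ∀ s ∈ Icc (0 : ℝ) 1, ∀ t ∈ Icc (0 : ℝ) 1, s ≤ t → (h s = h t ↔ g s = g t) := by
      intro s hs t ht hst
      refine ⟨fun he => by_contra fun hn => (hstrict s t hst hn).ne he, fun he => ?_⟩
      simp only [h, term, hmc _ s hs t ht hst he]
    intro s hs t ht
    rcases le_total s t with hst | hst
    · exact this s hs t ht hst
    · rw [eq_comm, this t ht s hs hst, eq_comm]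
  have h01' : h 0 < h 1 := hstrict 0 1 zero_le_one h01
  have himg : h '' Icc 0 1 = Icc (h 0) (h 1) := by
    refine Subset.antisymm ?_ (intermediate_value_Icc zero_le_one hcont.continuousOn)
    rintro _ ⟨t, ht, rfl⟩
    exact ⟨hhm ht.1, hhm ht.2⟩
  have hex : ∀ c ∈ Icc (h 0) (h 1), ∃ t ∈ Icc (0 : ℝ) 1, h t = c := fun c hc => by
    rw [← himg] at hc; exact hc
  choose! σ hσ1 hσ2 using hex
  have hfh : ∀ t ∈ Icc (0 : ℝ) 1, g (σ (h t)) = g t := fun t ht => by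
    have h1 : h t ∈ Icc (h 0) (h 1) := himg ▸ mem_image_of_mem h ht
    exact (hheq _ (hσ1 _ h1) t ht).1 (hσ2 _ h1)
  refine ⟨h 0, h 1, fun c => g (σ c), h01', ?_, ?_, hfh 0 (by simp), hfh 1 (by simp), ?_⟩
  · rw [continuousOn_iff_isClosed]
    intro D hD
    refine ⟨h '' (Icc 0 1 ∩ g ⁻¹' D),
      ((isCompact_Icc.inter_right (hD.preimage hg)).image hcont).isClosed, ?_⟩
    ext c; constructor
    · rintro ⟨hc, hc'⟩
      exact ⟨⟨σ c, ⟨hσ1 c hc', hc⟩, hσ2 c hc'⟩, hc'⟩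
    · rintro ⟨⟨t, ⟨ht, htD⟩, rfl⟩, hc⟩
      exact ⟨by rw [mem_preimage, hfh t ht]; exact htD, hc⟩
  · intro c hc d hd hcd
    rw [← hσ2 c hc, ← hσ2 d hd]
    exact (hheq _ (hσ1 c hc) _ (hσ1 d hd)).2 hcd
  · rw [← himg, image_image]
    exact image_congr hfh

/-- The last point of `F` before `t`. -/
theorem exists_last_mem {F : Set ℝ} (hF : IsClosed F) {a t : ℝ} (ha : a ∈ F) (hat : a ≤ t) :
    ∃ r ∈ F, r ∈ Icc a t ∧ ∀ s ∈ F, s ≤ t → s ≤ r := by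
  obtain ⟨r, hr⟩ := (isCompact_Icc.inter_right hF : IsCompact (Icc a t ∩ F)).exists_isGreatest
    ⟨a, ⟨le_rfl, hat⟩, ha⟩
  refine ⟨r, hr.1.2, hr.1.1, fun s hs hst => ?_⟩
  rcases le_total a s with h | h
  · exact hr.2 ⟨⟨h, hst⟩, hs⟩
  · exact h.trans hr.1.1.1

/-- The first point of `F` after `t`. -/
theorem exists_first_mem {F : Set ℝ} (hF : IsClosed F) {b t : ℝ} (hb : b ∈ F) (htb : t ≤ b) :
    ∃ r ∈ F, r ∈ Icc t b ∧ ∀ s ∈ F, t ≤ s → r ≤ s := by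
  obtain ⟨r, hr⟩ := (isCompact_Icc.inter_right hF : IsCompact (Icc t b ∩ F)).exists_isLeast
    ⟨b, ⟨htb, le_rfl⟩, hb⟩
  refine ⟨r, hr.1.2, hr.1.1, fun s hs hst => ?_⟩
  rcases le_total b s with h | h
  · exact hr.1.1.2.trans h
  · exact hr.2 ⟨⟨hst, h⟩, hs⟩

/-- Closed subsets of the unit interval whose complementary gaps have equal values at both ends. -/
def IsGapSet {X : Type} (γ : ℝ → X) (F : Set ℝ) : Prop :=
  IsClosed F ∧ F ⊆ Icc 0 1 ∧ 0 ∈ F ∧ 1 ∈ F ∧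
    ∀ a ∈ F, ∀ b ∈ F, a < b → (∀ t ∈ F, ¬ (a < t ∧ t < b)) → γ a = γ b

theorem exists_minimal_isGapSet {X : Type} [MetricSpace X] {γ : ℝ → X} (hγ : Continuous γ) :
    ∃ F, Minimal (IsGapSet γ) F := by
  have h0 : IsGapSet γ (Icc 0 1) := by
    refine ⟨isClosed_Icc, Subset.rfl, by simp, by simp, fun a ha b hb hab h => ?_⟩
    exact absurd ⟨by linarith, by linarith⟩
      (h ((a + b) / 2) ⟨by linarith [ha.1, hb.1], by linarith [ha.2, hb.2]⟩)
  suffices H : ∀ c ⊆ {F | IsGapSet γ F}, IsChain (· ⊆ ·) c → c.Nonempty →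
      ∃ lb ∈ {F | IsGapSet γ F}, ∀ s ∈ c, lb ⊆ s by
    obtain ⟨F, -, hF⟩ := zorn_superset_nonempty {F | IsGapSet γ F} H _ h0
    exact ⟨F, hF⟩
  intro c hc hchain hne
  refine ⟨⋂₀ c, ⟨isClosed_sInter fun F hF => (hc hF).1, ?_, ?_, ?_, ?_⟩,
    fun s hs => sInter_subset_of_mem hs⟩
  · obtain ⟨F, hF⟩ := hne
    exact (sInter_subset_of_mem hF).trans (hc hF).2.1
  · exact fun F hF => (hc hF).2.2.1
  · exact fun F hF => (hc hF).2.2.2.1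
  intro a ha b hb hab hgap
  refine eq_of_forall_dist_le fun ε hε => ?_
  obtain ⟨δ₁, hδ₁, h1⟩ := Metric.continuous_iff.1 hγ a (ε / 2) (half_pos hε)
  obtain ⟨δ₂, hδ₂, h2⟩ := Metric.continuous_iff.1 hγ b (ε / 2) (half_pos hε)
  let δ := min (min (δ₁ / 2) (δ₂ / 2)) ((b - a) / 3)
  have hδ : 0 < δ := lt_min (lt_min (by linarith) (by linarith)) (by linarith)
  have e1 : δ ≤ δ₁ / 2 := (min_le_left _ _).trans (min_le_left _ _)
  have e2 : δ ≤ δ₂ / 2 := (min_le_left _ _).trans (min_le_right _ _)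
  have e3 : δ ≤ (b - a) / 3 := min_le_right _ _
  obtain ⟨F, hF, hFe⟩ : ∃ F ∈ c, Icc (a + δ) (b - δ) ∩ F = ∅ := by
    by_contra! hcon
    have : Nonempty c := hne.to_subtype
    have := IsCompact.nonempty_iInter_of_directed_nonempty_isCompact_isClosed
      (fun F : c => Icc (a + δ) (b - δ) ∩ F.1) ?_ (fun F => hcon F.1 F.2)
      (fun F => isCompact_Icc.inter_right (hc F.2).1)
      (fun F => isClosed_Icc.inter (hc F.2).1)
    · obtain ⟨t, ht⟩ := this
      rw [mem_iInter] at ht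
      have hI := (ht ‹Nonempty c›.some).1
      exact hgap t (fun F hF => (ht ⟨F, hF⟩).2) ⟨by linarith [hI.1], by linarith [hI.2]⟩
    · rintro F G
      rcases hchain.total F.2 G.2 with h | h
      · exact ⟨F, Subset.rfl, inter_subset_inter_right _ h⟩
      · exact ⟨G, inter_subset_inter_right _ h, Subset.rfl⟩
  have hnot : ∀ t ∈ F, ¬ (a + δ ≤ t ∧ t ≤ b - δ) := fun t ht h =>
    (eq_empty_iff_forall_notMem.1 hFe t) ⟨h, ht⟩
  obtain ⟨r, hr, hr1, hr2⟩ := exists_last_mem (hc hF).1 (ha F hF) (by linarith : a ≤ a + δ)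
  obtain ⟨s, hs, hs1, hs2⟩ := exists_first_mem (hc hF).1 (hb F hF) (by linarith : b - δ ≤ b)
  have hrs : γ r = γ s := by
    refine (hc hF).2.2.2.2 r hr s hs (by linarith [hr1.2, hs1.1]) fun t ht h => ?_
    by_cases h3 : t ≤ a + δ
    · linarith [hr2 t ht h3]
    by_cases h4 : b - δ ≤ t
    · linarith [hs2 t ht h4]
    · exact hnot t ht ⟨by linarith, by linarith⟩
  have d1 := h1 r (by rw [Real.dist_eq, abs_lt]; constructor <;> linarith [hr1.1, hr1.2])
  have d2 := h2 s (by rw [Real.dist_eq, abs_lt]; constructor <;> linarith [hs1.1, hs1.2])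
  calc dist (γ a) (γ b) ≤ dist (γ a) (γ r) + dist (γ r) (γ b) := dist_triangle _ _ _
    _ ≤ ε := by rw [dist_comm (γ a), hrs]; rw [hrs] at d1; linarith

theorem exists_isArc_of_continuous {X : Type} [MetricSpace X] {γ : ℝ → X} (hγ : Continuous γ)
    (h01 : γ 0 ≠ γ 1) : ∃ S ⊆ γ '' Icc 0 1, IsArc (γ 0) (γ 1) S := by
  obtain ⟨F, ⟨hFc, hFI, hF0, hF1, hFg⟩, hmin⟩ := exists_minimal_isGapSet hγ
  have hinj : ∀ s ∈ F, ∀ t ∈ F, s < t → γ s = γ t → ∀ r ∈ F, ¬ (s < r ∧ r < t) := by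
    intro s hs t ht hst he r hr hr'
    have hG : IsGapSet γ (F \ Ioo s t) := by
      refine ⟨hFc.sdiff isOpen_Ioo, sdiff_subset.trans hFI, ⟨hF0, fun h => ?_⟩,
        ⟨hF1, fun h => ?_⟩, ?_⟩
      · linarith [h.1, (hFI hs).1]
      · linarith [h.2, (hFI ht).2]
      · intro a ha b hb hab hgap
        by_cases hc : ∃ z ∈ F, a < z ∧ z < b
        · obtain ⟨z, hz, haz, hzb⟩ := hc
          have hzI : z ∈ Ioo s t := by
            by_contra hn
            exact hgap z ⟨hz, hn⟩ ⟨haz, hzb⟩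
          have has : a ≤ s := by
            by_contra! h
            exact ha.2 ⟨h, haz.trans hzI.2⟩
          have htb : t ≤ b := by
            by_contra! h
            exact hb.2 ⟨hzI.1.trans hzb, h⟩
          have has' : a = s := by
            by_contra hn
            exact hgap s ⟨hs, fun h => lt_irrefl _ h.1⟩
              ⟨lt_of_le_of_ne has hn, hzI.1.trans hzb⟩
          have htb' : b = t := by
            by_contra hn
            exact hgap t ⟨ht, fun h => lt_irrefl _ h.2⟩
              ⟨haz.trans hzI.2, lt_of_le_of_ne htb (Ne.symm hn)⟩
          rw [has', htb', he]
        · push Not at hc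
          exact hFg a ha.1 b hb.1 hab fun z hz h => (hc z hz h.1).not_gt h.2
    exact (hmin hG sdiff_subset hr).2 hr'
  have hρ : ∀ t : ℝ, ∃ r ∈ F, 0 ≤ t → r ≤ t ∧ ∀ s ∈ F, s ≤ t → s ≤ r := by
    intro t
    by_cases ht : 0 ≤ t
    · obtain ⟨r, hr, hr1, hr2⟩ := exists_last_mem hFc hF0 ht
      exact ⟨r, hr, fun _ => ⟨hr1.2, hr2⟩⟩
    · exact ⟨0, hF0, fun h => absurd h ht⟩
  choose ρ hρF hρ using hρ
  let pr : ℝ → ℝ := fun t => max 0 (min t 1)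
  have hpr : ∀ t ∈ Icc (0 : ℝ) 1, pr t = t := fun t ht => by simp [pr, ht.1, ht.2]
  have hprI : ∀ t, pr t ∈ Icc (0 : ℝ) 1 := fun t => ⟨le_max_left _ _, max_le zero_le_one (min_le_right _ _)⟩
  let g₀ : ℝ → X := fun t => γ (ρ t)
  have hρm : ∀ s ∈ Icc (0 : ℝ) 1, ∀ t ∈ Icc (0 : ℝ) 1, s ≤ t → ρ s ≤ ρ t := fun s hs t ht hst =>
    (hρ t ht.1).2 _ (hρF s) ((hρ s hs.1).1.trans hst)
  have hself : ∀ t ∈ F, ρ t = t := fun t ht =>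
    le_antisymm (hρ t (hFI ht).1).1 ((hρ t (hFI ht).1).2 t ht le_rfl)
  have hmod : ∀ s ∈ Icc (0 : ℝ) 1, ∀ t ∈ Icc (0 : ℝ) 1, s ≤ t →
      g₀ s = g₀ t ∨ ∃ s' ∈ Icc s t, ∃ t' ∈ Icc s t, g₀ s = γ s' ∧ g₀ t = γ t' := by
    intro s hs t ht hst
    by_cases hst' : ρ t ≤ s
    · left
      have : ρ s = ρ t := le_antisymm (hρm s hs t ht hst) ((hρ s hs.1).2 _ (hρF t) hst')
      simp [g₀, this]
    · right
      push Not at hst'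
      obtain ⟨σ, hσF, hσ1, hσ2⟩ := exists_first_mem hFc (hρF t) hst'.le
      refine ⟨σ, ⟨hσ1.1, hσ1.2.trans (hρ t ht.1).1⟩, ρ t, ⟨hst'.le, (hρ t ht.1).1⟩, ?_, rfl⟩
      have hle : ρ s ≤ σ := (hρ s hs.1).1.trans hσ1.1
      rcases eq_or_lt_of_le hle with h | h
      · simp [g₀, h]
      · refine hFg _ (hρF s) _ hσF h fun z hz hz' => ?_
        rcases le_total z s with h' | h'
        · exact absurd ((hρ s hs.1).2 z hz h') (not_le.2 hz'.1)
        · exact absurd (hσ2 z hz h') (not_le.2 hz'.2)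
  have hg₀c : ContinuousOn g₀ (Icc 0 1) := by
    rw [Metric.continuousOn_iff]
    intro s hs ε hε
    have huc := isCompact_Icc.uniformContinuousOn_of_continuous
      (hγ.continuousOn (s := Icc (0 : ℝ) 1))
    obtain ⟨δ, hδ, H⟩ := Metric.uniformContinuousOn_iff.1 huc ε hε
    have key : ∀ s ∈ Icc (0 : ℝ) 1, ∀ t ∈ Icc (0 : ℝ) 1, s ≤ t → dist s t < δ →
        dist (g₀ s) (g₀ t) < ε := by
      intro s hs t ht hst hd
      rcases hmod s hs t ht hst with h | ⟨s', hs', t', ht', h1, h2⟩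
      · rw [h, dist_self]; exact hε
      · rw [h1, h2]
        refine H s' ⟨hs.1.trans hs'.1, hs'.2.trans ht.2⟩ t' ⟨hs.1.trans ht'.1, ht'.2.trans ht.2⟩ ?_
        rw [Real.dist_eq, abs_lt] at *
        constructor <;> linarith [hs'.1, hs'.2, ht'.1, ht'.2, hd.1]
    refine ⟨δ, hδ, fun t ht hd => ?_⟩
    rcases le_total s t with h | h
    · rw [dist_comm]; exact key s hs t ht h (by rwa [dist_comm])
    · exact key t ht s hs h hd
  have hg₀m : ∀ s ∈ Icc (0 : ℝ) 1, ∀ t ∈ Icc (0 : ℝ) 1, g₀ s = g₀ t → ∀ r ∈ Icc s t, g₀ r = g₀ s := by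
    intro s hs t ht he r hr
    have hrI : r ∈ Icc (0 : ℝ) 1 := ⟨hs.1.trans hr.1, hr.2.trans ht.2⟩
    have a1 := hρm s hs r hrI hr.1
    have a2 := hρm r hrI t ht hr.2
    rcases eq_or_lt_of_le a1 with h | h
    · simp [g₀, h]
    rcases eq_or_lt_of_le a2 with h' | h'
    · rw [he]; simp [g₀, h']
    · exact absurd ⟨h, h'⟩ (hinj _ (hρF s) _ (hρF t) (h.trans h') he _ (hρF r))
  have hgpr : ∀ t ∈ Icc (0 : ℝ) 1, g₀ (pr t) = g₀ t := fun t ht => by rw [hpr t ht]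
  have hI0 : (0 : ℝ) ∈ Icc (0 : ℝ) 1 := by simp
  have hI1 : (1 : ℝ) ∈ Icc (0 : ℝ) 1 := by simp
  have e0 : g₀ (pr 0) = γ 0 := by rw [hpr 0 hI0]; simp [g₀, hself 0 hF0]
  have e1 : g₀ (pr 1) = γ 1 := by rw [hpr 1 hI1]; simp [g₀, hself 1 hF1]
  have := IsArc.of_monotone (g := fun t => g₀ (pr t))
    (hg₀c.comp_continuous (by fun_prop) hprI) ?_ (by rw [e0, e1]; exact h01)
  · rw [e0, e1] at this
    refine ⟨_, ?_, this⟩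
    rintro _ ⟨t, -, rfl⟩
    exact mem_image_of_mem γ (hFI (hρF _))
  · intro s hs t ht he r hr
    have hrI : r ∈ Icc (0 : ℝ) 1 := ⟨hs.1.trans hr.1, hr.2.trans ht.2⟩
    simp only [hpr s hs, hpr t ht, hpr r hrI] at he ⊢
    exact hg₀m s hs t ht he r hr

theorem JoinedIn.exists_isArc {X : Type} [MetricSpace X] {u v : X} {W : Set X}
    (h : JoinedIn W u v) (huv : u ≠ v) : ∃ S ⊆ W, IsArc u v S := by
  obtain ⟨γ, hγ⟩ := h
  obtain ⟨S, hS, hA⟩ := exists_isArc_of_continuous γ.continuous_extend (by simpa using huv)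
  refine ⟨S, hS.trans ?_, by simpa using hA⟩
  rintro _ ⟨t, ht, rfl⟩
  rw [γ.extend_apply ht]
  exact hγ _

theorem IsPathConnected.exists_isArc {X : Type} [MetricSpace X] {u v : X} {W : Set X}
    (h : IsPathConnected W) (hu : u ∈ W) (hv : v ∈ W) (huv : u ≠ v) : ∃ S ⊆ W, IsArc u v S :=
  (h.joinedIn u hu v hv).exists_isArc huv

theorem IsArc.exists_param {X : Type} [MetricSpace X] {u v : X} {S : Set X} (h : IsArc u v S)
    {α β : ℝ} (hαβ : α < β) : ∃ f : ℝ → X, ContinuousOn f (Icc α β) ∧ InjOn f (Icc α β) ∧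
      f α = u ∧ f β = v ∧ f '' Icc α β = S := by
  obtain ⟨a, b, f, hab, hf, hi, rfl, rfl, rfl⟩ := h
  have hd : 0 < β - α := sub_pos.2 hαβ
  have hd' : 0 < b - a := sub_pos.2 hab
  let φ : ℝ → ℝ := fun t => a + (t - α) / (β - α) * (b - a)
  have hφ : ∀ t ∈ Icc α β, φ t ∈ Icc a b := by
    intro t ht
    have h1 : 0 ≤ (t - α) / (β - α) := div_nonneg (by linarith [ht.1]) hd.le
    have h2 : (t - α) / (β - α) ≤ 1 := (div_le_one hd).2 (by linarith [ht.2])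
    constructor <;> simp only [φ] <;> nlinarith
  have hinj : Function.Injective φ := by
    intro s t hst
    simp only [φ, add_right_inj] at hst
    have := mul_right_cancel₀ hd'.ne' hst
    field_simp at this
    linarith
  have hα : φ α = a := by simp [φ]
  have hβ : φ β = b := by simp [φ, div_self hd.ne']
  have hc : Continuous φ := by fun_prop
  refine ⟨f ∘ φ, hf.comp hc.continuousOn hφ, fun s hs t ht hst => hinj (hi (hφ s hs) (hφ t ht) hst),
    by simp [hα], by simp [hβ], ?_⟩
  rw [image_comp]
  congr 1
  refine Subset.antisymm (image_subset_iff.2 hφ) ?_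
  have := intermediate_value_Icc hαβ.le hc.continuousOn
  rwa [hα, hβ] at this

theorem IsJordanCurve.of_loop {X : Type} [MetricSpace X] {f : ℝ → X}
    (hf : ContinuousOn f (Icc 0 1)) (hi : InjOn f (Ico 0 1)) (h01 : f 0 = f 1) :
    IsJordanCurve (f '' Icc 0 1) := by
  have hF : Continuous (AddCircle.liftIco (1 : ℝ) 0 f) := AddCircle.liftIco_zero_continuous h01 hf
  have hco : ∀ x ∈ Ico (0 : ℝ) 1, AddCircle.liftIco (1 : ℝ) 0 f x = f x := fun x hx =>
    AddCircle.liftIco_zero_coe_apply hx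
  have hsurj : ∀ z : AddCircle (1 : ℝ), ∃ x ∈ Ico (0 : ℝ) 1, (x : AddCircle (1 : ℝ)) = z := by
    intro z
    have : z ∈ ((↑) : ℝ → AddCircle (1 : ℝ)) '' Ico 0 (0 + 1) := by
      rw [AddCircle.coe_image_Ico_eq]; trivial
    simpa using this
  have hinj : Function.Injective (AddCircle.liftIco (1 : ℝ) 0 f) := by
    intro z w hzw
    obtain ⟨x, hx, rfl⟩ := hsurj z
    obtain ⟨y, hy, rfl⟩ := hsurj w
    rw [hco x hx, hco y hy] at hzw
    rw [hi hx hy hzw]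
  have hr : range (AddCircle.liftIco (1 : ℝ) 0 f) = f '' Icc 0 1 := by
    ext p; constructor
    · rintro ⟨z, rfl⟩
      obtain ⟨x, hx, rfl⟩ := hsurj z
      exact ⟨x, Ico_subset_Icc_self hx, (hco x hx).symm⟩
    · rintro ⟨x, hx, rfl⟩
      rcases eq_or_lt_of_le hx.2 with rfl | h
      · exact ⟨((0 : ℝ) : AddCircle (1 : ℝ)), by rw [hco 0 (by simp), h01]⟩
      · exact ⟨x, hco x ⟨hx.1, h⟩⟩
  rw [← hr]
  exact ⟨(hF.isClosedEmbedding hinj).isEmbedding.toHomeomorph⟩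

theorem IsArc.isJordanCurve_union {X : Type} [MetricSpace X] {u v : X} {A B : Set X}
    (hA : IsArc u v A) (hB : IsArc u v B) (hAB : A ∩ B = {u, v}) : IsJordanCurve (A ∪ B) := by
  obtain ⟨f, hf, hfi, hf0, hf1, rfl⟩ := hA.exists_param (α := 0) (β := 1 / 2) (by norm_num)
  obtain ⟨G, hG, hGi, hG0, hG1, rfl⟩ := hB.symm.exists_param (α := 1 / 2) (β := 1) (by norm_num)
  set H : ℝ → X := fun t => if t ≤ 1 / 2 then f t else G t with hH
  have H1 : EqOn H f (Icc 0 (1 / 2)) := fun t ht => by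
    have := ht.2
    simp only [hH, this, if_true]
  have H2 : EqOn H G (Icc (1 / 2) 1) := fun t ht => by
    rcases eq_or_lt_of_le ht.1 with rfl | h
    · simp only [hH, le_refl, if_true, hf1, hG0]
    · simp only [hH, not_le.2 h, if_false]
  have hU : Icc (0 : ℝ) 1 = Icc 0 (1 / 2) ∪ Icc (1 / 2) 1 :=
    (Icc_union_Icc_eq_Icc (by norm_num) (by norm_num)).symm
  have him : H '' Icc 0 1 = f '' Icc 0 (1 / 2) ∪ G '' Icc (1 / 2) 1 := by
    rw [hU, image_union, H1.image_eq, H2.image_eq]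
  rw [← him]
  have m0 : (0 : ℝ) ∈ Icc (0 : ℝ) (1 / 2) := by norm_num
  have m1 : (1 / 2 : ℝ) ∈ Icc (0 : ℝ) (1 / 2) := by norm_num
  have m2 : (1 / 2 : ℝ) ∈ Icc (1 / 2 : ℝ) 1 := by norm_num
  have m3 : (1 : ℝ) ∈ Icc (1 / 2 : ℝ) 1 := by norm_num
  refine IsJordanCurve.of_loop ?_ ?_ ?_
  · rw [hU]
    exact (hf.congr H1).union_of_isClosed (hG.congr H2) isClosed_Icc isClosed_Icc
  · have key : ∀ s ∈ Icc (0 : ℝ) (1 / 2), ∀ t ∈ Icc (1 / 2 : ℝ) 1, t < 1 → H s = H t → s = t := by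
      intro s hs t ht ht1 hst
      rw [H1 hs, H2 ht] at hst
      have : f s ∈ f '' Icc 0 (1 / 2) ∩ G '' Icc (1 / 2) 1 :=
        ⟨mem_image_of_mem _ hs, hst ▸ mem_image_of_mem _ ht⟩
      rw [hAB] at this
      rcases this with h | h
      · have := hGi ht m3 (by rw [← hst, h, hG1])
        linarith
      · have e1 := hfi hs m1 (by rw [h, hf1])
        have e2 := hGi ht m2 (by rw [← hst, h, hG0])
        rw [e1, e2]
    intro s hs t ht hst
    have hs' := Ico_subset_Icc_self hs
    have ht' := Ico_subset_Icc_self ht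
    rw [hU] at hs' ht'
    rcases hs' with hs' | hs' <;> rcases ht' with ht' | ht'
    · exact hfi hs' ht' (by rwa [H1 hs', H1 ht'] at hst)
    · exact key s hs' t ht' ht.2 hst
    · exact (key t ht' s hs' hs.2 hst.symm).symm
    · exact hGi hs' ht' (by rwa [H2 hs', H2 ht'] at hst)
  · rw [H1 m0, H2 m3, hf0, hG1]

namespace IsJordanCurve

variable {X : Type} [MetricSpace X] {J : Set X} {u v : X}

theorem exists_loop (h : IsJordanCurve J) (hu : u ∈ J) : ∃ f : ℝ → X, Continuous f ∧
    InjOn f (Ico 0 1) ∧ f 0 = u ∧ f 1 = u ∧ f '' Ico 0 1 = J := by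
  obtain ⟨e⟩ := h
  let τ := e.symm ⟨u, hu⟩
  have hper : ((1 : ℝ) : AddCircle (1 : ℝ)) = 0 := AddCircle.coe_period 1
  have hinj : ∀ s ∈ Ico (0 : ℝ) 1, ∀ t ∈ Ico (0 : ℝ) 1,
      (s : AddCircle (1 : ℝ)) = t → s = t := fun s hs t ht h =>
    (AddCircle.coe_eq_coe_iff_of_mem_Ico (p := (1 : ℝ)) (a := 0) (by simpa using hs)
      (by simpa using ht)).1 h
  refine ⟨fun t => e (τ + (t : AddCircle (1 : ℝ))), ?_, ?_, ?_, ?_, ?_⟩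
  · exact continuous_subtype_val.comp (e.continuous.comp
      (continuous_const.add (AddCircle.continuous_mk' 1)))
  · intro s hs t ht hst
    exact hinj s hs t ht (add_left_cancel (e.injective (Subtype.ext hst)))
  · simp [τ]
  · simp only [hper]; simp [τ]
  · ext z; constructor
    · rintro ⟨t, -, rfl⟩; exact (e _).2
    · intro hz
      have : e.symm ⟨z, hz⟩ - τ ∈ ((↑) : ℝ → AddCircle (1 : ℝ)) '' Ico 0 (0 + 1) := by
        rw [AddCircle.coe_image_Ico_eq]; trivial
      obtain ⟨t, ht, ht'⟩ := this
      exact ⟨t, by simpa using ht, by simp [ht']⟩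

/-- Two points of a Jordan curve cut it into two arcs. -/
theorem exists_arcs (h : IsJordanCurve J) (hu : u ∈ J) (hv : v ∈ J) (huv : u ≠ v) :
    ∃ A B, IsArc u v A ∧ IsArc u v B ∧ A ∪ B = J ∧ A ∩ B = {u, v} := by
  obtain ⟨f, hf, hi, h0, h1, rfl⟩ := h.exists_loop hu
  obtain ⟨c, hc, rfl⟩ := hv
  have hc0 : 0 < c := lt_of_le_of_ne hc.1 (by rintro rfl; exact huv h0.symm)
  have i1 : InjOn f (Icc 0 c) := hi.mono fun (t : ℝ) (ht : t ∈ Icc 0 c) => (⟨ht.1, ht.2.trans_lt hc.2⟩ : t ∈ Ico (0 : ℝ) 1)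
  have i2 : InjOn f (Icc c 1) := by
    have key : ∀ t ∈ Icc c 1, f t = f 1 → t = 1 := by
      intro t ht he
      by_contra hne
      have := hi (x₁ := t) (x₂ := 0) ⟨hc0.le.trans ht.1, lt_of_le_of_ne ht.2 hne⟩ ⟨le_rfl, zero_lt_one⟩
        (he.trans (h1.trans h0.symm))
      linarith [ht.1]
    intro s hs t ht hst
    rcases eq_or_lt_of_le hs.2 with rfl | hs1
    · exact (key t ht hst.symm).symm
    rcases eq_or_lt_of_le ht.2 with rfl | ht1
    · exact key s hs hst
    exact hi ⟨hc0.le.trans hs.1, hs1⟩ ⟨hc0.le.trans ht.1, ht1⟩ hst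
  refine ⟨f '' Icc 0 c, f '' Icc c 1, ⟨0, c, f, hc0, hf.continuousOn, i1, h0, rfl, rfl⟩,
    IsArc.symm ⟨c, 1, f, hc.2, hf.continuousOn, i2, rfl, h1, rfl⟩, ?_, ?_⟩
  · rw [← image_union, Icc_union_Icc_eq_Icc hc.1 hc.2.le]
    refine Subset.antisymm ?_ (image_mono Ico_subset_Icc_self)
    rintro _ ⟨t, ht, rfl⟩
    rcases eq_or_lt_of_le ht.2 with rfl | ht1
    · exact ⟨0, by simp, h0.trans h1.symm⟩
    · exact ⟨t, ⟨ht.1, ht1⟩, rfl⟩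
  · ext z; constructor
    · rintro ⟨⟨s, hs, rfl⟩, t, ht, hst⟩
      rcases eq_or_lt_of_le ht.2 with rfl | ht1
      · left; rw [← hst, h1]
      · have := hi ⟨hs.1, hs.2.trans_lt hc.2⟩ ⟨hc0.le.trans ht.1, ht1⟩ hst.symm
        right
        rw [show s = c from le_antisymm hs.2 (this ▸ ht.1)]; rfl
    · rintro (rfl | rfl)
      · exact ⟨⟨0, ⟨le_rfl, hc0.le⟩, h0⟩, 1, ⟨hc.2.le, le_rfl⟩, h1⟩
      · exact ⟨⟨c, ⟨hc0.le, le_rfl⟩, rfl⟩, c, ⟨le_rfl, hc.2.le⟩, rfl⟩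

theorem isCompact (h : IsJordanCurve J) : IsCompact J := by
  obtain ⟨e⟩ := h
  have := e.compactSpace
  exact isCompact_iff_compactSpace.2 this

theorem isClosed (h : IsJordanCurve J) : IsClosed J := h.isCompact.isClosed

theorem nonempty (h : IsJordanCurve J) : J.Nonempty := by
  obtain ⟨e⟩ := h
  exact ⟨_, (e 0).2⟩

theorem nontrivial (h : IsJordanCurve J) : J.Nontrivial := by
  obtain ⟨u, hu⟩ := h.nonempty
  obtain ⟨f, -, hi, -, -, rfl⟩ := h.exists_loop hu
  have m0 : (0 : ℝ) ∈ Ico (0 : ℝ) 1 := by norm_num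
  have m1 : (1 / 2 : ℝ) ∈ Ico (0 : ℝ) 1 := by norm_num
  refine ⟨f 0, mem_image_of_mem f m0, f (1 / 2), mem_image_of_mem f m1, fun he => ?_⟩
  have := hi m0 m1 he
  norm_num at this

theorem isPathConnected (h : IsJordanCurve J) : IsPathConnected J := by
  obtain ⟨u, hu, v, hv, huv⟩ := h.nontrivial
  obtain ⟨A, B, hA, hB, rfl, -⟩ := h.exists_arcs hu hv huv
  exact hA.isPathConnected.union hB.isPathConnected ⟨u, hA.left_mem, hB.left_mem⟩

theorem isPathConnected_diff (h : IsJordanCurve J) (hu : u ∈ J) : IsPathConnected (J \ {u}) := by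
  obtain ⟨v, hv, hvu⟩ := h.nontrivial.exists_ne u
  obtain ⟨A, B, hA, hB, rfl, -⟩ := h.exists_arcs hu hv hvu.symm
  rw [union_sdiff_distrib]
  exact hA.isPathConnected_diff_left.union hB.isPathConnected_diff_left
    ⟨v, ⟨hA.right_mem, hvu⟩, hB.right_mem, hvu⟩

end IsJordanCurve

section

variable {X : Type} [MetricSpace X] {J J' K K₁ K₂ K₃ W E C C₁ C₂ T : Set X} {u v u' v' w x y p : X}

theorem IsPathConnected.exists_arc_to_closed (hW : IsPathConnected W) (hK : IsClosed K)
    (hu : u ∈ W) (huK : u ∉ K) (hne : (W ∩ K).Nonempty) :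
    ∃ w A, IsArc u w A ∧ A ⊆ W ∧ A ∩ K = {w} := by
  obtain ⟨z, hzW, hzK⟩ := hne
  obtain ⟨S, hSW, hS⟩ := hW.exists_isArc hu hzW (by rintro rfl; exact huK hzK)
  obtain ⟨w, A, hA, hAS, hAK⟩ := hS.exists_first_hit hK huK ⟨z, hS.right_mem, hzK⟩
  exact ⟨w, A, hA, hAS.trans hSW, hAK⟩

theorem IsPathConnected.exists_arc_between (hW : IsPathConnected W) (h₁ : IsClosed K₁)
    (h₂ : IsClosed K₂) (hd : W ∩ K₁ ∩ K₂ = ∅) (hn₁ : (W ∩ K₁).Nonempty)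
    (hn₂ : (W ∩ K₂).Nonempty) :
    ∃ w₁ w₂ A, IsArc w₁ w₂ A ∧ A ⊆ W ∧ A ∩ K₁ = {w₁} ∧ A ∩ K₂ = {w₂} := by
  obtain ⟨u, huW, hu⟩ := hn₁
  have hd' : ∀ z ∈ W, z ∈ K₁ → z ∉ K₂ := fun z h1 h2 h3 =>
    (eq_empty_iff_forall_notMem.1 hd z) ⟨⟨h1, h2⟩, h3⟩
  obtain ⟨w₂, A, hA, hAW, hAK⟩ := hW.exists_arc_to_closed h₂ huW (hd' u huW hu) hn₂
  have hw₂ : w₂ ∈ A ∩ K₂ := hAK ▸ rfl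
  obtain ⟨w₁, B, hB, hBA, hBK⟩ := hA.symm.exists_first_hit h₁
    (fun h => hd' w₂ (hAW hw₂.1) h hw₂.2) ⟨u, hA.left_mem, hu⟩
  refine ⟨w₁, w₂, B, hB.symm, hBA.trans hAW, hBK, Subset.antisymm ?_ ?_⟩
  · rw [← hAK]; exact inter_subset_inter_left _ hBA
  · rintro _ rfl; exact ⟨hB.left_mem, hw₂.2⟩

/-- An arc with endpoints in a closed set contains an ear through each of its other points. -/
theorem IsArc.exists_ear (hE : IsArc u v E) (hK : IsClosed K) (hu : u ∈ K) (hv : v ∈ K)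
    (hy : y ∈ E) (hyK : y ∉ K) :
    ∃ w₁ w₂ A, IsArc w₁ w₂ A ∧ A ⊆ E ∧ y ∈ A ∧ A ∩ K = {w₁, w₂} := by
  obtain ⟨A, B, hA, hB, rfl, hAB⟩ := hE.exists_split hy (by rintro rfl; exact hyK hu)
    (by rintro rfl; exact hyK hv)
  obtain ⟨w₁, A', hA', hAA, hAK⟩ := hA.symm.exists_first_hit hK hyK ⟨u, hA.left_mem, hu⟩
  obtain ⟨w₂, B', hB', hBB, hBK⟩ := hB.exists_first_hit hK hyK ⟨v, hB.right_mem, hv⟩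
  refine ⟨w₁, w₂, A' ∪ B', hA'.symm.join hB' ?_, union_subset_union hAA hBB, Or.inl hA'.left_mem, ?_⟩
  · refine Subset.antisymm ?_ ?_
    · rw [← hAB]; exact inter_subset_inter hAA hBB
    · rintro _ rfl; exact ⟨hA'.left_mem, hB'.left_mem⟩
  · rw [union_inter_distrib_right, hAK, hBK]; rfl

theorem IsJordanCurve.exists_arc_through (h : IsJordanCurve J) (hu : u ∈ J) (hv : v ∈ J)
    (hx : x ∈ J) (huv : u ≠ v) : ∃ A ⊆ J, IsArc u v A ∧ x ∈ A := by
  obtain ⟨A, B, hA, hB, rfl, -⟩ := h.exists_arcs hu hv huv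
  rcases hx with hx | hx
  · exact ⟨A, subset_union_left, hA, hx⟩
  · exact ⟨B, subset_union_right, hB, hx⟩

/-- Adding an ear to a Jordan curve. -/
theorem IsJordanCurve.exists_of_ear (h : IsJordanCurve J) {A : Set X} (hA : IsArc u v A)
    (hAJ : A ∩ J = {u, v}) (hx : x ∈ J) :
    ∃ J', IsJordanCurve J' ∧ A ⊆ J' ∧ J' ⊆ J ∪ A ∧ x ∈ J' := by
  have hu : u ∈ A ∩ J := hAJ ▸ Or.inl rfl
  have hv : v ∈ A ∩ J := hAJ ▸ Or.inr rfl
  obtain ⟨B, hBJ, hB, hxB⟩ := h.exists_arc_through hu.2 hv.2 hx hA.ne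
  refine ⟨A ∪ B, hA.isJordanCurve_union hB (Subset.antisymm ?_ ?_), subset_union_left,
    union_subset subset_union_right (hBJ.trans subset_union_left), Or.inr hxB⟩
  · rw [← hAJ]; exact inter_subset_inter_right _ hBJ
  · rintro _ (rfl | rfl)
    · exact ⟨hA.left_mem, hB.left_mem⟩
    · exact ⟨hA.right_mem, hB.right_mem⟩

theorem IsJordanCurve.exists_of_theta (h : IsJordanCurve J) (h' : IsJordanCurve J')
    (huv : u ≠ v) (hu : u ∈ J ∩ J') (hv : v ∈ J ∩ J') (hx : x ∈ J) (hy : y ∈ J') :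
    ∃ J'', IsJordanCurve J'' ∧ J'' ⊆ J ∪ J' ∧ x ∈ J'' ∧ y ∈ J'' := by
  by_cases hyJ : y ∈ J
  · exact ⟨J, h, subset_union_left, hx, hyJ⟩
  obtain ⟨E, hEJ, hE, hyE⟩ := h'.exists_arc_through hu.2 hv.2 hy huv
  obtain ⟨w₁, w₂, A, hA, hAE, hyA, hAJ⟩ := hE.exists_ear h.isClosed hu.1 hv.1 hyE hyJ
  obtain ⟨J'', h1, h2, h3, h4⟩ := h.exists_of_ear hA hAJ hx
  exact ⟨J'', h1, h3.trans (union_subset_union_right _ (hAE.trans hEJ)), h4, h2 hyA⟩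

theorem IsJordanCurve.cyclicallyConnected (h : IsJordanCurve J) : CyclicallyConnected J :=
  fun _ hx _ hy => ⟨J, Subset.rfl, h, hx, hy⟩

namespace CyclicallyConnected

theorem isPathConnected_diff (hC : CyclicallyConnected C) (hne : (C \ {p}).Nonempty) :
    IsPathConnected (C \ {p}) := by
  obtain ⟨q, hq, hqp⟩ := hne
  refine ⟨q, ⟨hq, hqp⟩, fun {y} hy => ?_⟩
  obtain ⟨J, hJC, hJ, hqJ, hyJ⟩ := hC q hq y hy.1
  by_cases hp : p ∈ J
  · exact ((hJ.isPathConnected_diff hp).joinedIn q ⟨hqJ, hqp⟩ y ⟨hyJ, hy.2⟩).mono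
      (sdiff_subset_sdiff_left hJC)
  · exact (hJ.isPathConnected.joinedIn q hqJ y hyJ).mono (subset_sdiff_singleton hJC hp)

theorem isPathConnected (hC : CyclicallyConnected C) (hne : C.Nonempty) :
    IsPathConnected C := by
  obtain ⟨q, hq⟩ := hne
  refine ⟨q, hq, fun {y} hy => ?_⟩
  obtain ⟨J, hJC, hJ, hqJ, hyJ⟩ := hC q hq y hy
  exact (hJ.isPathConnected.joinedIn q hqJ y hyJ).mono hJC

theorem exists_jordan_union (h₁ : CyclicallyConnected C₁) (h₂ : CyclicallyConnected C₂)
    (huv : u ≠ v) (hu : u ∈ C₁ ∩ C₂) (hv : v ∈ C₁ ∩ C₂) (hx : x ∈ C₁) (hy : y ∈ C₂) :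
    ∃ J ⊆ C₁ ∪ C₂, IsJordanCurve J ∧ x ∈ J ∧ y ∈ J := by
  obtain ⟨Jx, hJx, hx1, hx2, hx3⟩ := h₁ x hx u hu.1
  obtain ⟨Jy, hJy, hy1, hy2, hy3⟩ := h₂ y hy u hu.2
  have hJJ : Jx ∪ Jy ⊆ C₁ ∪ C₂ := union_subset_union hJx hJy
  by_cases hz : ∃ z ∈ Jx ∩ Jy, z ≠ u
  · obtain ⟨z, hz, hzu⟩ := hz
    obtain ⟨J, a, b, c, d⟩ := hx1.exists_of_theta hy1 hzu hz ⟨hx3, hy3⟩ hx2 hy2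
    exact ⟨J, b.trans hJJ, a, c, d⟩
  push Not at hz
  have hW : IsPathConnected ((C₁ ∪ C₂) \ {u}) := by
    rw [union_sdiff_distrib]
    exact (h₁.isPathConnected_diff ⟨v, hv.1, huv.symm⟩).union
      (h₂.isPathConnected_diff ⟨v, hv.2, huv.symm⟩) ⟨v, ⟨hv.1, huv.symm⟩, hv.2, huv.symm⟩
  obtain ⟨a, ha, hau⟩ := hx1.nontrivial.exists_ne u
  obtain ⟨b, hb, hbu⟩ := hy1.nontrivial.exists_ne u
  obtain ⟨w₁, w₂, A, hA, hAW, hA1, hA2⟩ := hW.exists_arc_between hx1.isClosed hy1.isClosed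
    (by
      rw [eq_empty_iff_forall_notMem]
      rintro z ⟨⟨h1, h2⟩, h3⟩
      exact h1.2 (hz z ⟨h2, h3⟩))
    ⟨a, ⟨Or.inl (hJx ha), hau⟩, ha⟩ ⟨b, ⟨Or.inr (hJy hb), hbu⟩, hb⟩
  have hw₁ : w₁ ∈ A ∩ Jx := hA1 ▸ rfl
  have hw₂ : w₂ ∈ A ∩ Jy := hA2 ▸ rfl
  have hw₁u : w₁ ≠ u := (hAW hw₁.1).2
  have hw₂u : w₂ ≠ u := (hAW hw₂.1).2
  obtain ⟨P, hP, hPa, hxP⟩ := hx1.exists_arc_through hx3 hw₁.2 hx2 hw₁u.symm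
  obtain ⟨Q, hQ, hQa, hyQ⟩ := hy1.exists_arc_through hy3 hw₂.2 hy2 hw₂u.symm
  have hPA : P ∩ A = {w₁} := by
    refine Subset.antisymm ?_ (singleton_subset_iff.2 ⟨hPa.right_mem, hw₁.1⟩)
    rw [← hA1]; exact fun z hz => ⟨hz.2, hP hz.1⟩
  refine ⟨P ∪ A ∪ Q, ?_, (hPa.join hA hPA).isJordanCurve_union hQa ?_,
    Or.inl (Or.inl hxP), Or.inr hyQ⟩
  · exact union_subset (union_subset ((hP.trans hJx).trans subset_union_left)
      (hAW.trans sdiff_subset)) ((hQ.trans hJy).trans subset_union_right)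
  · refine Subset.antisymm ?_ ?_
    · rintro z ⟨h | h, h'⟩
      · exact Or.inl (hz z ⟨hP h, hQ h'⟩)
      · right; rw [← hA2]; exact ⟨h, hQ h'⟩
    · rintro _ (rfl | rfl)
      · exact ⟨Or.inl hPa.left_mem, hQa.left_mem⟩
      · exact ⟨Or.inr hA.right_mem, hQa.right_mem⟩

theorem union (h₁ : CyclicallyConnected C₁) (h₂ : CyclicallyConnected C₂)
    (hn : (C₁ ∩ C₂).Nontrivial) : CyclicallyConnected (C₁ ∪ C₂) := by
  obtain ⟨u, hu, v, hv, huv⟩ := hn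
  rintro x (hx | hx) y (hy | hy)
  · obtain ⟨J, h, h'⟩ := h₁ x hx y hy
    exact ⟨J, h.trans subset_union_left, h'⟩
  · exact exists_jordan_union h₁ h₂ huv hu hv hx hy
  · obtain ⟨J, h, h', a, b⟩ := exists_jordan_union h₁ h₂ huv hu hv hy hx
    exact ⟨J, h, h', b, a⟩
  · obtain ⟨J, h, h'⟩ := h₂ x hx y hy
    exact ⟨J, h.trans subset_union_right, h'⟩

theorem exists_fan (hC : CyclicallyConnected C) (hu : u ∈ C) (hx : x ∈ C) (hv : v ∈ C)
    (hux : u ≠ x) (huv : u ≠ v) (hxv : x ≠ v) :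
    ∃ A B, IsArc u x A ∧ IsArc x v B ∧ A ⊆ C ∧ B ⊆ C ∧ A ∩ B = {x} := by
  obtain ⟨J, hJC, hJ, huJ, hxJ⟩ := hC u hu x hx
  by_cases hvJ : v ∈ J
  · obtain ⟨P, hP, hPa, hxP⟩ := hJ.exists_arc_through huJ hvJ hxJ huv
    obtain ⟨A, B, hA, hB, rfl, hAB⟩ := hPa.exists_split hxP hux.symm hxv
    exact ⟨A, B, hA, hB, (subset_union_left.trans hP).trans hJC,
      (subset_union_right.trans hP).trans hJC, hAB⟩
  obtain ⟨w, D, hD, hDW, hDJ⟩ := (hC.isPathConnected_diff (p := u) ⟨v, hv, huv.symm⟩).exists_arc_to_closed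
    hJ.isClosed ⟨hv, huv.symm⟩ hvJ ⟨x, ⟨hx, hux.symm⟩, hxJ⟩
  have hw : w ∈ D ∩ J := hDJ ▸ rfl
  have hwu : w ≠ u := (hDW hw.1).2
  by_cases hwx : w = x
  · subst hwx
    obtain ⟨P, hP, hPa, -⟩ := hJ.exists_arc_through huJ hxJ huJ hux
    refine ⟨P, D, hPa, hD.symm, hP.trans hJC, hDW.trans sdiff_subset, Subset.antisymm ?_ ?_⟩
    · rw [← hDJ]; exact fun z hz => ⟨hz.2, hP hz.1⟩
    · rintro _ rfl; exact ⟨hPa.right_mem, hD.right_mem⟩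
  obtain ⟨P, hP, hPa, hxP⟩ := hJ.exists_arc_through huJ hw.2 hxJ hwu.symm
  obtain ⟨A, B, hA, hB, rfl, hAB⟩ := hPa.exists_split hxP hux.symm (Ne.symm hwx)
  refine ⟨A, B ∪ D, hA, hB.join hD.symm ?_, (subset_union_left.trans hP).trans hJC,
    union_subset ((subset_union_right.trans hP).trans hJC) (hDW.trans sdiff_subset), ?_⟩
  · refine Subset.antisymm ?_ ?_
    · rw [← hDJ]; exact fun z hz => ⟨hz.2, hP (Or.inr hz.1)⟩
    · rintro _ rfl; exact ⟨hB.right_mem, hD.right_mem⟩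
  · refine Subset.antisymm ?_ ?_
    · rintro z ⟨h1, h2 | h2⟩
      · rw [← hAB]; exact ⟨h1, h2⟩
      · have : z ∈ D ∩ J := ⟨h2, hP (Or.inl h1)⟩
        rw [hDJ, mem_singleton_iff] at this
        subst this
        have : z ∈ A ∩ B := ⟨h1, hB.right_mem⟩
        rw [hAB] at this; exact this
    · rintro _ rfl; exact ⟨hA.right_mem, Or.inl hB.left_mem⟩

/-- Two disjoint connections between two pairs of points. -/
theorem exists_linking (hK : CyclicallyConnected K) (hu : u ∈ K) (hv : v ∈ K) (hu' : u' ∈ K)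
    (hv' : v' ∈ K) (huv : u ≠ v) (huv' : u' ≠ v') :
    ∃ P Q, IsPathConnected P ∧ IsPathConnected Q ∧ P ⊆ K ∧ Q ⊆ K ∧ Disjoint P Q ∧ u ∈ P ∧ v ∈ Q ∧
      (u' ∈ P ∧ v' ∈ Q ∨ v' ∈ P ∧ u' ∈ Q) := by
  have hsing : ∀ z ∈ K, ∀ y ∈ K, y ≠ z → IsPathConnected ({z} : Set X) ∧
      IsPathConnected (K \ {z}) ∧ {z} ⊆ K ∧ K \ {z} ⊆ K ∧ Disjoint {z} (K \ {z}) :=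
    fun z hz y hy hyz => ⟨isPathConnected_singleton z, hK.isPathConnected_diff ⟨y, hy, hyz⟩,
      singleton_subset_iff.2 hz, sdiff_subset, disjoint_sdiff_right⟩
  by_cases h1 : u = u'
  · subst h1
    obtain ⟨a, b, c, d, e⟩ := hsing u hu v hv huv.symm
    exact ⟨_, _, a, b, c, d, e, rfl, ⟨hv, huv.symm⟩, Or.inl ⟨rfl, hv', huv'.symm⟩⟩
  by_cases h2 : u = v'
  · subst h2
    obtain ⟨a, b, c, d, e⟩ := hsing u hu v hv huv.symm
    exact ⟨_, _, a, b, c, d, e, rfl, ⟨hv, huv.symm⟩, Or.inr ⟨rfl, hu', huv'⟩⟩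
  by_cases h3 : v = u'
  · subst h3
    obtain ⟨a, b, c, d, e⟩ := hsing v hv u hu huv
    exact ⟨_, _, b, a, d, c, e.symm, ⟨hu, huv⟩, rfl, Or.inr ⟨⟨hv', huv'.symm⟩, rfl⟩⟩
  by_cases h4 : v = v'
  · subst h4
    obtain ⟨a, b, c, d, e⟩ := hsing v hv u hu huv
    exact ⟨_, _, b, a, d, c, e.symm, ⟨hu, huv⟩, rfl, Or.inl ⟨⟨hu', huv'⟩, rfl⟩⟩
  obtain ⟨A, B, hA, hB, hAK, hBK, hAB⟩ := hK.exists_fan hu hu' hv h1 huv (Ne.symm h3)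
  have hAB' : ∀ z ∈ A, z ∈ B → z = u' := fun z ha hb => by
    have : z ∈ A ∩ B := ⟨ha, hb⟩
    rwa [hAB] at this
  obtain ⟨D, hD, hDK, hvD, w, hwD, hDE, hwu⟩ : ∃ D, IsPathConnected D ∧ D ⊆ K ∧ v' ∈ D ∧ ∃ w ∈ D,
      D ∩ (A ∪ B) = {w} ∧ w ≠ u' := by
    by_cases hvE : v' ∈ A ∪ B
    · exact ⟨{v'}, isPathConnected_singleton _, singleton_subset_iff.2 hv', rfl, v', rfl,
        inter_eq_left.2 (singleton_subset_iff.2 hvE), huv'.symm⟩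
    · obtain ⟨w, D, hD, hDW, hDJ⟩ := (hK.isPathConnected_diff (p := u') ⟨v', hv', huv'.symm⟩).exists_arc_to_closed
        (hA.isClosed.union hB.isClosed) ⟨hv', huv'.symm⟩ hvE ⟨u, ⟨hu, h1⟩, Or.inl hA.left_mem⟩
      exact ⟨D, hD.isPathConnected, hDW.trans sdiff_subset, hD.left_mem, w, hD.right_mem, hDJ,
        (hDW hD.right_mem).2⟩
  have hw : w ∈ D ∩ (A ∪ B) := hDE ▸ rfl
  have hDE' : ∀ z ∈ D, z ∈ A ∪ B → z = w := fun z h1 h2 => by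
    have : z ∈ D ∩ (A ∪ B) := ⟨h1, h2⟩
    rwa [hDE] at this
  rcases hw.2 with hwA | hwB
  · refine ⟨A \ {u'} ∪ D, B, hA.isPathConnected_diff_right.union hD ⟨w, ⟨hwA, hwu⟩, hwD⟩,
      hB.isPathConnected, union_subset (sdiff_subset.trans hAK) hDK, hBK, ?_,
      Or.inl ⟨hA.left_mem, h1⟩, hB.right_mem, Or.inr ⟨Or.inr hvD, hB.left_mem⟩⟩
    rw [Set.disjoint_left]
    rintro z (hz | hz) hzB
    · exact hz.2 (hAB' z hz.1 hzB)
    · have := hDE' z hz (Or.inr hzB)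
      subst this
      exact hwu (hAB' z hwA hzB)
  · refine ⟨A, B \ {u'} ∪ D, hA.isPathConnected,
      hB.isPathConnected_diff_left.union hD ⟨w, ⟨hwB, hwu⟩, hwD⟩, hAK,
      union_subset (sdiff_subset.trans hBK) hDK, ?_,
      hA.left_mem, Or.inl ⟨hB.right_mem, h3⟩, Or.inl ⟨hA.right_mem, Or.inr hvD⟩⟩
    rw [Set.disjoint_left]
    rintro z hzA (hz | hz)
    · exact hz.2 (hAB' z hzA hz.1)
    · have := hDE' z hz (Or.inl hzA)
      subst this
      exact hwu (hAB' z hzA hwB)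

theorem exists_arm_step (h₁ : CyclicallyConnected K₁) (hc₁ : IsClosed K₁)
    (h₂ : CyclicallyConnected K₂) (hc₃ : IsClosed K₃) (hd : Disjoint K₁ K₃)
    (h12 : (K₂ ∩ K₁).Nontrivial) (h23 : (K₂ ∩ K₃).Nontrivial) (hu : u ∈ K₁) (hv : v ∈ K₁)
    (huv : u ≠ v) :
    ∃ u' ∈ K₃, ∃ v' ∈ K₃, ∃ P Q, IsPathConnected P ∧ IsPathConnected Q ∧ P ⊆ K₁ ∪ K₂ ∧
      Q ⊆ K₁ ∪ K₂ ∧ Disjoint P Q ∧ u ∈ P ∧ u' ∈ P ∧ v ∈ Q ∧ v' ∈ Q ∧ P ∩ K₃ = {u'} ∧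
      Q ∩ K₃ = {v'} := by
  obtain ⟨a, ha, b, hb, hab⟩ := h12
  obtain ⟨a', ha', b', hb', hab'⟩ := h23
  have hempty : ∀ W : Set X, W ∩ K₁ ∩ K₃ = ∅ := fun W => by
    rw [inter_assoc, hd.inter_eq, inter_empty]
  obtain ⟨P, Q, hP, hQ, hPK, hQK, hPQ, haP, hbQ, hor⟩ :=
    h₂.exists_linking ha.1 hb.1 ha'.1 hb'.1 hab hab'
  obtain ⟨p₁, p₃, P', hP', hPP, hp₁, hp₃⟩ := hP.exists_arc_between hc₁ hc₃ (hempty P)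
    ⟨a, haP, ha.2⟩ (hor.elim (fun h => ⟨a', h.1, ha'.2⟩) fun h => ⟨b', h.1, hb'.2⟩)
  obtain ⟨q₁, q₃, Q', hQ', hQQ, hq₁, hq₃⟩ := hQ.exists_arc_between hc₁ hc₃ (hempty Q)
    ⟨b, hbQ, hb.2⟩ (hor.elim (fun h => ⟨b', h.2, hb'.2⟩) fun h => ⟨a', h.2, ha'.2⟩)
  have hdis : Disjoint P' Q' := hPQ.mono hPP hQQ
  have hp₁' : p₁ ∈ P' ∩ K₁ := hp₁ ▸ rfl
  have hp₃' : p₃ ∈ P' ∩ K₃ := hp₃ ▸ rfl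
  have hq₁' : q₁ ∈ Q' ∩ K₁ := hq₁ ▸ rfl
  have hq₃' : q₃ ∈ Q' ∩ K₃ := hq₃ ▸ rfl
  -- gluing a connection inside `K₁` to one of the two arcs
  have glue : ∀ {M N S R : Set X} {s r : X}, M ⊆ K₁ → N ⊆ K₁ → Disjoint M N → Disjoint S R →
      S ∩ K₁ = {s} → R ∩ K₁ = {r} → s ∈ M → r ∈ N → Disjoint (M ∪ S) (N ∪ R) := by
    intro M N S R s r hM hN hMN hSR hS hR hs hr
    rw [Set.disjoint_left]
    rintro z (hz | hz) (hz' | hz')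
    · exact Set.disjoint_left.1 hMN hz hz'
    · have : z ∈ R ∩ K₁ := ⟨hz', hM hz⟩
      rw [hR, mem_singleton_iff] at this
      exact Set.disjoint_left.1 hMN hz (this ▸ hr)
    · have : z ∈ S ∩ K₁ := ⟨hz, hN hz'⟩
      rw [hS, mem_singleton_iff] at this
      exact Set.disjoint_left.1 hMN (this ▸ hs) hz'
    · exact Set.disjoint_left.1 hSR hz hz'
  have land : ∀ {M S : Set X} {s : X}, M ⊆ K₁ → S ∩ K₃ = {s} → (M ∪ S) ∩ K₃ = {s} := by
    intro M S s hM hS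
    rw [union_inter_distrib_right, hS, (hd.mono_left hM).inter_eq, empty_union]
  obtain ⟨M, N, hM, hN, hMK, hNK, hMN, huM, hvN, hor'⟩ :=
    h₁.exists_linking hu hv hp₁'.2 hq₁'.2 huv
      (fun h => Set.disjoint_left.1 hdis hp₁'.1 (h ▸ hq₁'.1))
  rcases hor' with ⟨h, h'⟩ | ⟨h, h'⟩
  · refine ⟨p₃, hp₃'.2, q₃, hq₃'.2, M ∪ P', N ∪ Q', hM.union hP'.isPathConnected ⟨p₁, h, hp₁'.1⟩,
      hN.union hQ'.isPathConnected ⟨q₁, h', hq₁'.1⟩,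
      union_subset_union hMK (hPP.trans hPK), union_subset_union hNK (hQQ.trans hQK),
      glue hMK hNK hMN hdis hp₁ hq₁ h h', Or.inl huM, Or.inr hp₃'.1, Or.inl hvN, Or.inr hq₃'.1,
      land hMK hp₃, land hNK hq₃⟩
  · refine ⟨q₃, hq₃'.2, p₃, hp₃'.2, M ∪ Q', N ∪ P', hM.union hQ'.isPathConnected ⟨q₁, h, hq₁'.1⟩,
      hN.union hP'.isPathConnected ⟨p₁, h', hp₁'.1⟩,
      union_subset_union hMK (hQQ.trans hQK), union_subset_union hNK (hPP.trans hPK),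
      glue hMK hNK hMN hdis.symm hq₁ hp₁ h h', Or.inl huM, Or.inr hq₃'.1, Or.inl hvN,
      Or.inr hp₃'.1, land hMK hq₃, land hNK hp₃⟩

end CyclicallyConnected

namespace MaximalCyclic

theorem subset_of_inter_nontrivial (hT : MaximalCyclic T) (hC : CyclicallyConnected C)
    (h : (T ∩ C).Nontrivial) : C ⊆ T := by
  have := hT.2.2 (T ∪ C) (hT.2.1.union hC h) subset_union_left
  rw [← this]; exact subset_union_right

theorem nontrivial (hT : MaximalCyclic T) : T.Nontrivial := not_subsingleton_iff.1 hT.1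

theorem isPathConnected (hT : MaximalCyclic T) : IsPathConnected T :=
  hT.2.1.isPathConnected hT.nontrivial.nonempty

theorem inter_subsingleton {T' : Set X} (hT : MaximalCyclic T) (hT' : MaximalCyclic T') (hne : T ≠ T') :
    (T ∩ T').Subsingleton := by
  by_contra h
  rw [not_subsingleton_iff] at h
  exact hne (Subset.antisymm (hT'.subset_of_inter_nontrivial hT.2.1 (by rwa [inter_comm]))
    (hT.subset_of_inter_nontrivial hT'.2.1 h))

theorem arc_subset (hT : MaximalCyclic T) (hE : IsArc u v E) (hu : u ∈ T) (hv : v ∈ T) : E ⊆ T := by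
  intro y hy
  by_contra hyT
  obtain ⟨J, hJT, hJ, huJ, hvJ⟩ := hT.2.1 u hu v hv
  obtain ⟨w₁, w₂, A, hA, hAE, hyA, hAJ⟩ := hE.exists_ear hJ.isClosed huJ hvJ hy (fun h => hyT (hJT h))
  obtain ⟨J', h1, h2, h3, -⟩ := hJ.exists_of_ear hA hAJ huJ
  have hw₁ : w₁ ∈ A ∩ J := hAJ ▸ Or.inl rfl
  have hw₂ : w₂ ∈ A ∩ J := hAJ ▸ Or.inr rfl
  exact hyT (hT.subset_of_inter_nontrivial h1.cyclicallyConnected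
    ⟨w₁, ⟨hJT hw₁.2, h2 hw₁.1⟩, w₂, ⟨hJT hw₂.2, h2 hw₂.1⟩, hA.ne⟩ (h2 hyA))

end MaximalCyclic

theorem CyclicallyConnected.exists_maximalCyclic (hC : CyclicallyConnected C) (hn : C.Nontrivial) :
    ∃ T, MaximalCyclic T ∧ C ⊆ T := by
  have H : ∀ c ⊆ {D : Set X | CyclicallyConnected D}, IsChain (· ⊆ ·) c → c.Nonempty →
      ∃ ub ∈ {D : Set X | CyclicallyConnected D}, ∀ s ∈ c, s ⊆ ub := by
    intro c hc hchain _
    refine ⟨⋃₀ c, ?_, fun s hs => subset_sUnion_of_mem hs⟩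
    rintro x ⟨A, hA, hx⟩ y ⟨B, hB, hy⟩
    rcases hchain.total hA hB with h | h
    · obtain ⟨J, hJ, h'⟩ := hc hB x (h hx) y hy
      exact ⟨J, hJ.trans (subset_sUnion_of_mem hB), h'⟩
    · obtain ⟨J, hJ, h'⟩ := hc hA x hx y (h hy)
      exact ⟨J, hJ.trans (subset_sUnion_of_mem hA), h'⟩
  obtain ⟨T, hCT, hT⟩ := zorn_subset_nonempty _ H C hC
  refine ⟨T, ⟨not_subsingleton_iff.2 (hn.mono hCT), hT.1, fun D hD hTD => ?_⟩, hCT⟩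
  exact Subset.antisymm (hT.2 hD hTD) hTD

end

section

variable {X : Type} [MetricSpace X]

theorem IsArc.exists_continuous_param {u v : X} {S : Set X} (h : IsArc u v S) :
    ∃ f : ℝ → X, Continuous f ∧ InjOn f (Icc 0 1) ∧ f 0 = u ∧ f 1 = v ∧ f '' Icc 0 1 = S := by
  obtain ⟨f, hf, hi, h0, h1, him⟩ := h.exists_param (zero_lt_one (α := ℝ))
  have hpr : ∀ t ∈ Icc (0 : ℝ) 1, max 0 (min t 1) = t := fun t ht => by simp [ht.1, ht.2]
  have heq : EqOn (fun t => f (max 0 (min t 1))) f (Icc 0 1) := fun t ht => by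
    simp only [hpr t ht]
  refine ⟨fun t => f (max 0 (min t 1)), hf.comp_continuous (by fun_prop) fun t =>
    ⟨le_max_left _ _, max_le zero_le_one (min_le_right _ _)⟩, hi.congr heq.symm, ?_, ?_, ?_⟩
  · simp [h0]
  · simp [h1]
  · rw [heq.image_eq, him]

/-- A path connected set avoiding `f s` and meeting both sides of it contains a bridge over `s`. -/
theorem exists_bridge {f : ℝ → X} (hf : Continuous f) (hi : InjOn f (Icc 0 1)) {W : Set X}
    (hW : IsPathConnected W) {s : ℝ} (hs : s ∈ Ioo (0 : ℝ) 1) (hsW : f s ∉ W)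
    (h1 : (W ∩ f '' Ico 0 s).Nonempty) (h2 : (W ∩ f '' Ioc s 1).Nonempty) :
    ∃ a ∈ Ico 0 s, ∃ b ∈ Ioc s 1, ∃ β, IsArc (f a) (f b) β ∧ β ⊆ W ∧
      β ∩ f '' Icc 0 1 = {f a, f b} := by
  have i1 : Icc 0 s ⊆ Icc (0 : ℝ) 1 := Icc_subset_Icc_right hs.2.le
  have i2 : Icc s 1 ⊆ Icc (0 : ℝ) 1 := Icc_subset_Icc_left hs.1.le
  obtain ⟨w₁, w₂, A, hA, hAW, hA1, hA2⟩ := hW.exists_arc_between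
    (isCompact_Icc.image hf : IsCompact (f '' Icc 0 s)).isClosed
    (isCompact_Icc.image hf : IsCompact (f '' Icc s 1)).isClosed (by
      rw [inter_assoc, ← hi.image_inter i1 i2, Icc_inter_Icc_eq_singleton hs.1.le hs.2.le,
        image_singleton]
      exact disjoint_iff_inter_eq_empty.1 (disjoint_singleton_right.2 hsW))
    (h1.mono (inter_subset_inter_right _ (image_mono Ico_subset_Icc_self)))
    (h2.mono (inter_subset_inter_right _ (image_mono Ioc_subset_Icc_self)))
  have hw₁ : w₁ ∈ A ∩ f '' Icc 0 s := hA1 ▸ rfl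
  have hw₂ : w₂ ∈ A ∩ f '' Icc s 1 := hA2 ▸ rfl
  obtain ⟨hw₁A, a, ha, rfl⟩ := hw₁
  obtain ⟨hw₂A, b, hb, rfl⟩ := hw₂
  have has : a < s := lt_of_le_of_ne ha.2 (by rintro rfl; exact hsW (hAW hw₁A))
  have hsb : s < b := lt_of_le_of_ne hb.1 (by rintro rfl; exact hsW (hAW hw₂A))
  refine ⟨a, ⟨ha.1, has⟩, b, ⟨hsb, hb.2⟩, A, hA, hAW, ?_⟩
  rw [← Icc_union_Icc_eq_Icc hs.1.le hs.2.le, image_union, inter_union_distrib_left, hA1, hA2]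
  rfl

theorem isJordanCurve_bridge {f : ℝ → X} (hf : Continuous f) (hi : InjOn f (Icc 0 1)) {a b : ℝ}
    (ha : 0 ≤ a) (hab : a < b) (hb : b ≤ 1) {β : Set X} (hβ : IsArc (f a) (f b) β)
    (hβf : β ∩ f '' Icc 0 1 = {f a, f b}) : IsJordanCurve (β ∪ f '' Icc a b) := by
  have hsub : Icc a b ⊆ Icc (0 : ℝ) 1 := Icc_subset_Icc ha hb
  refine hβ.isJordanCurve_union (IsArc.of_image hab hf.continuousOn (hi.mono hsub))
    (Subset.antisymm ?_ ?_)
  · rw [← hβf]; exact inter_subset_inter_right _ (image_mono hsub)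
  · rintro _ (rfl | rfl)
    · exact ⟨hβ.left_mem, mem_image_of_mem f (left_mem_Icc.2 hab.le)⟩
    · exact ⟨hβ.right_mem, mem_image_of_mem f (right_mem_Icc.2 hab.le)⟩

theorem Path.isPathConnected_range {u v : X} (γ : Path u v) : IsPathConnected (range γ) := by
  rw [← γ.image_extend_of_subset (Subset.rfl : Icc (0 : ℝ) 1 ⊆ _)] 
  exact ((convex_Icc 0 1).isPathConnected (nonempty_Icc.2 zero_le_one)).image γ.continuous_extend

/-- A connected piece of an arc reaching a prescribed distance. -/
theorem JoinedIn.exists_piece {W : Set X} {u z p : X} (h : JoinedIn W u z) {r : ℝ}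
    (hu : dist u p ≤ r) (hz : r ≤ dist z p) :
    ∃ Q ⊆ W, IsPathConnected Q ∧ u ∈ Q ∧ Q ⊆ closedBall p r ∧ ∃ y ∈ Q, dist y p = r := by
  obtain ⟨γ, hγ⟩ := h
  let g : ℝ → X := γ.extend
  have hg : Continuous g := γ.continuous_extend
  have hgW : ∀ t ∈ Icc (0 : ℝ) 1, g t ∈ W := fun t ht => by
    simp only [g, γ.extend_apply ht]; exact hγ _
  have hd : Continuous fun t => dist (g t) p := hg.dist continuous_const
  have hF : IsClosed {t | r ≤ dist (g t) p} := isClosed_le continuous_const hd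
  obtain ⟨c, hcF, hc, hmin⟩ := exists_first_mem hF (b := 1) (t := 0) (by simpa [g] using hz) zero_le_one
  have hcr : dist (g c) p = r := by
    obtain ⟨d, hd1, hd2⟩ := intermediate_value_Icc hc.1 hd.continuousOn
      (show r ∈ Icc _ _ from ⟨by simpa [g] using hu, hcF⟩)
    have := hmin d hd2.ge hd1.1
    rw [← le_antisymm hd1.2 this]; exact hd2
  refine ⟨g '' Icc 0 c, ?_, ((convex_Icc 0 c).isPathConnected (nonempty_Icc.2 hc.1)).image hg,
    ⟨0, ⟨le_rfl, hc.1⟩, by simp [g]⟩, ?_, g c, ⟨c, ⟨hc.1, le_rfl⟩, rfl⟩, hcr⟩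
  · rintro _ ⟨t, ht, rfl⟩; exact hgW t ⟨ht.1, ht.2.trans hc.2⟩
  · rintro _ ⟨t, ht, rfl⟩
    rw [mem_closedBall]
    rcases eq_or_lt_of_le ht.2 with rfl | hlt
    · exact hcr.le
    · by_contra! hcon
      exact (hmin t hcon.le ht.1).not_gt hlt

theorem exists_pathConnected_nhds_subset_ball [LocallyPathConnectedSpace X] (z : X) {r : ℝ} (hr : 0 < r) :
    ∃ W ∈ 𝓝 z, IsPathConnected W ∧ W ⊆ ball z r := by
  obtain ⟨W, ⟨h1, h2⟩, h3⟩ := (path_connected_basis z).mem_iff.1 (ball_mem_nhds z hr)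
  exact ⟨W, h1, h2, h3⟩

theorem exists_small_bridging [CompactSpace X] [LocallyPathConnectedSpace X] {f : ℝ → X}
    (hf : Continuous f) (hi : InjOn f (Icc 0 1)) {δ₀ : ℝ} (hδ₀ : 0 < δ₀)
    (hns : ∀ s ∈ Ioo 0 δ₀, JoinedIn {f s}ᶜ (f 0) (f 1))
    (hno : ∀ C, CyclicallyConnected C → f 0 ∈ C → ¬ (C ∩ f '' Ioc 0 1).Nontrivial)
    {ε : ℝ} (hε : 0 < ε) :
    ∃ δ > 0, ∀ s ∈ Ioo 0 δ, ∃ W, IsPathConnected W ∧ W ⊆ ball (f 0) ε ∧ f s ∉ W ∧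
      (W ∩ f '' Ico 0 s).Nonempty ∧ (W ∩ f '' Ioc s 1).Nonempty := by
  by_contra! hcon
  set p := f 0 with hp
  set r := ε / 2 with hr
  have hr0 : 0 < r := half_pos hε
  -- near `0` the arc stays close to `p`
  obtain ⟨δ₁, hδ₁, hnear⟩ := Metric.continuous_iff.1 hf 0 (r / 2) (half_pos hr0)
  have hnear' : ∀ s, 0 ≤ s → s < δ₁ → dist (f s) p < r / 2 := fun s h1 h2 =>
    hnear s (by rw [Real.dist_eq, sub_zero, abs_of_nonneg h1]; exact h2)
  let d := min (min δ₀ δ₁) 1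
  have hd : 0 < d := lt_min (lt_min hδ₀ hδ₁) one_pos
  have hbad : ∀ δ > 0, ∃ s, 0 < s ∧ s < δ ∧ ∃ a z Q, 0 < a ∧ a < s ∧ IsPathConnected Q ∧
      f a ∈ Q ∧ z ∈ Q ∧ dist z p = r ∧ Q ⊆ closedBall p r ∧ f s ∉ Q ∧
      (∀ t ∈ Ico 0 a, f t ∉ Q) ∧ s < d ∧ ∀ W, IsPathConnected W → W ⊆ ball p ε → f s ∉ W →
        (W ∩ f '' Ico 0 s).Nonempty → W ∩ f '' Ioc s 1 = ∅ := by
    intro δ hδ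
    obtain ⟨s, hs, hsb⟩ := hcon (min δ d) (lt_min hδ hd)
    have hsδ : s < δ := hs.2.trans_le (min_le_left _ _)
    have hsd : s < d := hs.2.trans_le (min_le_right _ _)
    have hs0 : s < δ₀ := hsd.trans_le ((min_le_left _ _).trans (min_le_left _ _))
    have hs1 : s < δ₁ := hsd.trans_le ((min_le_left _ _).trans (min_le_right _ _))
    have hs2 : s < 1 := hsd.trans_le (min_le_right _ _)
    obtain ⟨γ, hγ⟩ := hns s ⟨hs.1, hs0⟩
    obtain ⟨a, ha, b, hb, β, hβ, hβW, hβf⟩ := exists_bridge hf hi (W := range γ)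
      γ.isPathConnected_range ⟨hs.1, hs2⟩ (by
        rintro ⟨t, ht⟩
        exact hγ t ht)
      ⟨f 0, ⟨0, by simp [hp]⟩, 0, ⟨le_rfl, hs.1⟩, rfl⟩
      ⟨f 1, ⟨1, by simp⟩, 1, ⟨hs2, le_rfl⟩, rfl⟩
    have hab : a < b := ha.2.trans hb.1
    have hsβ : f s ∉ β := fun h => by
      obtain ⟨t, ht⟩ := hβW h
      exact hγ t ht
    have ha0 : 0 < a := by
      refine lt_of_le_of_ne ha.1 (Ne.symm ?_)
      rintro rfl
      refine hno _ (isJordanCurve_bridge hf hi le_rfl hab hb.2 hβ hβf).cyclicallyConnected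
        (Or.inl hβ.left_mem) ?_
      have hbI : b ∈ Icc (0 : ℝ) 1 := ⟨hab.le, hb.2⟩
      have hsI : s ∈ Icc (0 : ℝ) 1 := ⟨hs.1.le, hs2.le⟩
      exact ⟨f b, ⟨Or.inl hβ.right_mem, b, ⟨hab, hb.2⟩, rfl⟩, f s,
        ⟨Or.inr ⟨s, ⟨hs.1.le, hb.1.le⟩, rfl⟩, s, ⟨hs.1, hs2.le⟩, rfl⟩,
        fun h => hb.1.ne' (hi hbI hsI h)⟩
    have hnot : ¬ β ⊆ ball p r := fun h => by
      have := hsb β hβ.isPathConnected (h.trans (ball_subset_ball (by linarith))) hsβ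
        ⟨f a, hβ.left_mem, a, ha, rfl⟩
      exact (this ▸ (⟨hβ.right_mem, b, hb, rfl⟩ : f b ∈ β ∩ f '' Ioc s 1) : f b ∈ (∅ : Set X))
    obtain ⟨z, hzβ, hz⟩ := not_subset.1 hnot
    obtain ⟨Q, hQβ, hQ, haQ, hQr, y, hyQ, hy⟩ :=
      (hβ.isPathConnected.joinedIn _ hβ.left_mem z hzβ).exists_piece (p := p) (r := r)
        ((hnear' a ha.1 (ha.2.trans hs1)).le.trans (by linarith)) (by simpa using hz)
    refine ⟨s, hs.1, hsδ, a, y, Q, ha0, ha.2, hQ, haQ, hyQ, hy, hQr, fun h => hsβ (hQβ h), ?_, hsd, hsb⟩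
    intro t ht htQ
    have htI : t ∈ Icc (0 : ℝ) 1 := ⟨ht.1, ht.2.le.trans (ha.2.le.trans hs2.le)⟩
    have haI : a ∈ Icc (0 : ℝ) 1 := ⟨ha.1, ha.2.le.trans hs2.le⟩
    have hbI : b ∈ Icc (0 : ℝ) 1 := ⟨ha.1.trans hab.le, hb.2⟩
    have : f t ∈ β ∩ f '' Icc 0 1 := ⟨hQβ htQ, t, htI, rfl⟩
    rw [hβf] at this
    rcases this with h | h
    · exact ht.2.ne (hi htI haI h)
    · exact (ht.2.trans hab).ne (hi htI hbI h)
  have hseq : ∀ n : ℕ, (0 : ℝ) < 1 / (n + 1) := fun n => by positivity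
  choose s hs0 hsn a z Q ha0 has hQ haQ hzQ hz hQr hsQ hQa hsd hsb using fun n : ℕ => hbad _ (hseq n)
  obtain ⟨z₀, -, φ, hφ, hlim⟩ := (isCompact_univ (X := X)).tendsto_subseq (x := z) fun n => mem_univ _
  have hz₀ : dist z₀ p = r :=
    tendsto_nhds_unique (hlim.dist tendsto_const_nhds) (by simp [hz])
  obtain ⟨W, hWn, hW, hWb⟩ := exists_pathConnected_nhds_subset_ball z₀ (half_pos hr0)
  have hev := hlim.eventually hWn
  obtain ⟨k, hk⟩ := hev.exists
  have hs_lim : Tendsto (fun n => s (φ n)) atTop (𝓝 0) :=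
    squeeze_zero (fun n => (hs0 _).le) (fun n => (hsn _).le)
      (tendsto_one_div_add_atTop_nhds_zero_nat.comp hφ.tendsto_atTop)
  obtain ⟨l, hl, hla⟩ := (hev.and (hs_lim.eventually (gt_mem_nhds (ha0 (φ k))))).exists
  have hmem : s (φ l) ∈ Ioo 0 d := ⟨hs0 _, hsd _⟩
  have hsl1 : s (φ l) < 1 := hmem.2.trans_le (min_le_right _ _)
  have hball : closedBall p r ⊆ ball p ε := closedBall_subset_ball (by linarith)
  -- the badness of `s (φ l)` is contradicted by `Q (φ l) ∪ W ∪ Q (φ k)`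
  have hbad2 : IsPathConnected (Q (φ l) ∪ W ∪ Q (φ k)) :=
    ((hQ _).union hW ⟨_, hzQ _, hl⟩).union (hQ _) ⟨_, Or.inr hk, hzQ _⟩
  have hsW : f (s (φ l)) ∉ W := fun h => by
    have h1 := hWb h
    have h2 := hnear' (s (φ l)) hmem.1.le (hmem.2.trans_le ((min_le_left _ _).trans (min_le_right _ _)))
    rw [mem_ball] at h1
    have := dist_triangle_left z₀ p (f (s (φ l)))
    linarith
  have hfs : f (s (φ l)) ∉ Q (φ l) ∪ W ∪ Q (φ k) := by
    rintro ((h | h) | h)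
    · exact hsQ _ h
    · exact hsW h
    · exact hQa (φ k) _ ⟨hmem.1.le, hla⟩ h
  have hsub : Q (φ l) ∪ W ∪ Q (φ k) ⊆ ball p ε := by
    refine union_subset (union_subset ((hQr _).trans hball) fun y hy => ?_) ((hQr _).trans hball)
    have h1 := hWb hy
    rw [mem_ball] at h1 ⊢
    have := dist_triangle y z₀ p
    linarith
  have hak1 : a (φ k) ≤ 1 := ((has _).trans ((hsd _).trans_le (min_le_right _ _))).le
  have hemp := hsb (φ l) _ hbad2 hsub hfs
    ⟨_, Or.inl (Or.inl (haQ _)), _, ⟨(ha0 _).le, has _⟩, rfl⟩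
  exact (hemp ▸ (⟨Or.inr (haQ _), _, ⟨hla, hak1⟩, rfl⟩ :
    f (a (φ k)) ∈ (Q (φ l) ∪ W ∪ Q (φ k)) ∩ f '' Ioc (s (φ l)) 1) : f (a (φ k)) ∈ (∅ : Set X))
end

section

variable {X : Type} [MetricSpace X]

/-- The points of an arc close to its initial point, all of which lie on small Jordan curves. -/
theorem exists_small_jordan [CompactSpace X] [LocallyPathConnectedSpace X] {f : ℝ → X}
    (hf : Continuous f) (hi : InjOn f (Icc 0 1)) {δ₀ : ℝ} (hδ₀ : 0 < δ₀)
    (hns : ∀ s ∈ Ioo 0 δ₀, JoinedIn {f s}ᶜ (f 0) (f 1))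
    (hno : ∀ C, CyclicallyConnected C → f 0 ∈ C → ¬ (C ∩ f '' Ioc 0 1).Nontrivial)
    {ε : ℝ} (hε : 0 < ε) :
    ∃ δ > 0, δ ≤ 1 ∧ ∀ s ∈ Ioo 0 δ, ∃ J, IsJordanCurve J ∧ J ⊆ ball (f 0) ε ∧
      ∃ a b, a < s ∧ s < b ∧ b ≤ 1 ∧ f '' Icc a b ⊆ J := by
  obtain ⟨δ₁, hδ₁, hnear⟩ := Metric.continuous_iff.1 hf 0 ε hε
  have hnear' : ∀ s, 0 ≤ s → s < δ₁ → f s ∈ ball (f 0) ε := fun s h1 h2 =>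
    hnear s (by rw [Real.dist_eq, sub_zero, abs_of_nonneg h1]; exact h2)
  have hcl : IsClosed (f '' Icc δ₁ 1) := (isCompact_Icc.image hf).isClosed
  have hp : f 0 ∉ f '' Icc δ₁ 1 := by
    rintro ⟨t, ht, h⟩
    have := hi ⟨hδ₁.le.trans ht.1, ht.2⟩ ⟨le_rfl, zero_le_one⟩ h
    linarith [ht.1]
  obtain ⟨ε₁, hε₁, hball⟩ := Metric.isOpen_iff.1 hcl.isOpen_compl _ hp
  obtain ⟨δ, hδ, H⟩ := exists_small_bridging hf hi hδ₀ hns hno (lt_min hε hε₁)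
  refine ⟨min δ 1, lt_min hδ one_pos, min_le_right _ _, fun s hs => ?_⟩
  have hs1 : s < 1 := hs.2.trans_le (min_le_right _ _)
  obtain ⟨W, hW, hWb, hsW, h1, h2⟩ := H s ⟨hs.1, hs.2.trans_le (min_le_left _ _)⟩
  obtain ⟨a, ha, b, hb, β, hβ, hβW, hβf⟩ := exists_bridge hf hi hW ⟨hs.1, hs1⟩ hsW h1 h2
  have hbδ : b < δ₁ := by
    by_contra! hcon
    exact hball (ball_subset_ball (min_le_right _ _) (hWb (hβW hβ.right_mem))) ⟨b, ⟨hcon, hb.2⟩, rfl⟩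
  refine ⟨_, isJordanCurve_bridge hf hi ha.1 (ha.2.trans hb.1) hb.2 hβ hβf, ?_, a, b, ha.2, hb.1, hb.2,
    subset_union_right⟩
  refine union_subset (hβW.trans (hWb.trans (ball_subset_ball (min_le_left _ _)))) ?_
  rintro _ ⟨t, ht, rfl⟩
  exact hnear' t (ha.1.trans ht.1) (ht.2.trans_lt hbδ)

theorem nontrivial_image_Icc {X : Type} {f : ℝ → X} (hi : InjOn f (Icc 0 1)) {a b : ℝ} (ha : 0 ≤ a) (hab : a < b)
    (hb : b ≤ 1) : (f '' Icc a b).Nontrivial :=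
  ⟨f a, ⟨a, ⟨le_rfl, hab.le⟩, rfl⟩, f b, ⟨b, ⟨hab.le, le_rfl⟩, rfl⟩, fun h =>
    hab.ne (hi ⟨ha, hab.le.trans hb⟩ ⟨ha.trans hab.le, hb⟩ h)⟩

theorem exists_compact_cyclic_cover {f : ℝ → X} (hi : InjOn f (Icc 0 1)) {B : Set X} {δ : ℝ}
    (hJ : ∀ s ∈ Ioo 0 δ, ∃ J, IsJordanCurve J ∧ J ⊆ B ∧
      ∃ a b, a < s ∧ s < b ∧ b ≤ 1 ∧ f '' Icc a b ⊆ J) {e c : ℝ} (he : 0 < e) (hec : e ≤ c)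
    (hc : c < δ) :
    ∃ K, IsCompact K ∧ CyclicallyConnected K ∧ K ⊆ B ∧ f '' Icc e c ⊆ K := by
  let S : Set ℝ := {t | ∃ K, IsCompact K ∧ CyclicallyConnected K ∧ K ⊆ B ∧ ∃ e' < e, ∃ t', t < t' ∧ t' ≤ 1 ∧
    f '' Icc e' t' ⊆ K}
  suffices h : Icc e c ⊆ S by
    obtain ⟨K, h1, h2, h3, e', he', t', ht', -, h4⟩ := h (right_mem_Icc.2 hec)
    exact ⟨K, h1, h2, h3, (image_mono (Icc_subset_Icc he'.le ht'.le)).trans h4⟩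
  refine IsClosed.Icc_subset_of_forall_exists_gt ?_ ?_ ?_
  · refine isClosed_of_closure_subset fun t ht => ?_
    have htI : t ∈ Icc e c := by
      have := closure_mono inter_subset_right ht
      rwa [isClosed_Icc.closure_eq] at this
    refine ⟨?_, htI⟩
    obtain ⟨J, hJ1, hJB, a, b, hat, htb, hb1, hJf⟩ := hJ t ⟨he.trans_le htI.1, htI.2.trans_lt hc⟩
    obtain ⟨t₁, ht₁, ⟨K, h1, h2, h3, e', he', t', ht', ht1, h4⟩, ht₁I⟩ :=
      mem_closure_iff.1 ht (Ioo a b) isOpen_Ioo ⟨hat, htb⟩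
    refine ⟨K ∪ J, h1.union hJ1.isCompact, h2.union hJ1.cyclicallyConnected ?_,
      union_subset h3 hJB, e', he', b, htb, hb1, ?_⟩
    · have hlt : max (max a e') 0 < min t' b := by
        have := ht₁I.1
        have h1 := ht₁.1
        have h2 := ht₁.2
        refine max_lt (max_lt ?_ ?_) ?_ <;> refine lt_min ?_ ?_ <;> linarith
      refine (nontrivial_image_Icc hi (le_max_right _ _) hlt ((min_le_left _ _).trans ht1)).mono
        (subset_inter (subset_trans (image_mono (Icc_subset_Icc ?_ ?_)) h4)
          (subset_trans (image_mono (Icc_subset_Icc ?_ ?_)) hJf))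
      · exact (le_max_right _ _).trans (le_max_left _ _)
      · exact min_le_left _ _
      · exact (le_max_left _ _).trans (le_max_left _ _)
      · exact min_le_right _ _
    · rintro _ ⟨x, hx, rfl⟩
      rcases le_total x t' with h | h
      · exact Or.inl (h4 ⟨x, ⟨hx.1, h⟩, rfl⟩)
      · exact Or.inr (hJf ⟨x, ⟨(ht₁.1.trans ht').le.trans h, hx.2⟩, rfl⟩)
  · obtain ⟨J, hJ1, hJB, a, b, hat, htb, hb1, hJf⟩ := hJ e ⟨he, hec.trans_lt hc⟩
    exact ⟨J, hJ1.isCompact, hJ1.cyclicallyConnected, hJB, a, hat, b, htb, hb1, hJf⟩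
  · rintro t ⟨⟨K, h1, h2, h3, e', he', t', ht', ht1, h4⟩, -⟩ y hy
    obtain ⟨x, hx⟩ := exists_between (lt_min ht' hy)
    exact ⟨x, ⟨K, h1, h2, h3, e', he', t', hx.2.trans_le (min_le_left _ _), ht1, h4⟩, hx.1,
      hx.2.le.trans (min_le_right _ _)⟩

/-- A sequence of compact cyclicly connected sets shrinking to the initial point of an arc. -/
theorem exists_cyclic_chain {f : ℝ → X}
    (hi : InjOn f (Icc 0 1))
    (hno : ∀ C, CyclicallyConnected C → f 0 ∈ C → ¬ (C ∩ f '' Ioc 0 1).Nontrivial)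
    (hJ : ∀ ε > 0, ∃ δ > 0, δ ≤ 1 ∧ ∀ s ∈ Ioo 0 δ, ∃ J, IsJordanCurve J ∧ J ⊆ ball (f 0) ε ∧
      ∃ a b, a < s ∧ s < b ∧ b ≤ 1 ∧ f '' Icc a b ⊆ J) :
    ∃ K : ℕ → Set X, (∀ n, IsCompact (K n)) ∧ (∀ n, CyclicallyConnected (K n)) ∧
      (∀ n, (K n ∩ K (n + 1)).Nontrivial) ∧ (∀ n m, n + 2 ≤ m → Disjoint (K n) (K m)) ∧
      (∀ ε > 0, ∃ N, ∀ n ≥ N, K n ⊆ ball (f 0) ε) ∧ (∀ n, f 0 ∉ K n) ∧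
      (K 0 ∩ f '' Ioc 0 1).Nontrivial := by
  choose! δ hδ hδ1 hJδ using hJ
  let σ := Set X × ℝ × ℝ
  let P : σ → Prop := fun s => IsCompact s.1 ∧ CyclicallyConnected s.1 ∧ 0 < s.2.1 ∧ 0 < s.2.2 ∧
    s.2.2 < δ s.2.1 ∧ f '' Icc (s.2.2 / 2) s.2.2 ⊆ s.1
  let R : σ → σ → Prop := fun s s' => s'.1 ⊆ ball (f 0) s.2.1 ∧ Disjoint s.1 (ball (f 0) s'.2.1) ∧
    s'.2.1 ≤ s.2.1 / 2 ∧ f '' Icc (s.2.2 / 2) s.2.2 ⊆ s'.1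
  have hsub : ∀ s, P s → (s.1 ∩ f '' Ioc 0 1).Nontrivial := by
    rintro ⟨K, r, c⟩ ⟨-, -, hr, hc, hcδ, hK⟩
    simp only at hr hc hcδ hK ⊢
    have hc1 : c ≤ 1 := hcδ.le.trans (hδ1 r hr)
    refine (nontrivial_image_Icc hi (half_pos hc).le (half_lt_self hc) hc1).mono (subset_inter hK
      (image_mono fun x hx => ⟨(half_pos hc).trans_le hx.1, hx.2.trans hc1⟩))
  have hp : ∀ s, P s → f 0 ∉ s.1 := fun s hs h => hno _ hs.2.1 h (hsub s hs)
  have hstep : ∀ s, P s → ∃ s', P s' ∧ R s s' := by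
    rintro ⟨K, r, c⟩ hs
    have hpK := hp _ hs
    obtain ⟨hKc, hK, hr, hc, hcδ, hKf⟩ := hs
    simp only at hr hc hcδ hKf hpK hKc hK
    obtain ⟨r₁, hr₁, hball⟩ := Metric.isOpen_iff.1 hKc.isClosed.isOpen_compl _ hpK
    have hr' : 0 < min r₁ (r / 2) := lt_min hr₁ (half_pos hr)
    have hδ' := hδ _ hr'
    have hc' : 0 < min c (δ (min r₁ (r / 2)) / 2) := lt_min hc (half_pos hδ')
    obtain ⟨K', h1, h2, h3, h4⟩ := exists_compact_cyclic_cover hi (hJδ r hr) (half_pos hc')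
      ((half_le_self hc'.le).trans (min_le_left _ _)) hcδ
    refine ⟨(K', min r₁ (r / 2), min c (δ (min r₁ (r / 2)) / 2)), ⟨h1, h2, hr', hc', ?_, ?_⟩, h3, ?_, ?_, ?_⟩
    · exact (min_le_right _ _).trans_lt (half_lt_self hδ')
    · exact (image_mono (Icc_subset_Icc_right (min_le_left _ _))).trans h4
    · exact (disjoint_left.2 fun x hx hxb => hball hxb hx).mono_right (ball_subset_ball (min_le_left _ _))
    · exact min_le_right _ _
    · refine (image_mono (Icc_subset_Icc_left ?_)).trans h4
      have := min_le_left c (δ (min r₁ (r / 2)) / 2)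
      linarith
  have hinit : ∃ s, P s := by
    have h1 := hδ 1 one_pos
    obtain ⟨K', h1, h2, h3, h4⟩ := exists_compact_cyclic_cover hi (hJδ 1 one_pos)
      (half_pos (half_pos h1)) (half_le_self (half_pos h1).le) (half_lt_self h1)
    exact ⟨(K', 1, δ 1 / 2), h1, h2, one_pos, half_pos (hδ 1 one_pos), half_lt_self (hδ 1 one_pos), h4⟩
  obtain ⟨s₀, hs₀⟩ := hinit
  choose g hg using fun s : {s // P s} => hstep s.1 s.2
  let q : ℕ → {s // P s} := fun n => Nat.rec ⟨s₀, hs₀⟩ (fun _ s => ⟨g s, (hg s).1⟩) n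
  have hq : ∀ n, R (q n).1 (q (n + 1)).1 := fun n => (hg (q n)).2
  have hr0 : ∀ n, 0 < (q n).1.2.1 := fun n => (q n).2.2.2.1
  have hanti : Antitone fun n => (q n).1.2.1 := antitone_nat_of_succ_le fun n => by
    have := (hq n).2.2.1
    have := hr0 n
    linarith
  have hlim : ∀ n, (q n).1.2.1 ≤ (q 0).1.2.1 * (1 / 2) ^ n := fun n => by
    induction n with
    | zero => simp
    | succ n ih =>
      have := (hq n).2.2.1
      rw [pow_succ]
      linarith
  have hKball : ∀ n m, n + 1 ≤ m → (q m).1.1 ⊆ ball (f 0) (q n).1.2.1 := fun n m hnm => by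
    obtain ⟨k, rfl⟩ := Nat.exists_eq_add_of_le hnm
    have h := (hq (n + k)).1
    rw [show n + 1 + k = n + k + 1 by ring]
    exact h.trans (ball_subset_ball (hanti (Nat.le_add_right n k)))
  refine ⟨fun n => (q n).1.1, fun n => (q n).2.1, fun n => (q n).2.2.1, fun n => ?_, fun n m hnm => ?_,
    fun ε hε => ?_, fun n => hp _ (q n).2, hsub _ (q 0).2⟩
  · have h := (q n).2
    have hc1 : (q n).1.2.2 ≤ 1 := h.2.2.2.2.1.le.trans (hδ1 _ h.2.2.1)
    exact (nontrivial_image_Icc hi (half_pos h.2.2.2.1).le (half_lt_self h.2.2.2.1) hc1).mono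
      (subset_inter h.2.2.2.2.2 (hq n).2.2.2)
  · exact (hq n).2.1.mono_right (hKball (n + 1) m hnm)
  · have ht : Tendsto (fun n : ℕ => (q 0).1.2.1 * (1 / 2) ^ n) atTop (𝓝 0) := by
      simpa using (tendsto_pow_atTop_nhds_zero_of_lt_one (r := (1 / 2 : ℝ)) (by norm_num)
        (by norm_num)).const_mul (q 0).1.2.1
    obtain ⟨N, hN⟩ := (ht.eventually (gt_mem_nhds hε)).exists
    exact ⟨N + 1, fun n hn => (hKball N n hn).trans (ball_subset_ball ((hlim N).trans hN.le))⟩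

/-- Concatenation of a sequence of paths shrinking to a point. -/
theorem joinedIn_of_seq {P : ℕ → Set X} {u : ℕ → X} {p : X} (hP : ∀ n, JoinedIn (P n) (u n) (u (n + 1)))
    (hlim : ∀ ε > 0, ∃ N, ∀ n ≥ N, P n ⊆ ball p ε) : JoinedIn (insert p (⋃ n, P n)) p (u 0) := by
  choose γ hγ using hP
  let E : ℕ → ℝ → X := fun n => (γ n).extend
  have hE0 : ∀ n, E n 0 = u n := fun n => (γ n).extend_zero
  have hE1 : ∀ n, E n 1 = u (n + 1) := fun n => (γ n).extend_one
  let G : ℝ → X := fun t => E ⌊t⌋₊ (t - ⌊t⌋₊)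
  have hGn : ∀ n : ℕ, EqOn G (fun t => E n (t - n)) (Icc n (n + 1)) := by
    intro n t ht
    rcases eq_or_lt_of_le ht.2 with rfl | h
    · have : ⌊(n : ℝ) + 1⌋₊ = n + 1 := by exact_mod_cast Nat.floor_natCast (R := ℝ) (n + 1)
      simp only [G, this]
      simp [hE0, hE1]
    · have : ⌊t⌋₊ = n := (Nat.floor_eq_iff (le_trans (Nat.cast_nonneg n) ht.1)).2 ⟨ht.1, h⟩
      simp only [G, this]
  have hGc : ∀ n : ℕ, ContinuousOn G (Icc 0 n) := fun n => by
    induction n with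
    | zero => simp
    | succ n ih =>
      have h1 : ContinuousOn G (Icc n (n + 1)) := ContinuousOn.congr
        (((γ n).continuous_extend.comp (continuous_id.sub continuous_const)).continuousOn) (hGn n)
      have := ih.union_of_isClosed h1 isClosed_Icc isClosed_Icc
      rw [Icc_union_Icc_eq_Icc (Nat.cast_nonneg n) (by linarith)] at this
      exact_mod_cast this
  have hGP : ∀ t, 0 ≤ t → G t ∈ P ⌊t⌋₊ := fun t ht => by
    have h1 := Nat.floor_le ht
    have h2 := (Nat.lt_floor_add_one t).le
    simp only [G, E]
    rw [Path.extend_apply _ ⟨by linarith, by linarith⟩]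
    exact hγ _ _
  let h : ℝ → X := fun s => if s ≤ 0 then p else G (1 / s - 1)
  have hh : ∀ s, 0 < s → h s = G (1 / s - 1) := fun s hs => by simp [h, hs.not_ge]
  have hpos : ∀ s : ℝ, 0 < s → s ≤ 1 → 0 ≤ 1 / s - 1 := fun s h1 h2 => by
    rw [sub_nonneg, le_div_iff₀ h1]; linarith
  refine JoinedIn.ofLine (f := h) ?_ (by simp [h]) ?_ ?_
  · intro s hs
    rcases eq_or_lt_of_le hs.1 with rfl | hs0
    · rw [Metric.continuousWithinAt_iff]
      intro ε hε
      obtain ⟨N, hN⟩ := hlim ε hε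
      refine ⟨1 / (N + 1), by positivity, fun {t} ht htd => ?_⟩
      rcases eq_or_lt_of_le ht.1 with rfl | ht0
      · simpa using hε
      · rw [show h 0 = p by simp [h], hh t ht0]
        refine hN ⌊1 / t - 1⌋₊ (Nat.le_floor ?_) (hGP _ (hpos t ht0 ht.2))
        rw [Real.dist_eq, sub_zero, abs_of_pos ht0, lt_div_iff₀ (by positivity)] at htd
        rw [le_sub_iff_add_le, le_div_iff₀ ht0]
        linarith
    · obtain ⟨n, hn⟩ := exists_nat_gt (1 / s - 1)
      have hc : ContinuousAt (fun s : ℝ => 1 / s - 1) s :=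
        (continuousAt_const.div continuousAt_id hs0.ne').sub continuousAt_const
      have hev : ∀ᶠ x in 𝓝[Icc 0 1] s, 1 / x - 1 ∈ Icc (0 : ℝ) n := by
        filter_upwards [self_mem_nhdsWithin, mem_nhdsWithin_of_mem_nhds (Ioi_mem_nhds hs0),
          mem_nhdsWithin_of_mem_nhds (hc.eventually (gt_mem_nhds hn))] with x h1 h2 h3
        exact ⟨hpos x h2 h1.2, le_of_lt h3⟩
      have h1 : ContinuousWithinAt (fun s => G (1 / s - 1)) (Icc 0 1) s :=
        ((hGc n) (1 / s - 1) ⟨hpos s hs0 hs.2, hn.le⟩).tendsto.comp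
          (tendsto_nhdsWithin_iff.2 ⟨hc.continuousWithinAt, hev⟩)
      refine h1.congr_of_eventuallyEq ?_ (hh s hs0)
      filter_upwards [mem_nhdsWithin_of_mem_nhds (Ioi_mem_nhds hs0)] with x hx using hh x hx
  · rw [hh 1 one_pos]; simp [G, hE0]
  · rintro _ ⟨s, hs, rfl⟩
    rcases eq_or_lt_of_le hs.1 with rfl | hs0
    · simp [h]
    · rw [hh s hs0]
      exact Or.inr (mem_iUnion.2 ⟨_, hGP _ (hpos s hs0 hs.2)⟩)
end

section

variable {X : Type} [MetricSpace X]

/-- Two disjoint arms converging to `p` along a chain of compact cyclicly connected sets. -/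
theorem exists_arms {K : ℕ → Set X} (hKc : ∀ n, IsCompact (K n)) (hK : ∀ n, CyclicallyConnected (K n))
    (hnt : ∀ n, (K n ∩ K (n + 1)).Nontrivial) (hd : ∀ n m, n + 2 ≤ m → Disjoint (K n) (K m))
    {p : X} (hlim : ∀ ε > 0, ∃ N, ∀ n ≥ N, K n ⊆ ball p ε) (hp : ∀ n, p ∉ K n) :
    ∃ P Q u v, Disjoint P Q ∧ p ∉ P ∧ p ∉ Q ∧ u ∈ K 0 ∧ v ∈ K 0 ∧ JoinedIn (insert p P) p u ∧
      JoinedIn (insert p Q) p v := by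
  let σ : ℕ → Type := fun k => {w : X × X // w.1 ∈ K (2 * k) ∧ w.2 ∈ K (2 * k) ∧ w.1 ≠ w.2}
  have hstep : ∀ k (w : σ k), ∃ w' : σ (k + 1), ∃ P Q, IsPathConnected P ∧ IsPathConnected Q ∧
      P ⊆ K (2 * k) ∪ K (2 * k + 1) ∧ Q ⊆ K (2 * k) ∪ K (2 * k + 1) ∧ Disjoint P Q ∧ w.1.1 ∈ P ∧
      w'.1.1 ∈ P ∧ w.1.2 ∈ Q ∧ w'.1.2 ∈ Q ∧ P ∩ K (2 * k + 2) = {w'.1.1} ∧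
      Q ∩ K (2 * k + 2) = {w'.1.2} := by
    rintro k ⟨⟨u, v⟩, hu, hv, huv⟩
    obtain ⟨u', hu', v', hv', P, Q, h1, h2, h3, h4, h5, h6, h7, h8, h9, h10, h11⟩ :=
      CyclicallyConnected.exists_arm_step (hK _) (hKc _).isClosed (hK (2 * k + 1))
        (hKc (2 * k + 2)).isClosed (hd (2 * k) (2 * k + 2) le_rfl) (by rw [inter_comm]; exact hnt _)
        (hnt _) hu hv huv
    exact ⟨⟨(u', v'), hu', hv', fun (h : u' = v') => disjoint_left.1 h5 h7 (h ▸ h9)⟩, P, Q, h1, h2, h3, h4, h5, h6,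
      h7, h8, h9, h10, h11⟩
  choose g P Q hP hQ hPK hQK hPQ huP huP' hvQ hvQ' hPu hQv using hstep
  obtain ⟨u, hu, v, hv, huv⟩ := (hnt 0).mono inter_subset_left
  let w : (k : ℕ) → σ k := fun k => Nat.rec ⟨(u, v), hu, hv, huv⟩ (fun k w => g k w) k
  have hlim' : ∀ R : ℕ → Set X, (∀ k, R k ⊆ K (2 * k) ∪ K (2 * k + 1)) →
      ∀ ε > 0, ∃ N, ∀ n ≥ N, R n ⊆ ball p ε := fun R hR ε hε => by
    obtain ⟨N, hN⟩ := hlim ε hε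
    exact ⟨N, fun n hn => (hR n).trans (union_subset (hN _ (by omega)) (hN _ (by omega)))⟩
  have hpn : ∀ R : ℕ → Set X, (∀ k, R k ⊆ K (2 * k) ∪ K (2 * k + 1)) → p ∉ ⋃ k, R k := fun R hR h => by
    obtain ⟨k, hk⟩ := mem_iUnion.1 h
    exact (hR k hk).elim (hp _) (hp _)
  -- consecutive members of two arms are disjoint
  have hcons : ∀ (R R' : ℕ → Set X) (y : ℕ → X), (∀ k, R k ⊆ K (2 * k) ∪ K (2 * k + 1)) →
      (∀ k, R' k ⊆ K (2 * k) ∪ K (2 * k + 1)) → (∀ k, Disjoint (R k) (R' k)) →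
      (∀ k, R k ∩ K (2 * k + 2) = {y (k + 1)}) → (∀ k, y k ∈ R k) → ∀ j k, j < k →
      Disjoint (R j) (R' k) := by
    intro R R' y hR hR' hRR hy hyR j k hjk
    rw [disjoint_left]
    intro z hz hz'
    rcases eq_or_lt_of_le (Nat.succ_le_of_lt hjk) with rfl | hlt
    · rcases hR' _ hz' with h' | h'
      · have : z ∈ R j ∩ K (2 * j + 2) := ⟨hz, h'⟩
        rw [hy] at this
        rw [mem_singleton_iff.1 this] at hz'
        exact disjoint_left.1 (hRR _) (hyR _) hz'
      · rcases hR _ hz with h | h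
        · exact disjoint_left.1 (hd _ _ (by omega)) h h'
        · exact disjoint_left.1 (hd _ _ (by omega)) h h'
    · rcases hR _ hz with h | h <;> rcases hR' _ hz' with h' | h' <;>
        exact disjoint_left.1 (hd _ _ (by omega)) h h'
  refine ⟨⋃ k, P k (w k), ⋃ k, Q k (w k), u, v, ?_, hpn _ fun k => hPK _ _, hpn _ fun k => hQK _ _, hu, hv,
    ?_, ?_⟩
  · simp only [disjoint_iUnion_left, disjoint_iUnion_right]
    intro k j
    rcases lt_trichotomy j k with h | rfl | h
    · exact hcons (fun k => P k (w k)) (fun k => Q k (w k)) (fun k => (w k).1.1)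
        (fun k => hPK _ _) (fun k => hQK _ _) (fun k => hPQ _ _) (fun k => hPu _ _) (fun k => huP _ _) _ _ h
    · exact hPQ _ _
    · exact (hcons (fun k => Q k (w k)) (fun k => P k (w k)) (fun k => (w k).1.2)
        (fun k => hQK _ _) (fun k => hPK _ _) (fun k => (hPQ _ _).symm) (fun k => hQv _ _)
        (fun k => hvQ _ _) _ _ h).symm
  · exact joinedIn_of_seq (u := fun k => (w k).1.1)
      (fun k => (hP k (w k)).joinedIn _ (huP _ _) _ (huP' _ _)) (hlim' _ fun k => hPK _ _)
  · exact joinedIn_of_seq (u := fun k => (w k).1.2)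
      (fun k => (hQ k (w k)).joinedIn _ (hvQ _ _) _ (hvQ' _ _)) (hlim' _ fun k => hQK _ _)

/-- If no point of an arc close to its initial point separates the two end points, then the initial
point lies in a cyclicly connected set containing further points of the arc. -/
theorem exists_cyclic_of_not_separated [CompactSpace X] [LocallyPathConnectedSpace X] {f : ℝ → X}
    (hf : Continuous f) (hi : InjOn f (Icc 0 1)) {δ₀ : ℝ} (hδ₀ : 0 < δ₀)
    (hns : ∀ s ∈ Ioo 0 δ₀, JoinedIn {f s}ᶜ (f 0) (f 1)) :
    ∃ C, CyclicallyConnected C ∧ f 0 ∈ C ∧ (C ∩ f '' Ioc 0 1).Nontrivial := by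
  by_contra hcon
  have hno : ∀ C, CyclicallyConnected C → f 0 ∈ C → ¬ (C ∩ f '' Ioc 0 1).Nontrivial :=
    fun C h1 h2 h3 => hcon ⟨C, h1, h2, h3⟩
  obtain ⟨K, hKc, hK, hnt, hd, hlim, hp, hK0⟩ := exists_cyclic_chain hi hno
    fun ε hε => exists_small_jordan hf hi hδ₀ hns hno hε
  obtain ⟨P, Q, u, v, hPQ, hpP, hpQ, hu, hv, hPj, hQj⟩ := exists_arms hKc hK hnt hd hlim hp
  have hpu : f 0 ≠ u := fun h => hp 0 (h ▸ hu)
  have hpv : f 0 ≠ v := fun h => hp 0 (h ▸ hv)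
  obtain ⟨α, hαP, hα⟩ := hPj.exists_isArc hpu
  obtain ⟨β, hβQ, hβ⟩ := hQj.exists_isArc hpv
  obtain ⟨w, A, hA, hAα, hAK⟩ := hα.exists_first_hit (hKc 0).isClosed (hp 0) ⟨u, hα.right_mem, hu⟩
  obtain ⟨w', B, hB, hBβ, hBK⟩ := hβ.exists_first_hit (hKc 0).isClosed (hp 0) ⟨v, hβ.right_mem, hv⟩
  have hwK : w ∈ A ∩ K 0 := hAK ▸ rfl
  have hwK' : w' ∈ B ∩ K 0 := hBK ▸ rfl
  have hAB : A ∩ B ⊆ {f 0} := fun z hz => by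
    rcases hαP (hAα hz.1) with h | h
    · exact h
    · rcases hβQ (hBβ hz.2) with h' | h'
      · exact h'
      · exact (disjoint_left.1 hPQ h h').elim
  have hww : w ≠ w' := fun h => hp 0 (hAB ⟨hwK.1, h ▸ hwK'.1⟩ ▸ hwK.2)
  obtain ⟨D, hDK, hD⟩ := ((hK 0).isPathConnected ⟨u, hu⟩).exists_isArc hwK.2 hwK'.2 hww
  have hAD : A ∩ D = {w} := Subset.antisymm (hAK ▸ inter_subset_inter_right _ hDK)
    (singleton_subset_iff.2 ⟨hwK.1, hD.left_mem⟩)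
  have hJ := (hA.join hD hAD).isJordanCurve_union hB (by
    refine Subset.antisymm ?_ ?_
    · rw [union_inter_distrib_right]
      refine union_subset (hAB.trans (by simp)) ?_
      have : D ∩ B ⊆ {w'} := by rw [← hBK, inter_comm]; exact inter_subset_inter_right _ hDK
      exact this.trans (by simp)
    · rintro _ (rfl | rfl)
      · exact ⟨Or.inl hA.left_mem, hB.left_mem⟩
      · exact ⟨Or.inr hD.right_mem, hB.right_mem⟩)
  refine hno _ (hJ.cyclicallyConnected.union (hK 0) ⟨w, ⟨Or.inl (Or.inl hwK.1), hwK.2⟩, w',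
    ⟨Or.inr hwK'.1, hwK'.2⟩, hww⟩) (Or.inl (Or.inl (Or.inl hA.left_mem))) ?_
  exact hK0.mono (inter_subset_inter_left _ subset_union_right)

theorem MaximalCyclic.isClosed [CompactSpace X] [LocallyPathConnectedSpace X] [PathConnectedSpace X]
    {T : Set X} (hT : MaximalCyclic T) : IsClosed T := by
  refine isClosed_of_closure_subset fun p hp => ?_
  by_contra hpT
  obtain ⟨t, ht⟩ := hT.nontrivial.nonempty
  have hpt : p ≠ t := fun h => hpT (h ▸ ht)
  obtain ⟨S, -, hS⟩ := isPathConnected_univ.exists_isArc (mem_univ p) (mem_univ t) hpt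
  obtain ⟨f, hf, hi, rfl, rfl, him⟩ := hS.exists_continuous_param
  have harc : ∀ a b, 0 ≤ a → a < b → b ≤ 1 → IsArc (f a) (f b) (f '' Icc a b) := fun a b h1 h2 h3 =>
    IsArc.of_image h2 hf.continuousOn (hi.mono (Icc_subset_Icc h1 h3))
  -- the arc meets `T` arbitrarily close to its initial point
  have hacc : ∀ s ∈ Ioc (0 : ℝ) 1, ∃ s' ∈ Ioo 0 s, f s' ∈ T := by
    by_contra! hcon
    obtain ⟨s, hs, hsT⟩ := hcon
    have hcl : IsClosed (f '' Icc (s / 2) 1) := (isCompact_Icc.image hf).isClosed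
    have hpc : f 0 ∉ f '' Icc (s / 2) 1 := by
      rintro ⟨x, hx, h⟩
      have := hi ⟨(half_pos hs.1).le.trans hx.1, hx.2⟩ ⟨le_rfl, zero_le_one⟩ h
      linarith [hx.1, hs.1]
    obtain ⟨r, hr, hball⟩ := Metric.isOpen_iff.1 hcl.isOpen_compl _ hpc
    obtain ⟨V, hV, hVc, hVb⟩ := exists_pathConnected_nhds_subset_ball (f 0) hr
    obtain ⟨t', ht'V, ht'T⟩ := mem_closure_iff_nhds.1 hp V hV
    -- an arc from `t'` to `f 1` through a point of `f (0, s)`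
    have hF : IsClosed (f '' Icc 0 1) := (isCompact_Icc.image hf).isClosed
    by_cases ht'F : t' ∈ f '' Icc 0 1
    · obtain ⟨x, hx, rfl⟩ := ht'F
      have hxs : x < s / 2 := by
        by_contra! h
        exact hball (hVb ht'V) ⟨x, ⟨h, hx.2⟩, rfl⟩
      have hx0 : x ≠ 0 := by rintro rfl; exact hpT ht'T
      exact hsT x ⟨lt_of_le_of_ne hx.1 hx0.symm, by linarith [hs.1]⟩ ht'T
    · obtain ⟨A', hA'V, hA'⟩ := hVc.exists_isArc ht'V (mem_of_mem_nhds hV)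
        (fun h => ht'F ⟨0, ⟨le_rfl, zero_le_one⟩, h.symm⟩)
      obtain ⟨w, A, hA, hAA', hAF⟩ := hA'.exists_first_hit hF ht'F
        ⟨f 0, hA'.right_mem, 0, ⟨le_rfl, zero_le_one⟩, rfl⟩
      have hw : w ∈ A ∩ f '' Icc 0 1 := hAF ▸ rfl
      obtain ⟨hwA, x, hx, rfl⟩ := hw
      have hxs : x < s / 2 := by
        by_contra! h
        exact hball (hVb (hA'V (hAA' hwA))) ⟨x, ⟨h, hx.2⟩, rfl⟩
      have hx1 : x < 1 := by linarith [hs.2, hs.1]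
      have hj := hA.join (harc x 1 hx.1 hx1 le_rfl) (Subset.antisymm
        (hAF ▸ inter_subset_inter_right _ (image_mono (Icc_subset_Icc_left hx.1)))
        (singleton_subset_iff.2 ⟨hwA, x, ⟨le_rfl, hx1.le⟩, rfl⟩))
      have hsub := hT.arc_subset hj ht'T ht
      refine hsT (s / 2) ⟨half_pos hs.1, half_lt_self hs.1⟩ (hsub (Or.inr ⟨s / 2, ⟨hxs.le, ?_⟩, rfl⟩))
      linarith [hs.1, hs.2]
  have hfT : ∀ s ∈ Ioc (0 : ℝ) 1, f s ∈ T := fun s hs => by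
    obtain ⟨s', hs', hT'⟩ := hacc s hs
    exact hT.arc_subset (harc s' 1 hs'.1.le (hs'.2.trans_le hs.2) le_rfl) hT' ht ⟨s, ⟨hs'.2.le, hs.2⟩, rfl⟩
  obtain ⟨C, hC, h0, hnt⟩ := exists_cyclic_of_not_separated hf hi one_pos fun s hs => by
    have hs2 : 0 < s / 2 := half_pos hs.1
    have hs3 : s / 2 < s := half_lt_self hs.1
    have h1 : JoinedIn {f s}ᶜ (f 0) (f (s / 2)) := by
      refine ((harc 0 (s / 2) le_rfl hs2 (by linarith [hs.2])).isPathConnected.joinedIn _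
        ⟨0, ⟨le_rfl, hs2.le⟩, rfl⟩ _ ⟨s / 2, ⟨hs2.le, le_rfl⟩, rfl⟩).mono ?_
      rintro _ ⟨x, hx, rfl⟩ h
      have := hi ⟨hx.1, by linarith [hx.2, hs.2]⟩ ⟨hs.1.le, hs.2.le⟩ h
      linarith [hx.2]
    have hne : ∀ x ∈ Ioc (0 : ℝ) 1, x ≠ s → f x ∈ T \ {f s} := fun x hx hxs =>
      ⟨hfT x hx, fun h => hxs (hi ⟨hx.1.le, hx.2⟩ ⟨hs.1.le, hs.2.le⟩ h)⟩
    have hm1 := hne (s / 2) ⟨hs2, by linarith [hs.2]⟩ hs3.ne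
    have hm2 := hne 1 ⟨one_pos, le_rfl⟩ hs.2.ne'
    exact h1.trans (((hT.2.1.isPathConnected_diff ⟨_, hm1⟩).joinedIn _ hm1 _ hm2).mono fun x hx => hx.2)
  refine hpT (hT.subset_of_inter_nontrivial hC (hnt.mono fun x hx => ⟨?_, hx.1⟩) h0)
  obtain ⟨-, s, hs, rfl⟩ := hx
  exact hfT s hs
end

section

variable {X : Type} [MetricSpace X]

theorem IsArc.infinite {u v : X} {S : Set X} (h : IsArc u v S) : S.Infinite :=
  h.isPathConnected.isConnected.isPreconnected.infinite_of_nontrivial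
    ⟨u, h.left_mem, v, h.right_mem, h.ne⟩

/-- A nonempty closed set containing every arc between two of its points. -/
structure ArcClosed (K : Set X) : Prop where
  isClosed : IsClosed K
  nonempty : K.Nonempty
  arc_subset : ∀ {u v E}, IsArc u v E → u ∈ K → v ∈ K → E ⊆ K

open Classical in
/-- The point of `K` through which every path connected set joining `x` to `K` passes. -/
noncomputable def gate (K : Set X) (x : X) : X :=
  if h : ∃ a ∈ K, ∀ W, IsPathConnected W → x ∈ W → (W ∩ K).Nonempty → a ∈ W then h.choose else x

namespace ArcClosed

variable {K K' : Set X} {x y : X}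

section

variable [PathConnectedSpace X]

theorem exists_gate (hK : ArcClosed K) (x : X) :
    ∃ a ∈ K, ∀ W, IsPathConnected W → x ∈ W → (W ∩ K).Nonempty → a ∈ W := by
  by_cases hx : x ∈ K
  · exact ⟨x, hx, fun W _ h _ => h⟩
  have hit : ∀ W, IsPathConnected W → x ∈ W → (W ∩ K).Nonempty →
      ∃ a ∈ K, ∃ A ⊆ W, IsArc x a A ∧ A ∩ K = {a} := by
    rintro W hW hxW ⟨k, hkW, hkK⟩
    obtain ⟨S, hSW, hS⟩ := hW.exists_isArc hxW hkW (fun h => hx (h ▸ hkK))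
    obtain ⟨a, A, hA, hAS, hAK⟩ := hS.exists_first_hit hK.isClosed hx ⟨k, hS.right_mem, hkK⟩
    exact ⟨a, (hAK ▸ rfl : a ∈ A ∩ K).2, A, hAS.trans hSW, hA, hAK⟩
  obtain ⟨a, haK, A, -, hA, hAK⟩ := hit univ isPathConnected_univ (mem_univ x)
    (by simpa using hK.nonempty)
  refine ⟨a, haK, fun W hW hxW hWK => ?_⟩
  obtain ⟨b, hbK, B, hBW, hB, hBK⟩ := hit W hW hxW hWK
  suffices h : a = b by exact h ▸ hBW hB.right_mem
  by_contra hab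
  obtain ⟨S, hSW, hS⟩ := (hA.isPathConnected.union hB.isPathConnected
    ⟨x, hA.left_mem, hB.left_mem⟩).exists_isArc (Or.inl hA.right_mem) (Or.inr hB.right_mem) hab
  have hSK := hK.arc_subset hS haK hbK
  refine hS.infinite ((toFinite {a, b}).subset fun z hz => ?_)
  rcases hSW hz with h | h
  · exact Or.inl (hAK ▸ ⟨h, hSK hz⟩ : z ∈ ({a} : Set X))
  · exact Or.inr (hBK ▸ ⟨h, hSK hz⟩ : z ∈ ({b} : Set X))

theorem gate_mem (hK : ArcClosed K) (x : X) : gate K x ∈ K := by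
  have h := hK.exists_gate x
  rw [gate, dif_pos h]
  exact h.choose_spec.1

theorem gate_mem_of_isPathConnected (hK : ArcClosed K) {W : Set X} (hW : IsPathConnected W)
    (hx : x ∈ W) (hWK : (W ∩ K).Nonempty) : gate K x ∈ W := by
  have h := hK.exists_gate x
  rw [gate, dif_pos h]
  exact h.choose_spec.2 W hW hx hWK

theorem gate_eq_self (hK : ArcClosed K) (hx : x ∈ K) : gate K x = x :=
  hK.gate_mem_of_isPathConnected (isPathConnected_singleton x) rfl ⟨x, rfl, hx⟩

theorem gate_eq_of_disjoint (hK : ArcClosed K) {W : Set X} (hW : IsPathConnected W)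
    (hWK : Disjoint W K) (hx : x ∈ W) (hy : y ∈ W) : gate K x = gate K y := by
  have hyK : y ∉ K := disjoint_left.1 hWK hy
  obtain ⟨S, -, hS⟩ := isPathConnected_univ.exists_isArc (mem_univ y) (mem_univ (gate K y))
    (fun h => hyK (h ▸ hK.gate_mem y))
  obtain ⟨a, A, hA, -, hAK⟩ := hS.exists_first_hit hK.isClosed hyK ⟨_, hS.right_mem, hK.gate_mem y⟩
  have ha : a ∈ A ∩ K := hAK ▸ rfl
  have hWA : (W ∪ A) ∩ K = {a} := by
    rw [union_inter_distrib_right, hAK, hWK.inter_eq, empty_union]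
  have key : ∀ z ∈ W, gate K z = a := fun z hz => by
    have h := hK.gate_mem_of_isPathConnected (hW.union hA.isPathConnected ⟨y, hy, hA.left_mem⟩)
      (Or.inl hz) (hWA ▸ singleton_nonempty a)
    exact (hWA ▸ ⟨h, hK.gate_mem z⟩ : gate K z ∈ ({a} : Set X))
  rw [key x hx, key y hy]

/-- If a path connected set meets `K` in a single point at most, the gate is constant on it. -/
theorem gate_eq_of_subsingleton (hK : ArcClosed K) {W : Set X} (hW : IsPathConnected W)
    (hWK : (W ∩ K).Subsingleton) (hx : x ∈ W) (hy : y ∈ W) : gate K x = gate K y := by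
  by_cases h : Disjoint W K
  · exact hK.gate_eq_of_disjoint hW h hx hy
  · rw [not_disjoint_iff_nonempty_inter] at h
    exact hWK ⟨hK.gate_mem_of_isPathConnected hW hx h, hK.gate_mem x⟩
      ⟨hK.gate_mem_of_isPathConnected hW hy h, hK.gate_mem y⟩

theorem continuous_gate [LocallyPathConnectedSpace X] (hK : ArcClosed K) : Continuous (gate K) := by
  rw [Metric.continuous_iff']
  intro x ε hε
  by_cases hx : x ∈ K
  · obtain ⟨W, hW, hWc, hWb⟩ := exists_pathConnected_nhds_subset_ball x hε
    filter_upwards [hW] with y hy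
    rw [hK.gate_eq_self hx]
    exact hWb (hK.gate_mem_of_isPathConnected hWc hy ⟨x, mem_of_mem_nhds hW, hx⟩)
  · obtain ⟨r, hr, hball⟩ := Metric.isOpen_iff.1 hK.isClosed.isOpen_compl x hx
    obtain ⟨W, hW, hWc, hWb⟩ := exists_pathConnected_nhds_subset_ball x hr
    filter_upwards [hW] with y hy
    rw [hK.gate_eq_of_disjoint hWc (disjoint_left.2 fun z hz => hball (hWb hz)) hy (mem_of_mem_nhds hW)]
    simpa using hε

theorem isPathConnected [LocallyPathConnectedSpace X] (hK : ArcClosed K) : IsPathConnected K := by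
  have : gate K '' univ = K := Subset.antisymm (by rintro _ ⟨x, -, rfl⟩; exact hK.gate_mem x)
    fun x hx => ⟨x, mem_univ x, hK.gate_eq_self hx⟩
  rw [← this]
  exact isPathConnected_univ.image hK.continuous_gate

theorem isPathConnected_inter [LocallyPathConnectedSpace X] (hK : ArcClosed K) {W : Set X}
    (hW : IsPathConnected W) (hWK : (W ∩ K).Nonempty) : IsPathConnected (W ∩ K) := by
  have : gate K '' W = W ∩ K := Subset.antisymm
    (by rintro _ ⟨x, hx, rfl⟩; exact ⟨hK.gate_mem_of_isPathConnected hW hx hWK, hK.gate_mem x⟩)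
    fun x hx => ⟨x, hx.1, hK.gate_eq_self hx.2⟩
  rw [← this]
  exact hW.image hK.continuous_gate

/-- The gate into the union of two sets meeting in a single point. -/
theorem gate_eq_of_inter_eq_singleton [LocallyPathConnectedSpace X] (hK : ArcClosed K) (hK' : ArcClosed K')
    {a : X} (ha : K ∩ K' = {a}) (hx : x ∈ K) : gate K' x = a := by
  have haK : a ∈ K ∩ K' := ha ▸ rfl
  exact (ha ▸ ⟨hK'.gate_mem_of_isPathConnected hK.isPathConnected hx ⟨a, haK⟩, hK'.gate_mem x⟩ :
    gate K' x ∈ ({a} : Set X))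

theorem union [LocallyPathConnectedSpace X] (hK : ArcClosed K) (hK' : ArcClosed K') {a : X}
    (ha : K ∩ K' = {a}) : ArcClosed (K ∪ K') := by
  have haK : a ∈ K ∩ K' := ha ▸ rfl
  have key : ∀ {u v E}, IsArc u v E → u ∈ K → v ∈ K' → E ⊆ K ∪ K' := by
    intro u v E hE hu hv y hy
    by_contra hyK
    rw [mem_union, not_or] at hyK
    obtain ⟨A, B, hA, hB, -, hAB⟩ := hE.exists_split hy (fun h => hyK.1 (h ▸ hu)) (fun h => hyK.2 (h ▸ hv))
    have h1 : gate K y ∈ A := hK.gate_mem_of_isPathConnected hA.isPathConnected hA.right_mem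
      ⟨u, hA.left_mem, hu⟩
    have h2 : gate K' y ∈ B := hK'.gate_mem_of_isPathConnected hB.isPathConnected hB.left_mem
      ⟨v, hB.right_mem, hv⟩
    have h3 : gate K' y ∈ A ∪ K := hK'.gate_mem_of_isPathConnected
      (hA.isPathConnected.union hK.isPathConnected ⟨u, hA.left_mem, hu⟩) (Or.inl hA.right_mem)
      ⟨a, Or.inr haK.1, haK.2⟩
    have h4 : gate K y ∈ B ∪ K' := hK.gate_mem_of_isPathConnected
      (hB.isPathConnected.union hK'.isPathConnected ⟨v, hB.right_mem, hv⟩) (Or.inl hB.left_mem)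
      ⟨a, Or.inr haK.2, haK.1⟩
    have hyA : ∀ z, z ∈ A → z ∈ B → z = y := fun z hzA hzB =>
      (hAB ▸ ⟨hzA, hzB⟩ : z ∈ ({y} : Set X))
    have h5 : gate K' y = a := by
      rcases h3 with h3 | h3
      · exact (hyK.2 (hyA _ h3 h2 ▸ hK'.gate_mem y)).elim
      · exact (ha ▸ ⟨h3, hK'.gate_mem y⟩ : gate K' y ∈ ({a} : Set X))
    have h6 : gate K y = a := by
      rcases h4 with h4 | h4
      · exact (hyK.1 (hyA _ h1 h4 ▸ hK.gate_mem y)).elim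
      · exact (ha ▸ ⟨hK.gate_mem y, h4⟩ : gate K y ∈ ({a} : Set X))
    exact hyK.1 (hyA a (h6 ▸ h1) (h5 ▸ h2) ▸ haK.1)
  refine ⟨hK.isClosed.union hK'.isClosed, hK.nonempty.inl, fun {u v E} hE hu hv => ?_⟩
  rcases hu with hu | hu <;> rcases hv with hv | hv
  · exact (hK.arc_subset hE hu hv).trans subset_union_left
  · exact key hE hu hv
  · exact key hE.symm hv hu
  · exact (hK'.arc_subset hE hu hv).trans subset_union_right

end

theorem univ [Nonempty X] : ArcClosed (univ : Set X) :=
  ⟨isClosed_univ, univ_nonempty, fun _ _ _ => subset_univ _⟩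

theorem singleton (a : X) : ArcClosed ({a} : Set X) :=
  ⟨isClosed_singleton, singleton_nonempty a, fun h hu hv => (h.ne (hu.trans hv.symm)).elim⟩

theorem inter (hK : ArcClosed K) (hK' : ArcClosed K') (h : (K ∩ K').Nonempty) : ArcClosed (K ∩ K') :=
  ⟨hK.isClosed.inter hK'.isClosed, h, fun hE hu hv =>
    subset_inter (hK.arc_subset hE hu.1 hv.1) (hK'.arc_subset hE hu.2 hv.2)⟩

theorem insert_of_isOpen {O : Set X} {a : X} (hO : IsOpen O) (hc : IsClosed (insert a O)) :
    ArcClosed (insert a O) := by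
  refine ⟨hc, insert_nonempty a O, fun {u v E} hE hu hv y hy => ?_⟩
  by_contra hyO
  have key : ∀ {w A}, IsArc y w A → w ∈ insert a O → a ∈ A := by
    intro w A hA hw
    by_contra haA
    have hwO : w ∈ O := hw.resolve_left fun h => haA (h ▸ hA.right_mem)
    obtain ⟨z, hz, hz1, hz2⟩ := hA.isPathConnected.isConnected.isPreconnected O (insert a O)ᶜ hO
      hc.isOpen_compl (fun z hz => by
        by_cases h : z ∈ O
        · exact Or.inl h
        · exact Or.inr fun h' => h'.elim (fun h'' => haA (h'' ▸ hz)) h)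
      ⟨w, hA.right_mem, hwO⟩ ⟨y, hA.left_mem, hyO⟩
    exact hz2 (Or.inr hz1)
  obtain ⟨A, B, hA, hB, -, hAB⟩ := hE.exists_split hy (fun h => hyO (h ▸ hu)) (fun h => hyO (h ▸ hv))
  have := (hAB ▸ ⟨key hA.symm hu, key hB hv⟩ : a ∈ ({y} : Set X))
  exact hyO (Or.inl this.symm)

theorem subset_of_cyclicallyConnected [PathConnectedSpace X] (hK : ArcClosed K) {C : Set X}
    (hC : CyclicallyConnected C) (h : (C ∩ K).Nontrivial) : C ⊆ K := by
  intro y hy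
  by_contra hyK
  have hyg : y ≠ gate K y := fun h => hyK (h ▸ hK.gate_mem y)
  obtain ⟨u, hu, hug⟩ := h.exists_ne (gate K y)
  have := hK.gate_mem_of_isPathConnected (hC.isPathConnected_diff ⟨y, hy, hyg⟩) ⟨hy, hyg⟩
    ⟨u, ⟨hu.1, hug⟩, hu.2⟩
  exact this.2 rfl

end ArcClosed

theorem MaximalCyclic.arcClosed [CompactSpace X] [LocallyPathConnectedSpace X] [PathConnectedSpace X]
    {T : Set X} (hT : MaximalCyclic T) : ArcClosed T :=
  ⟨hT.isClosed, hT.nontrivial.nonempty, fun hE hu hv => hT.arc_subset hE hu hv⟩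

section Branch

variable [LocallyPathConnectedSpace X] (a x : X)

/-- The path component of `x` in the complement of `a`. -/
abbrev branch (a x : X) : Set X := pathComponentIn {a}ᶜ x

theorem isOpen_branch : IsOpen (branch a x) := isOpen_compl_singleton.pathComponentIn x

theorem notMem_branch {X : Type} [MetricSpace X] (a x : X) : a ∉ branch a x := fun h => pathComponentIn_subset h rfl

theorem isClosed_insert_branch : IsClosed (insert a (branch a x)) := by
  rw [← isOpen_compl_iff, isOpen_iff_mem_nhds]
  intro y hy
  rw [mem_compl_iff, mem_insert_iff, not_or] at hy
  refine mem_of_superset ((isOpen_branch a y).mem_nhds (mem_pathComponentIn_self hy.1)) ?_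
  rintro z hz (rfl | hz')
  · exact notMem_branch z y hz
  · exact hy.2 (JoinedIn.trans hz' (JoinedIn.symm hz))

theorem arcClosed_insert_branch : ArcClosed (insert a (branch a x)) :=
  ArcClosed.insert_of_isOpen (isOpen_branch a x) (isClosed_insert_branch a x)

theorem arcClosed_compl_branch : ArcClosed (branch a x)ᶜ := by
  have h : (branch a x)ᶜ = insert a (insert a (branch a x))ᶜ := by
    ext y
    by_cases hy : y = a
    · simp [hy, notMem_branch a x]
    · simp [hy]
  have hc : IsClosed (branch a x)ᶜ := (isOpen_branch a x).isClosed_compl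
  rw [h] at hc ⊢
  exact ArcClosed.insert_of_isOpen (isClosed_insert_branch a x).isOpen_compl hc

end Branch

/-- Only finitely many members of an injective sequence of maximal cyclic sets are large. -/
theorem finite_setOf_large_maximalCyclic [CompactSpace X] [LocallyPathConnectedSpace X]
    [PathConnectedSpace X] {T : ℕ → Set X} (hinj : Function.Injective T)
    (hT : ∀ n, MaximalCyclic (T n)) {ε : ℝ} (hε : 0 < ε) :
    {n | ∃ x ∈ T n, ∃ y ∈ T n, ε ≤ dist x y}.Finite := by
  by_contra hinf
  obtain ⟨φ, hφ, hmem⟩ : ∃ φ : ℕ → ℕ, StrictMono φ ∧ ∀ n, φ n ∈ {n | ∃ x ∈ T n, ∃ y ∈ T n, ε ≤ dist x y} :=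
    ⟨Nat.nth _, Nat.nth_strictMono hinf, fun n => Nat.nth_mem_of_infinite hinf n⟩
  choose x hx y hy hxy using hmem
  obtain ⟨⟨x₀, y₀⟩, -, ψ, hψ, hlim⟩ := (isCompact_univ (X := X × X)).tendsto_subseq
    (x := fun n => (x n, y n)) fun n => mem_univ _
  have hlx : Tendsto (fun n => x (ψ n)) atTop (𝓝 x₀) := (continuous_fst.tendsto _).comp hlim
  have hly : Tendsto (fun n => y (ψ n)) atTop (𝓝 y₀) := (continuous_snd.tendsto _).comp hlim
  have hd : ε ≤ dist x₀ y₀ := ge_of_tendsto' (hlx.dist hly) fun n => hxy _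
  obtain ⟨U, hU, hUc, hUb⟩ := exists_pathConnected_nhds_subset_ball x₀ (half_pos hε)
  obtain ⟨V, hV, hVc, hVb⟩ := exists_pathConnected_nhds_subset_ball y₀ (half_pos hε)
  have hUV : Disjoint U V := (ball_disjoint_ball (by linarith)).mono hUb hVb
  obtain ⟨N, hN⟩ := eventually_atTop.1 ((hlx.eventually hU).and (hly.eventually hV))
  have hA := (hT (φ (ψ N))).arcClosed
  have hne : T (φ (ψ (N + 1))) ≠ T (φ (ψ N)) := fun h =>
    (Nat.succ_ne_self N) (hψ.injective (hφ.injective (hinj h)))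
  have heq := hA.gate_eq_of_subsingleton (hT _).isPathConnected
    ((hT (φ (ψ (N + 1)))).inter_subsingleton (hT _) hne) (hx (ψ (N + 1))) (hy (ψ (N + 1)))
  have h1 := hA.gate_mem_of_isPathConnected hUc (hN (N + 1) (Nat.le_succ N)).1
    ⟨_, (hN N le_rfl).1, hx _⟩
  have h2 := hA.gate_mem_of_isPathConnected hVc (hN (N + 1) (Nat.le_succ N)).2
    ⟨_, (hN N le_rfl).2, hy _⟩
  exact disjoint_left.1 hUV h1 (heq ▸ h2)
end

/-- Induction on paths cut into pieces lying in the members of an open cover. -/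
theorem Path.induction_openCover {X : Type*} [TopologicalSpace X] {ι : Type*} {U : ι → Set X}
    {S : Set X} (hU : ∀ i, IsOpen (U i)) (hS : S ⊆ ⋃ i, U i)
    {Q : ∀ x y : X, Path.Homotopic.Quotient x y → Prop}
    (hbase : ∀ (x y : X) (γ : Path x y) (i : ι), range γ ⊆ S → range γ ⊆ U i →
      Q x y (Path.Homotopic.Quotient.mk γ))
    (htrans : ∀ (x y z : X) (p : Path.Homotopic.Quotient x y) (q : Path.Homotopic.Quotient y z),
      x ∈ S → y ∈ S → z ∈ S → Q x y p → Q y z q → Q x z (p.trans q))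
    {x y : X} (γ : Path x y) (hγ : range γ ⊆ S) : Q x y (Path.Homotopic.Quotient.mk γ) := by
  obtain ⟨t, h0, hmono, ⟨n, hn⟩, hc⟩ := exists_monotone_Icc_subset_open_cover_unitInterval
    (c := fun i => γ ⁻¹' U i) (fun i => (hU i).preimage γ.continuous)
    (fun s _ => by
      obtain ⟨i, hi⟩ := mem_iUnion.1 (hS (hγ ⟨s, rfl⟩))
      exact mem_iUnion.2 ⟨i, hi⟩)
  have hmem : ∀ s, γ s ∈ S := fun s => hγ ⟨s, rfl⟩
  have hsub : ∀ s r, range (γ.subpath s r) ⊆ S := fun s r => by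
    rw [Path.range_subpath]
    rintro _ ⟨w, _, rfl⟩
    exact hmem w
  have key : ∀ m, Q _ _ (Path.Homotopic.Quotient.mk (γ.subpath (t 0) (t m))) := by
    intro m
    induction m with
    | zero =>
      obtain ⟨i, hi⟩ := mem_iUnion.1 (hS (hmem (t 0)))
      refine hbase _ _ _ i (hsub _ _) ?_
      rw [Path.range_subpath_of_le _ _ _ le_rfl]
      rintro _ ⟨w, hw, rfl⟩
      rw [Icc_self] at hw
      rw [hw]
      exact hi
    | succ m ih =>
      obtain ⟨i, hi⟩ := hc m
      have h1 : Q _ _ (Path.Homotopic.Quotient.mk (γ.subpath (t m) (t (m + 1)))) := by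
        refine hbase _ _ _ i (hsub _ _) ?_
        rw [Path.range_subpath_of_le _ _ _ (hmono (Nat.le_succ m))]
        rintro _ ⟨w, hw, rfl⟩
        exact hi hw
      have h2 := htrans _ _ _ _ _ (hmem _) (hmem _) (hmem _) ih h1
      rwa [← Path.Homotopic.Quotient.mk_trans, Path.Homotopic.Quotient.eq.2
        ⟨Path.Homotopy.subpathTransSubpath γ (t 0) (t m) (t (m + 1))⟩] at h2
  have h := key n
  rw [h0, hn n le_rfl, Path.subpath_zero_one] at h
  have : ∀ (x' y' : X) (hx : x' = x) (hy : y' = y),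
      Q x' y' (Path.Homotopic.Quotient.mk (γ.cast hx hy)) →
      Q x y (Path.Homotopic.Quotient.mk γ) := by
    rintro _ _ rfl rfl h
    exact h
  exact this _ _ _ _ h

/-- A locally defined, locally homotopy invariant parallel transport with values in a group
extends to all homotopy classes of paths. -/
theorem exists_transport_extension {X : Type*} [TopologicalSpace X] {G : Type*} [Group G]
    {ι : Type*} {U : ι → Set X} (hU : ∀ i, IsOpen (U i)) (hcov : ∀ x, ∃ i, x ∈ U i)
    (h : ι → X → G)
    (hloc : ∀ i j x, x ∈ U i → x ∈ U j →
      ∀ᶠ y in 𝓝 x, (h j y)⁻¹ * h i y = (h j x)⁻¹ * h i x) :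
    ∃ Φ : ∀ x y : X, Path.Homotopic.Quotient x y → G,
      (∀ x y z p q, Φ x z (Path.Homotopic.Quotient.trans p q) = Φ y z q * Φ x y p) ∧
      ∀ i x y (γ : Path x y), range γ ⊆ U i →
        Φ x y (Path.Homotopic.Quotient.mk γ) = h i y * (h i x)⁻¹ := by
  classical
  let _ : TopologicalSpace G := ⊥
  have : DiscreteTopology G := ⟨rfl⟩
  choose idx hidx using hcov
  let Z : FiberBundleCore ι X G :=
    { baseSet := U
      isOpen_baseSet := hU
      indexAt := idx
      mem_baseSet_at := hidx
      coordChange := fun i j y g => (h j y)⁻¹ * h i y * g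
      coordChange_self := by intros; simp
      continuousOn_coordChange := by
        rintro i j ⟨x, g⟩ ⟨⟨hi, hj⟩, -⟩
        refine ContinuousAt.continuousWithinAt ?_
        have h1 : ∀ᶠ p : X × G in 𝓝 (x, g),
            (h j p.1)⁻¹ * h i p.1 * p.2 = (h j x)⁻¹ * h i x * p.2 := by
          filter_upwards [continuousAt_fst.eventually (hloc i j x hi hj)] with p hp
          rw [hp]
        refine ContinuousAt.congr ?_ (EventuallyEq.symm h1)
        exact ((continuous_of_discreteTopology (f := fun g : G => (h j x)⁻¹ * h i x * g)).comp
          continuous_snd).continuousAt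
      coordChange_comp := by intros; simp [mul_assoc] }
  have cov : IsCoveringMap (Bundle.TotalSpace.proj : Bundle.TotalSpace G Z.Fiber → X) :=
    FiberBundle.isCoveringMap (F := G) (E := Z.Fiber)
  let co : Bundle.TotalSpace G Z.Fiber → G := fun z => h (idx z.1) z.1 * (show G from z.2)
  let pt : ∀ y : X, G → Bundle.TotalSpace G Z.Fiber := fun y e => ⟨y, (show G from (h (idx y) y)⁻¹ * e)⟩
  have hco : ∀ y e, co (pt y e) = e := fun y e => mul_inv_cancel_left _ _
  have hpt : ∀ z, pt z.1 (co z) = z := fun z => by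
    rcases z with ⟨y, g⟩
    exact congrArg (Bundle.TotalSpace.mk y)
      (inv_mul_cancel_left (h (idx y) y) (show G from g))
  have small : ∀ i x y (γ : Path x y), range γ ⊆ U i →
      ∀ e, co (cov.monodromy (Path.Homotopic.Quotient.mk γ) e).1 =
        h i y * (h i x)⁻¹ * co e.1 := by
    intro i x y γ hγ e
    let lift : unitInterval → Bundle.TotalSpace G Z.Fiber :=
      fun s => pt (γ s) (h i (γ s) * (h i x)⁻¹ * co e.1)
    have hlift : Continuous lift := by
      have h1 : lift = fun s => (Z.localTriv i).toOpenPartialHomeomorph.symm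
          (γ s, (h i x)⁻¹ * co e.1) := by
        funext s
        rw [FiberBundleCore.localTriv_symm_apply]
        simp only [lift, pt, Z, mul_assoc]
      rw [h1]
      refine ((Z.localTriv i).toOpenPartialHomeomorph.continuousOn_symm).comp_continuous
        (by fun_prop) fun s => ?_
      rw [(Z.localTriv i).mem_target]
      exact hγ ⟨s, rfl⟩
    have he : e.1.1 = x := e.2
    have hs : lift 0 = e.1 := by
      simp only [lift, γ.source, mul_inv_cancel, one_mul]
      conv_rhs => rw [← hpt e.1]
      rw [he]
    have hl : lift 1 ∈ Bundle.TotalSpace.proj ⁻¹' {y} := γ.target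
    have hm := cov.monodromy_eq_of_map_eq (γ := Path.Homotopic.Quotient.mk γ) (ex := e)
      (ey := ⟨lift 1, hl⟩)
      (Path.Homotopic.Quotient.mk
        (⟨⟨lift, hlift⟩, hs, rfl⟩ : Path e.1 (lift 1))) 
      (congrArg Path.Homotopic.Quotient.mk
        (show Path.map _ cov.continuous = γ.cast e.2 hl from Path.ext rfl))
    rw [hm]
    change co (lift 1) = _
    rw [show lift 1 = pt (γ 1) (h i (γ 1) * (h i x)⁻¹ * co e.1) from rfl, hco, γ.target]
  let Φ : ∀ x y : X, Path.Homotopic.Quotient x y → G :=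
    fun x y q => co (cov.monodromy q ⟨pt x 1, rfl⟩).1
  have all : ∀ x y (q : Path.Homotopic.Quotient x y) e,
      co (cov.monodromy q e).1 = Φ x y q * co e.1 := by
    intro x y q
    obtain ⟨γ, rfl⟩ := Path.Homotopic.Quotient.mk_surjective q
    suffices hQ : ∃ g, ∀ e, co (cov.monodromy (Path.Homotopic.Quotient.mk γ) e).1 = g * co e.1 by
      obtain ⟨g, hg⟩ := hQ
      intro e
      simp only [Φ]
      rw [hg, hg, hco, mul_one]
    refine Path.induction_openCover (S := univ) (U := U)
      (Q := fun x y q => ∃ g, ∀ e, co (cov.monodromy q e).1 = g * co e.1) hU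
      (fun z _ => mem_iUnion.2 ⟨_, hidx z⟩) ?_ ?_ γ (subset_univ _)
    · intro x y γ i _ hi
      exact ⟨_, small i x y γ hi⟩
    · rintro x y z p q - - - ⟨g, hg⟩ ⟨k, hk⟩
      refine ⟨k * g, fun e => ?_⟩
      rw [cov.monodromy_trans_apply, hk, hg, mul_assoc]
  refine ⟨Φ, fun x y z p q => ?_, fun i x y γ hγ => ?_⟩
  · change co _ = _
    rw [cov.monodromy_trans_apply, all, all, hco, mul_one]
  · change co _ = _
    rw [small i x y γ hγ, hco, mul_one]

theorem Path.mk_eq_of_range_subset_simplyConnected {X : Type*} [TopologicalSpace X] {V : Set X}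
    [SimplyConnectedSpace V] {x y : X} (γ δ : Path x y) (hγ : range γ ⊆ V) (hδ : range δ ⊆ V) :
    Path.Homotopic.Quotient.mk γ = Path.Homotopic.Quotient.mk δ := by
  have hx : x ∈ V := hγ ⟨0, γ.source⟩
  have hy : y ∈ V := hγ ⟨1, γ.target⟩
  let γ' : Path (⟨x, hx⟩ : V) ⟨y, hy⟩ :=
    ⟨⟨fun t => ⟨γ t, hγ ⟨t, rfl⟩⟩, by fun_prop⟩, Subtype.ext γ.source, Subtype.ext γ.target⟩
  let δ' : Path (⟨x, hx⟩ : V) ⟨y, hy⟩ :=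
    ⟨⟨fun t => ⟨δ t, hδ ⟨t, rfl⟩⟩, by fun_prop⟩, Subtype.ext δ.source, Subtype.ext δ.target⟩
  exact Path.Homotopic.Quotient.eq.2
    ((SimplyConnectedSpace.paths_homotopic γ' δ').map ⟨Subtype.val, continuous_subtype_val⟩)

theorem Path.range_trans_subset {X : Type*} [TopologicalSpace X] {x y z : X} {γ : Path x y}
    {δ : Path y z} {V : Set X} (hγ : range γ ⊆ V) (hδ : range δ ⊆ V) : range (γ.trans δ) ⊆ V := by
  rw [Path.trans_range]
  exact union_subset hγ hδ

theorem JoinedIn.exists_path {X : Type*} [TopologicalSpace X] {x y : X} {V : Set X}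
    (h : JoinedIn V x y) : ∃ γ : Path x y, range γ ⊆ V :=
  ⟨h.somePath, by rintro _ ⟨t, rfl⟩; exact h.somePath_mem t⟩

/-- A group valued function on path classes that is multiplicative on each member of a cover by
simply connected open sets agrees there with a globally multiplicative one. -/
theorem exists_extension_of_local_multiplicative {X : Type*} [TopologicalSpace X]
    [LocallyPathConnectedSpace X] {G : Type*} [Group G]
    {ι : Type*} {U : ι → Set X} (hU : ∀ i, IsOpen (U i)) (hcov : ∀ x, ∃ i, x ∈ U i)
    [hsc : ∀ i, SimplyConnectedSpace (U i)]
    (ψ : ∀ x y : X, Path.Homotopic.Quotient x y → G)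
    (hψ : ∀ i x y z (γ : Path x y) (δ : Path y z), range γ ⊆ U i → range δ ⊆ U i →
      ψ x z (Path.Homotopic.Quotient.mk (γ.trans δ)) =
        ψ y z (Path.Homotopic.Quotient.mk δ) * ψ x y (Path.Homotopic.Quotient.mk γ)) :
    ∃ Φ : ∀ x y : X, Path.Homotopic.Quotient x y → G,
      (∀ x y z p q, Φ x z (Path.Homotopic.Quotient.trans p q) = Φ y z q * Φ x y p) ∧
      ∀ i x y (γ : Path x y), range γ ⊆ U i →
        Φ x y (Path.Homotopic.Quotient.mk γ) = ψ x y (Path.Homotopic.Quotient.mk γ) := by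
  classical
  have hpc : ∀ i, IsPathConnected (U i) := fun i => isPathConnected_iff_pathConnectedSpace.2 inferInstance
  choose b hb using fun i => (hpc i).nonempty
  have hp : ∀ i x, x ∈ U i → ∃ γ : Path (b i) x, range γ ⊆ U i :=
    fun i x hx => ((hpc i).joinedIn _ (hb i) _ hx).exists_path
  let h : ι → X → G := fun i x =>
    if hx : x ∈ U i then ψ (b i) x (Path.Homotopic.Quotient.mk (hp i x hx).choose) else 1
  have hstep : ∀ i x y (γ : Path x y), range γ ⊆ U i →
      h i y = ψ x y (Path.Homotopic.Quotient.mk γ) * h i x := by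
    intro i x y γ hγ
    have hx : x ∈ U i := hγ ⟨0, γ.source⟩
    have hy : y ∈ U i := hγ ⟨1, γ.target⟩
    simp only [h, dif_pos hx, dif_pos hy]
    rw [← hψ i _ _ _ _ _ (hp i x hx).choose_spec hγ]
    congr 1
    exact Path.mk_eq_of_range_subset_simplyConnected _ _ (hp i y hy).choose_spec
      (Path.range_trans_subset (hp i x hx).choose_spec hγ)
  obtain ⟨Φ, h1, h2⟩ := exists_transport_extension hU hcov h (by
    intro i j x hi hj
    obtain ⟨W, ⟨hW, hWc⟩, hWU⟩ := (LocallyPathConnectedSpace.path_connected_basis x).mem_iff.1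
      (inter_mem ((hU i).mem_nhds hi) ((hU j).mem_nhds hj))
    filter_upwards [hW] with y hy
    obtain ⟨γ, hγ⟩ := (hWc.joinedIn x (mem_of_mem_nhds hW) y hy).exists_path
    rw [hstep i x y γ (hγ.trans (hWU.trans inter_subset_left)),
      hstep j x y γ (hγ.trans (hWU.trans inter_subset_right))]
    group)
  refine ⟨Φ, h1, fun i x y γ hγ => ?_⟩
  rw [h2 i x y γ hγ, hstep i x y γ hγ, mul_inv_cancel_right]

section ConjLoop

open Path

variable {X Y : Type*} [TopologicalSpace X] [TopologicalSpace Y] {y₀ : Y}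

/-- The loop at `y₀` obtained from the image of a path class by closing it up along fixed
connecting paths. -/
noncomputable def conjLoop (E : ∀ y : Y, Path y₀ y) {u v : Y} (q : Homotopic.Quotient u v) : FundamentalGroup Y y₀ :=
  ((Homotopic.Quotient.mk (E u)).trans q).trans (Homotopic.Quotient.mk (E v)).symm

theorem conjLoop_trans (E : ∀ y : Y, Path y₀ y) {u v w : Y} (p : Homotopic.Quotient u v) (q : Homotopic.Quotient v w) :
    conjLoop E (p.trans q) = conjLoop E q * conjLoop E p := by
  rw [FundamentalGroup.mul_def]
  simp only [conjLoop, Homotopic.Quotient.trans_assoc]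
  rw [← Homotopic.Quotient.trans_assoc (Homotopic.Quotient.mk (E v)).symm, Homotopic.Quotient.symm_trans, Homotopic.Quotient.refl_trans]

theorem conjLoop_eq_one (E : ∀ y : Y, Path y₀ y) {u v : Y} {p : Path u v}
    (h : Homotopic.Quotient.mk ((E u).trans p) = Homotopic.Quotient.mk (E v)) : conjLoop E (Homotopic.Quotient.mk p) = 1 := by
  rw [conjLoop, ← Homotopic.Quotient.mk_trans, h, Homotopic.Quotient.trans_symm]
  rfl

theorem conjLoop_of_const (E : ∀ y : Y, Path y₀ y) {u v : Y} (p : Path u v) (c : Y)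
    (h : ∀ t, p t = c) : conjLoop E (Homotopic.Quotient.mk p) = 1 := by
  obtain rfl : u = c := p.source.symm.trans (h 0)
  obtain rfl : v = u := p.target.symm.trans (h 1)
  obtain rfl : p = Path.refl v := Path.ext (funext h)
  refine conjLoop_eq_one E ?_
  rw [Homotopic.Quotient.mk_trans, Homotopic.Quotient.mk_refl, Homotopic.Quotient.trans_refl]

theorem conjLoop_of_loop {E : ∀ y : Y, Path y₀ y} (hE : E y₀ = Path.refl y₀)
    (p : Path y₀ y₀) {u v : Y} (p' : Path u v) (h : ∀ t, p' t = p t) :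
    conjLoop E (Homotopic.Quotient.mk p') = (Homotopic.Quotient.mk p : Homotopic.Quotient y₀ y₀) := by
  obtain rfl : u = y₀ := p'.source.symm.trans ((h 0).trans p.source)
  obtain rfl : v = u := p'.target.symm.trans ((h 1).trans p.target)
  obtain rfl : p' = p := Path.ext (funext h)
  rw [conjLoop, hE, Homotopic.Quotient.mk_refl, Homotopic.Quotient.refl_trans]
  change Homotopic.Quotient.trans _ (Homotopic.Quotient.symm (Homotopic.Quotient.mk (Path.refl v))) = _
  rw [← Homotopic.Quotient.mk_symm, Path.refl_symm, Homotopic.Quotient.mk_refl, Homotopic.Quotient.trans_refl]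

end ConjLoop

section InclusionHom

open Path

variable {X : Type*} {K K' : Set X} [TopologicalSpace X]

/-- Inclusion of a subset, on fundamental groups. -/
noncomputable def inclusionHom (K : Set X) {a : X} (ha : a ∈ K) :
    FundamentalGroup K ⟨a, ha⟩ →* FundamentalGroup X a :=
  FundamentalGroup.map ⟨Subtype.val, continuous_subtype_val⟩ ⟨a, ha⟩

theorem inclusionHom_mk {a : X} (ha : a ∈ K) (γ : Path (⟨a, ha⟩ : K) ⟨a, ha⟩) :
    inclusionHom K ha (Homotopic.Quotient.mk γ) = Homotopic.Quotient.mk (γ.map continuous_subtype_val) := rfl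

theorem mk_mem_range_inclusionHom {a : X} (ha : a ∈ K) (γ : Path a a) (hγ : range γ ⊆ K) :
    (Homotopic.Quotient.mk γ : FundamentalGroup X a) ∈ (inclusionHom K ha).range :=
  ⟨Homotopic.Quotient.mk (⟨⟨fun t => ⟨γ t, hγ ⟨t, rfl⟩⟩, by fun_prop⟩, Subtype.ext γ.source,
    Subtype.ext γ.target⟩ : Path (⟨a, ha⟩ : K) ⟨a, ha⟩), rfl⟩

theorem range_inclusionHom_mono {a : X} (ha : a ∈ K) (hKK' : K ⊆ K') :
    (inclusionHom K ha).range ≤ (inclusionHom K' (hKK' ha)).range := by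
  rintro _ ⟨p, rfl⟩
  obtain ⟨γ, rfl⟩ := Homotopic.Quotient.mk_surjective p
  exact mk_mem_range_inclusionHom _ _ (by rintro _ ⟨t, rfl⟩; exact hKK' (γ t).2)

end InclusionHom

namespace ArcClosed

open Path

variable {X : Type} {K K' V : Set X} [MetricSpace X] [PathConnectedSpace X]
  [LocallyPathConnectedSpace X]

/-- The retraction of the space onto an arc closed subset. -/
noncomputable def retraction (hK : ArcClosed K) : C(X, K) :=
  ⟨fun x => ⟨gate K x, hK.gate_mem x⟩, hK.continuous_gate.subtype_mk _⟩

theorem retraction_coe (hK : ArcClosed K) (z : K) : hK.retraction z = z :=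
  Subtype.ext (hK.gate_eq_self z.2)

theorem mk_eq_of_map_eq (hK : ArcClosed K) {x y : K} (γ δ : Path x y)
    (h : Homotopic.Quotient.mk (γ.map continuous_subtype_val) = Homotopic.Quotient.mk (δ.map continuous_subtype_val)) :
    Homotopic.Quotient.mk γ = Homotopic.Quotient.mk δ := by
  have h1 := ((Homotopic.Quotient.eq.1 h).map hK.retraction).pathCast
    (hK.retraction_coe x).symm (hK.retraction_coe y).symm
  have h2 : ∀ p : Path x y, ((p.map continuous_subtype_val).map hK.retraction.continuous).cast
      (hK.retraction_coe x).symm (hK.retraction_coe y).symm = p :=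
    fun p => Path.ext (funext fun t => hK.retraction_coe (p t))
  rw [h2, h2] at h1
  exact Homotopic.Quotient.eq.2 h1

theorem mk_eq_of_simplyConnected (hK : ArcClosed K) [SimplyConnectedSpace V] {x y : K}
    (γ δ : Path x y) (hγ : ∀ t, (γ t : X) ∈ V) (hδ : ∀ t, (δ t : X) ∈ V) :
    Homotopic.Quotient.mk γ = Homotopic.Quotient.mk δ :=
  hK.mk_eq_of_map_eq γ δ (Path.mk_eq_of_range_subset_simplyConnected (V := V) _ _
    (by rintro _ ⟨t, rfl⟩; exact hγ t) (by rintro _ ⟨t, rfl⟩; exact hδ t))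

theorem exists_connecting_paths (hK : ArcClosed K) (hV : IsPathConnected V) {a : X} (ha : a ∈ K)
    (haV : a ∈ V) : ∃ E : ∀ z : K, Path (⟨a, ha⟩ : K) z, E ⟨a, ha⟩ = Path.refl _ ∧
      ∀ z : K, (z : X) ∈ V → ∀ t, (E z t : X) ∈ V := by
  classical
  have h1 : ∀ z : K, ∃ γ : Path (⟨a, ha⟩ : K) z, (z : X) ∈ V → ∀ t, (γ t : X) ∈ V := by
    intro z
    have lift : ∀ S ⊆ K, JoinedIn S a z → ∃ γ : Path (⟨a, ha⟩ : K) z, ∀ t, (γ t : X) ∈ S := by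
      intro S hS h
      exact ⟨⟨⟨fun t => ⟨h.somePath t, hS (h.somePath_mem t)⟩, by fun_prop⟩,
        Subtype.ext h.somePath.source, Subtype.ext h.somePath.target⟩, h.somePath_mem⟩
    by_cases hz : (z : X) ∈ V
    · obtain ⟨γ, hγ⟩ := lift _ inter_subset_right ((hK.isPathConnected_inter hV
        ⟨a, haV, ha⟩).joinedIn a ⟨haV, ha⟩ z ⟨hz, z.2⟩)
      exact ⟨γ, fun _ t => (hγ t).1⟩
    · obtain ⟨γ, -⟩ := lift K Subset.rfl (hK.isPathConnected.joinedIn a ha z z.2)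
      exact ⟨γ, fun h => absurd h hz⟩
  choose E hE using h1
  refine ⟨fun z => if h : z = ⟨a, ha⟩ then (Path.refl _).cast rfl h else E z, by simp, ?_⟩
  intro z hz t
  by_cases h : z = ⟨a, ha⟩
  · subst h
    simpa using haV
  · simpa only [dif_neg h] using hE z hz t

theorem inclusionHom_injective (hK : ArcClosed K) {a : X} (ha : a ∈ K) :
    Function.Injective (inclusionHom K ha) := by
  intro p q h
  obtain ⟨γ, rfl⟩ := Homotopic.Quotient.mk_surjective p
  obtain ⟨δ, rfl⟩ := Homotopic.Quotient.mk_surjective q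
  exact hK.mk_eq_of_map_eq γ δ h

end ArcClosed

namespace ArcClosed

open Path

theorem conjLoop_map_trans {X Y : Type*} [TopologicalSpace X] [TopologicalSpace Y] {y₀ : Y}
    (f : C(X, Y)) (E : ∀ y : Y, Path y₀ y) {x y z : X} (p : Homotopic.Quotient x y)
    (q : Homotopic.Quotient y z) :
    conjLoop E ((p.trans q).map f) = conjLoop E (q.map f) * conjLoop E (p.map f) := by
  rw [← conjLoop_trans]
  congr 1
  obtain ⟨γ, rfl⟩ := Homotopic.Quotient.mk_surjective p
  obtain ⟨δ, rfl⟩ := Homotopic.Quotient.mk_surjective q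
  rw [← Homotopic.Quotient.mk_trans, ← Homotopic.Quotient.mk_map, ← Homotopic.Quotient.mk_map,
    ← Homotopic.Quotient.mk_map, ← Homotopic.Quotient.mk_trans, Path.map_trans]

theorem _root_.LocSimplyConnected.exists_cover {X : Type} [MetricSpace X] {V : Set X} {a : X}
    (hX : LocSimplyConnected X) [SimplyConnectedSpace V] (hV : IsOpen V)
    (haV : a ∈ V) (x : X) :
    ∃ U, (IsOpen U ∧ SimplyConnectedSpace U ∧ (U = V ∨ a ∉ U)) ∧ x ∈ U := by
  by_cases hx : x = a
  · subst hx
    exact ⟨V, ⟨hV, inferInstance, Or.inl rfl⟩, haV⟩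
  · obtain ⟨U, hU, hUa, hUo, hUs⟩ := hX x {a}ᶜ (isOpen_compl_singleton.mem_nhds hx)
    exact ⟨U, ⟨hUo, hUs, Or.inr fun h => hUa h rfl⟩, mem_of_mem_nhds hU⟩

variable {X : Type} [MetricSpace X] [PathConnectedSpace X] [LocallyPathConnectedSpace X]
  {A B V : Set X} {a : X}

theorem disjoint_or_disjoint_of_notMem (hA : ArcClosed A) (hB : ArcClosed B) (hab : A ∩ B = {a})
    {U : Set X} (hU : IsPathConnected U) (ha : a ∉ U) : Disjoint U A ∨ Disjoint U B := by
  by_contra! h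
  rw [not_disjoint_iff, not_disjoint_iff] at h
  obtain ⟨⟨x, hxU, hxA⟩, ⟨y, hyU, hyB⟩⟩ := h
  apply ha
  rw [← hA.gate_eq_of_inter_eq_singleton hB hab hxA]
  exact hB.gate_mem_of_isPathConnected hU hxU ⟨y, hyU, hyB⟩

theorem conjLoop_retraction_of_subset_simplyConnected (hA : ArcClosed A) [SimplyConnectedSpace V]
    (hV : IsPathConnected V) (ha : a ∈ A) (haV : a ∈ V) {E : ∀ z : A, Path (⟨a, ha⟩ : A) z}
    (hE : ∀ z : A, (z : X) ∈ V → ∀ t, (E z t : X) ∈ V) {x y : X} (γ : Path x y)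
    (hγ : range γ ⊆ V) :
    conjLoop E ((Homotopic.Quotient.mk γ).map hA.retraction) = 1 := by
  have hr : ∀ z ∈ V, (hA.retraction z : X) ∈ V := fun z hz =>
    hA.gate_mem_of_isPathConnected hV hz ⟨a, haV, ha⟩
  refine conjLoop_eq_one E (hA.mk_eq_of_simplyConnected (V := V) _ _ ?_ ?_)
  · intro t
    have h1 : range ((E (hA.retraction x)).trans (γ.map hA.retraction.continuous)) ⊆
        Subtype.val ⁻¹' V := by
      refine Path.range_trans_subset ?_ ?_
      · rintro _ ⟨t, rfl⟩
        exact hE _ (hr _ (hγ ⟨0, γ.source⟩)) t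
      · rintro _ ⟨t, rfl⟩
        exact hr _ (hγ ⟨t, rfl⟩)
    exact h1 ⟨t, rfl⟩
  · exact hE _ (hr _ (hγ ⟨1, γ.target⟩))

theorem conjLoop_retraction_of_gate_eq (hA : ArcClosed A) (ha : a ∈ A)
    (E : ∀ z : A, Path (⟨a, ha⟩ : A) z) {x y : X} (γ : Path x y)
    (hγ : ∀ z ∈ range γ, gate A z = gate A x) :
    conjLoop E ((Homotopic.Quotient.mk γ).map hA.retraction) = 1 :=
  conjLoop_of_const E (γ.map hA.retraction.continuous) (hA.retraction x)
    fun t => Subtype.ext (hγ _ ⟨t, rfl⟩)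

theorem conjLoop_retraction_map_coe (hA : ArcClosed A) (ha : a ∈ A)
    {E : ∀ z : A, Path (⟨a, ha⟩ : A) z} (hE : E ⟨a, ha⟩ = Path.refl _)
    (γ : Path (⟨a, ha⟩ : A) ⟨a, ha⟩) :
    conjLoop E ((Homotopic.Quotient.mk (γ.map continuous_subtype_val)).map hA.retraction) =
      (Homotopic.Quotient.mk γ : FundamentalGroup A ⟨a, ha⟩) :=
  conjLoop_of_loop hE γ ((γ.map continuous_subtype_val).map hA.retraction.continuous)
    fun t => hA.retraction_coe (γ t)

theorem exists_admissible_path (hA : ArcClosed A) (hB : ArcClosed B) (hab : A ∩ B = {a})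
    (hV : IsPathConnected V) (haV : a ∈ V) {x : X} (hx : x ∈ A ∪ B) :
    ∃ e : Path a x, (x ∈ A → range e ⊆ A) ∧ (x ∈ B → range e ⊆ B) ∧ (x ∈ V → range e ⊆ V) := by
  have haAB : a ∈ A ∩ B := hab ▸ rfl
  by_cases hxa : x = a
  · subst hxa
    refine ⟨Path.refl x, ?_⟩
    rw [Path.refl_range]
    simp only [singleton_subset_iff, imp_self, and_self]
  have hnot : ¬ (x ∈ A ∧ x ∈ B) := fun h => hxa (hab ▸ h : x ∈ ({a} : Set X))
  rcases hx with hx | hx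
  · obtain ⟨E, -, hE⟩ := hA.exists_connecting_paths hV haAB.1 haV
    refine ⟨(E ⟨x, hx⟩).map continuous_subtype_val, ?_, fun h => absurd ⟨hx, h⟩ hnot, ?_⟩
    · rintro - _ ⟨t, rfl⟩
      exact (E ⟨x, hx⟩ t).2
    · rintro hxV _ ⟨t, rfl⟩
      exact hE ⟨x, hx⟩ hxV t
  · obtain ⟨E, -, hE⟩ := hB.exists_connecting_paths hV haAB.2 haV
    refine ⟨(E ⟨x, hx⟩).map continuous_subtype_val, fun h => absurd ⟨h, hx⟩ hnot, ?_, ?_⟩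
    · rintro - _ ⟨t, rfl⟩
      exact (E ⟨x, hx⟩ t).2
    · rintro hxV _ ⟨t, rfl⟩
      exact hE ⟨x, hx⟩ hxV t

theorem range_inclusionHom_union (hX : LocSimplyConnected X) (hA : ArcClosed A) (hB : ArcClosed B)
    (hab : A ∩ B = {a}) (haA : a ∈ A) (haB : a ∈ B) :
    (inclusionHom (A ∪ B) (Or.inl haA)).range =
      (inclusionHom A haA).range ⊔ (inclusionHom B haB).range := by
  obtain ⟨V, hVn, -, hVo, hVs⟩ := hX a Set.univ univ_mem
  have haV : a ∈ V := mem_of_mem_nhds hVn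
  have hVc : IsPathConnected V := isPathConnected_iff_pathConnectedSpace.2 inferInstance
  let ι := {U : Set X // IsOpen U ∧ SimplyConnectedSpace U ∧ (U = V ∨ a ∉ U)}
  let U : ι → Set X := Subtype.val
  have hU : ∀ i, IsOpen (U i) := fun i => i.2.1
  have hUs : ∀ i, SimplyConnectedSpace (U i) := fun i => i.2.2.1
  have hUc : ∀ i, IsPathConnected (U i) :=
    fun i => isPathConnected_iff_pathConnectedSpace.2 inferInstance
  have hcov : ∀ x, ∃ i, x ∈ U i := fun x => by
    obtain ⟨W, hW, hxW⟩ := hX.exists_cover hVo haV x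
    exact ⟨⟨W, hW⟩, hxW⟩
  set R := (inclusionHom A haA).range ⊔ (inclusionHom B haB).range with hR
  have hAR : (inclusionHom A haA).range ≤ R := le_sup_left
  have hBR : (inclusionHom B haB).range ≤ R := le_sup_right
  refine le_antisymm ?_ ?_
  · rintro _ ⟨p, rfl⟩
    obtain ⟨γ, rfl⟩ := Homotopic.Quotient.mk_surjective p
    let adm : ∀ x, Path a x → Prop := fun x e =>
      (x ∈ A → range e ⊆ A) ∧ (x ∈ B → range e ⊆ B) ∧ (x ∈ V → range e ⊆ V)
    have key := Path.induction_openCover (S := A ∪ B) (U := U)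
      (Q := fun x y q => ∀ (e : Path a x) (f : Path a y), adm x e → adm y f →
        ((((Homotopic.Quotient.mk e).trans q).trans (Homotopic.Quotient.mk f).symm :
          Homotopic.Quotient a a) : FundamentalGroup X a) ∈ R) hU
      (fun z _ => mem_iUnion.2 (hcov z)) ?_ ?_ (γ.map continuous_subtype_val)
      (by rintro _ ⟨t, rfl⟩; exact (γ t).2)
    · have hadm : adm a (Path.refl a) := by
        simp only [adm, Path.refl_range, singleton_subset_iff, imp_self, and_self]
      have h := key (Path.refl a) (Path.refl a) hadm hadm
      rw [← Homotopic.Quotient.mk_symm, Path.refl_symm, Homotopic.Quotient.mk_refl,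
        Homotopic.Quotient.refl_trans, Homotopic.Quotient.trans_refl] at h
      exact h
    · intro x y γ i hγ hi e f he hf
      rw [← Homotopic.Quotient.mk_symm, ← Homotopic.Quotient.mk_trans,
        ← Homotopic.Quotient.mk_trans]
      have hx : x ∈ range γ := ⟨0, γ.source⟩
      have hy : y ∈ range γ := ⟨1, γ.target⟩
      rcases i.2.2.2 with h | h
      · have hγV : range γ ⊆ V := h ▸ hi
        have : Homotopic.Quotient.mk ((e.trans γ).trans f.symm) =
            Homotopic.Quotient.mk (Path.refl a) :=
          Path.mk_eq_of_range_subset_simplyConnected (V := V) _ _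
            (Path.range_trans_subset (Path.range_trans_subset (he.2.2 (hγV hx)) hγV)
              (by rw [Path.symm_range]; exact hf.2.2 (hγV hy)))
            (by rw [Path.refl_range]; exact singleton_subset_iff.2 haV)
        rw [this]
        exact R.one_mem
      · rcases hA.disjoint_or_disjoint_of_notMem hB hab (hUc i) h with h | h
        · have hγB : range γ ⊆ B := fun z hz =>
            (hγ hz).resolve_left (disjoint_left.1 h (hi hz))
          exact hBR (mk_mem_range_inclusionHom haB _ (Path.range_trans_subset
            (Path.range_trans_subset (he.2.1 (hγB hx)) hγB)
              (by rw [Path.symm_range]; exact hf.2.1 (hγB hy))))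
        · have hγA : range γ ⊆ A := fun z hz =>
            (hγ hz).resolve_right (disjoint_left.1 h (hi hz))
          exact hAR (mk_mem_range_inclusionHom haA _ (Path.range_trans_subset
            (Path.range_trans_subset (he.1 (hγA hx)) hγA)
              (by rw [Path.symm_range]; exact hf.1 (hγA hy))))
    · intro x y z p q _ hy _ hp hq e f he hf
      obtain ⟨g, hg⟩ := hA.exists_admissible_path hB hab hVc haV hy
      have h := R.mul_mem (hq g f hg hf) (hp e g he hg)
      rw [FundamentalGroup.mul_def] at h
      simp only [Homotopic.Quotient.trans_assoc] at h ⊢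
      rwa [← Homotopic.Quotient.trans_assoc (Homotopic.Quotient.mk g).symm,
        Homotopic.Quotient.symm_trans, Homotopic.Quotient.refl_trans] at h
  · exact sup_le (range_inclusionHom_mono haA subset_union_left)
      (range_inclusionHom_mono haB subset_union_right)

/-- The fundamental group of the union of two arc closed sets meeting in one point. -/
theorem fundamentalGroup_union (hX : LocSimplyConnected X) (hA : ArcClosed A) (hB : ArcClosed B)
    (hab : A ∩ B = {a}) (haA : a ∈ A) (haB : a ∈ B) :
    Nonempty (FundamentalGroup ↥(A ∪ B) ⟨a, Or.inl haA⟩ ≃*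
      Monoid.Coprod (FundamentalGroup A ⟨a, haA⟩) (FundamentalGroup B ⟨a, haB⟩)) := by
  obtain ⟨V, hVn, -, hVo, hVs⟩ := hX a Set.univ univ_mem
  have haV : a ∈ V := mem_of_mem_nhds hVn
  have hVc : IsPathConnected V := isPathConnected_iff_pathConnectedSpace.2 inferInstance
  obtain ⟨EA, hEA, hEAV⟩ := hA.exists_connecting_paths hVc haA haV
  obtain ⟨EB, hEB, hEBV⟩ := hB.exists_connecting_paths hVc haB haV
  let ι := {U : Set X // IsOpen U ∧ SimplyConnectedSpace U ∧ (U = V ∨ a ∉ U)}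
  let U : ι → Set X := Subtype.val
  have hU : ∀ i, IsOpen (U i) := fun i => i.2.1
  have hUs : ∀ i, SimplyConnectedSpace (U i) := fun i => i.2.2.1
  have hUc : ∀ i, IsPathConnected (U i) :=
    fun i => isPathConnected_iff_pathConnectedSpace.2 inferInstance
  have hcov : ∀ x, ∃ i, x ∈ U i := fun x => by
    obtain ⟨W, hW, hxW⟩ := hX.exists_cover hVo haV x
    exact ⟨⟨W, hW⟩, hxW⟩
  let α : ∀ x y : X, Homotopic.Quotient x y → FundamentalGroup A ⟨a, haA⟩ :=
    fun x y q => conjLoop EA (q.map hA.retraction)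
  let β : ∀ x y : X, Homotopic.Quotient x y → FundamentalGroup B ⟨a, haB⟩ :=
    fun x y q => conjLoop EB (q.map hB.retraction)
  have hα : ∀ x y z p q, α x z (Homotopic.Quotient.trans p q) = α y z q * α x y p :=
    fun x y z p q => conjLoop_map_trans _ _ _ _
  have hβ : ∀ x y z p q, β x z (Homotopic.Quotient.trans p q) = β y z q * β x y p :=
    fun x y z p q => conjLoop_map_trans _ _ _ _
  have hsmall : ∀ i, (∀ x y (γ : Path x y), range γ ⊆ U i → α x y (.mk γ) = 1) ∨
      (∀ x y (γ : Path x y), range γ ⊆ U i → β x y (.mk γ) = 1) := by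
    intro i
    rcases i.2.2.2 with hi | hi
    · left
      intro x y γ hγ
      exact hA.conjLoop_retraction_of_subset_simplyConnected hVc haA haV hEAV γ (hi ▸ hγ)
    · rcases hA.disjoint_or_disjoint_of_notMem hB hab (hUc i) hi with h | h
      · left
        intro x y γ hγ
        exact hA.conjLoop_retraction_of_gate_eq haA EA γ fun z hz =>
          hA.gate_eq_of_disjoint (hUc i) h (hγ hz) (hγ ⟨0, γ.source⟩)
      · right
        intro x y γ hγ
        exact hB.conjLoop_retraction_of_gate_eq haB EB γ fun z hz =>
          hB.gate_eq_of_disjoint (hUc i) h (hγ hz) (hγ ⟨0, γ.source⟩)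
  obtain ⟨Φ, hΦ, hΦU⟩ := exists_extension_of_local_multiplicative hU hcov
    (fun x y q => (Monoid.Coprod.inl (α x y q) * Monoid.Coprod.inr (β x y q) :
      Monoid.Coprod (FundamentalGroup A ⟨a, haA⟩) (FundamentalGroup B ⟨a, haB⟩))) (by
    intro i x y z γ δ hγ hδ
    simp only [Homotopic.Quotient.mk_trans, hα, hβ]
    rcases hsmall i with h | h <;> rw [h _ _ _ hγ, h _ _ _ hδ] <;>
      simp only [map_mul, map_one, one_mul, mul_one])
  have hΦA : ∀ x y (γ : Path x y), range γ ⊆ A → Φ x y (.mk γ) = Monoid.Coprod.inl (α x y (.mk γ)) := by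
    intro x y γ hγ
    refine Path.induction_openCover (S := A) (U := U)
      (Q := fun x y q => Φ x y q = Monoid.Coprod.inl (α x y q)) hU
      (fun z _ => mem_iUnion.2 (hcov z)) ?_ ?_ γ hγ
    · intro x y γ i hγA hi
      have : β x y (.mk γ) = 1 := hB.conjLoop_retraction_of_gate_eq haB EB γ fun z hz => by
        rw [hA.gate_eq_of_inter_eq_singleton hB hab (hγA hz),
          hA.gate_eq_of_inter_eq_singleton hB hab (hγA ⟨0, γ.source⟩)]
      rw [hΦU i x y γ hi, this, map_one, mul_one]
    · intro x y z p q _ _ _ hp hq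
      rw [hΦ, hα, hp, hq, map_mul]
  have hΦB : ∀ x y (γ : Path x y), range γ ⊆ B → Φ x y (.mk γ) = Monoid.Coprod.inr (β x y (.mk γ)) := by
    intro x y γ hγ
    refine Path.induction_openCover (S := B) (U := U)
      (Q := fun x y q => Φ x y q = Monoid.Coprod.inr (β x y q)) hU
      (fun z _ => mem_iUnion.2 (hcov z)) ?_ ?_ γ hγ
    · intro x y γ i hγB hi
      have : α x y (.mk γ) = 1 := hA.conjLoop_retraction_of_gate_eq haA EA γ fun z hz => by
        rw [hB.gate_eq_of_inter_eq_singleton hA (inter_comm A B ▸ hab) (hγB hz),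
          hB.gate_eq_of_inter_eq_singleton hA (inter_comm A B ▸ hab) (hγB ⟨0, γ.source⟩)]
      rw [hΦU i x y γ hi, this, map_one, one_mul]
    · intro x y z p q _ _ _ hp hq
      rw [hΦ, hβ, hp, hq, map_mul]
  let Θ : Monoid.Coprod (FundamentalGroup A ⟨a, haA⟩) (FundamentalGroup B ⟨a, haB⟩) →*
      FundamentalGroup X a := Monoid.Coprod.lift (inclusionHom A haA) (inclusionHom B haB)
  let Φ₀ : FundamentalGroup X a →*
      Monoid.Coprod (FundamentalGroup A ⟨a, haA⟩) (FundamentalGroup B ⟨a, haB⟩) :=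
    MonoidHom.mk' (fun p => Φ a a p) fun p q => hΦ a a a q p
  have hleft : Φ₀.comp Θ = MonoidHom.id _ := by
    refine Monoid.Coprod.hom_ext (MonoidHom.ext fun p => ?_) (MonoidHom.ext fun p => ?_)
    · obtain ⟨γ, rfl⟩ := Homotopic.Quotient.mk_surjective p
      have h := hΦA a a (γ.map continuous_subtype_val) (by rintro _ ⟨t, rfl⟩; exact (γ t).2)
      rw [show α a a (.mk (γ.map continuous_subtype_val)) = _ from
        hA.conjLoop_retraction_map_coe haA hEA γ] at h
      exact h
    · obtain ⟨γ, rfl⟩ := Homotopic.Quotient.mk_surjective p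
      have h := hΦB a a (γ.map continuous_subtype_val) (by rintro _ ⟨t, rfl⟩; exact (γ t).2)
      rw [show β a a (.mk (γ.map continuous_subtype_val)) = _ from
        hB.conjLoop_retraction_map_coe haB hEB γ] at h
      exact h
  have hΘinj : Function.Injective Θ :=
    Function.LeftInverse.injective (g := Φ₀) fun g => DFunLike.congr_fun hleft g
  have hΘrange : Θ.range = (inclusionHom A haA).range ⊔ (inclusionHom B haB).range :=
    Monoid.Coprod.range_lift _ _
  have hrange : (inclusionHom (A ∪ B) (Or.inl haA)).range = Θ.range :=
    (range_inclusionHom_union hX hA hB hab haA haB).trans hΘrange.symm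
  exact ⟨((MonoidHom.ofInjective ((hA.union hB hab).inclusionHom_injective (Or.inl haA))).trans
    (MulEquiv.subgroupCongr hrange)).trans (MonoidHom.ofInjective hΘinj).symm⟩

end ArcClosed

section

variable {X : Type} [MetricSpace X]

theorem exists_uniform_pathConnected [CompactSpace X] [LocallyPathConnectedSpace X] {ε : ℝ}
    (hε : 0 < ε) : ∃ δ > 0, ∀ p q : X, dist p q < δ →
      ∃ W, IsPathConnected W ∧ p ∈ W ∧ q ∈ W ∧ W ⊆ ball p ε := by
  choose W hWn hWc hWb using fun z : X => exists_pathConnected_nhds_subset_ball z (half_pos hε)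
  obtain ⟨δ, hδ, h⟩ := lebesgue_number_lemma_of_metric (isCompact_univ (X := X))
    (c := fun z => interior (W z)) (fun z => isOpen_interior)
    (fun z _ => mem_iUnion.2 ⟨z, mem_interior_iff_mem_nhds.2 (hWn z)⟩)
  refine ⟨δ, hδ, fun p q hpq => ?_⟩
  obtain ⟨z, hz⟩ := h p (mem_univ p)
  have hp : p ∈ W z := interior_subset (hz (mem_ball_self hδ))
  have hq : q ∈ W z := interior_subset (hz (mem_ball'.2 hpq))
  refine ⟨W z, hWc z, hp, hq, fun w hw => ?_⟩
  have h1 := mem_ball.1 (hWb z hw)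
  have h2 := mem_ball'.1 (hWb z hp)
  exact mem_ball.2 (by linarith [dist_triangle w z p])

theorem LocSimplyConnected.exists_lebesgue [CompactSpace X] (hX : LocSimplyConnected X) :
    ∃ lam > 0, ∀ x : X, ∃ V : Set X, SimplyConnectedSpace ↥V ∧ ball x lam ⊆ V := by
  choose V hVn hV hVo hVs using fun x : X => hX x univ univ_mem
  obtain ⟨δ, hδ, h⟩ := lebesgue_number_lemma_of_metric (isCompact_univ (X := X)) (c := V) hVo
    (fun z _ => mem_iUnion.2 ⟨z, mem_of_mem_nhds (hVn z)⟩)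
  refine ⟨δ, hδ, fun x => ?_⟩
  obtain ⟨z, hz⟩ := h x (mem_univ x)
  exact ⟨V z, hVs z, hz⟩

/-- In a compact locally simply connected space uniformly close paths are homotopic. -/
theorem LocSimplyConnected.exists_mk_eq_of_dist_lt [CompactSpace X] [LocallyPathConnectedSpace X]
    (hX : LocSimplyConnected X) : ∃ ε > 0, ∀ (x y : X) (γ δ : Path x y),
      (∀ t, dist (γ t) (δ t) < ε) →
      Path.Homotopic.Quotient.mk γ = Path.Homotopic.Quotient.mk δ := by
  obtain ⟨lam, hlam, hV⟩ := hX.exists_lebesgue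
  have h4 : 0 < lam / 4 := by positivity
  obtain ⟨η, hη, hW⟩ := exists_uniform_pathConnected (X := X) h4
  refine ⟨min η (lam / 4), lt_min hη h4, fun x y γ δ hclose => ?_⟩
  have key := Path.induction_openCover (X := X × X) (ι := X)
    (U := fun z => ball z (lam / 4) ×ˢ ball z (lam / 4))
    (S := {p | dist p.1 p.2 < min η (lam / 4)})
    (Q := fun x y q => ∀ (c : Path x.1 x.2) (d : Path y.1 y.2), range c ⊆ ball x.1 (lam / 4) →
      range d ⊆ ball y.1 (lam / 4) →
      Path.Homotopic.Quotient.trans (q.map ⟨Prod.fst, continuous_fst⟩)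
        (Path.Homotopic.Quotient.mk d) =
      Path.Homotopic.Quotient.trans (Path.Homotopic.Quotient.mk c)
        (q.map ⟨Prod.snd, continuous_snd⟩))
    (fun z => isOpen_ball.prod isOpen_ball)
    (fun p hp => mem_iUnion.2 ⟨p.1, mem_ball_self h4,
      mem_ball'.2 (lt_of_lt_of_le hp (min_le_right _ _))⟩) ?_ ?_ (γ.prod δ)
    (by rintro _ ⟨t, rfl⟩; exact hclose t)
  · have h : (Path.Homotopic.Quotient.mk γ).trans (.mk (Path.refl y)) =
        (Path.Homotopic.Quotient.mk (Path.refl x)).trans (.mk δ) :=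
      key (Path.refl x) (Path.refl y) ?_ ?_
    · rw [Path.Homotopic.Quotient.mk_refl, Path.Homotopic.Quotient.mk_refl,
        Path.Homotopic.Quotient.trans_refl, Path.Homotopic.Quotient.refl_trans] at h
      exact h
    all_goals
      rw [Path.refl_range]
      exact singleton_subset_iff.2 (mem_ball_self h4)
  · intro x y γ z _ hγ c d hc hd
    obtain ⟨V, hVs, hVb⟩ := hV z
    have hsub : ∀ w ∈ ball z (lam / 4), ball w (lam / 4) ⊆ V := fun w hw v hv => hVb <| by
      have h1 := mem_ball.1 hw
      have h2 := mem_ball.1 hv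
      exact mem_ball.2 (by linarith [dist_triangle v w z])
    have hsub' : ball z (lam / 4) ⊆ V := hsub z (mem_ball_self h4)
    have h1 : range (γ.map continuous_fst) ⊆ V := by
      rintro _ ⟨t, rfl⟩
      exact hsub' (hγ ⟨t, rfl⟩).1
    have h2 : range (γ.map continuous_snd) ⊆ V := by
      rintro _ ⟨t, rfl⟩
      exact hsub' (hγ ⟨t, rfl⟩).2
    exact Path.mk_eq_of_range_subset_simplyConnected (V := V)
      ((γ.map continuous_fst).trans d) (c.trans (γ.map continuous_snd))
      (Path.range_trans_subset h1 (hd.trans (hsub _ (hγ ⟨1, γ.target⟩).1)))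
      (Path.range_trans_subset (hc.trans (hsub _ (hγ ⟨0, γ.source⟩).1)) h2)
  · intro x y z p q _ hy _ hp hq c d hc hd
    obtain ⟨W, hWc, h1, h2, hWb⟩ := hW y.1 y.2 (lt_of_lt_of_le hy (min_le_left _ _))
    obtain ⟨e, he⟩ := (hWc.joinedIn _ h1 _ h2).exists_path
    have hpe := hp c e hc (he.trans hWb)
    have hqd := hq e d (he.trans hWb) hd
    have hmap : ∀ f : C(X × X, X), (p.trans q).map f = (p.map f).trans (q.map f) := by
      intro f
      obtain ⟨γ, rfl⟩ := Path.Homotopic.Quotient.mk_surjective p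
      obtain ⟨δ, rfl⟩ := Path.Homotopic.Quotient.mk_surjective q
      rw [← Path.Homotopic.Quotient.mk_trans, ← Path.Homotopic.Quotient.mk_map,
        ← Path.Homotopic.Quotient.mk_map, ← Path.Homotopic.Quotient.mk_map,
        ← Path.Homotopic.Quotient.mk_trans, Path.map_trans]
    rw [hmap, hmap]
    refine (Path.Homotopic.Quotient.trans_assoc _ _ _).trans ?_
    refine (congrArg (Path.Homotopic.Quotient.trans _) hqd).trans ?_
    refine (Path.Homotopic.Quotient.trans_assoc _ _ _).symm.trans ?_
    refine (congrArg (fun r => Path.Homotopic.Quotient.trans r _) hpe).trans ?_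
    exact Path.Homotopic.Quotient.trans_assoc _ _ _

namespace ArcClosed

theorem closure_sUnion [PathConnectedSpace X] [LocallyPathConnectedSpace X] {c : Set (Set X)}
    (hc : ∀ K ∈ c, ArcClosed K) (hchain : IsChain (· ⊆ ·) c) (hne : c.Nonempty) :
    ArcClosed (closure (⋃₀ c)) := by
  refine ⟨isClosed_closure, ?_, fun {u v E} hE hu hv y hy => ?_⟩
  · obtain ⟨K, hK⟩ := hne
    exact ((hc K hK).nonempty.mono (subset_sUnion_of_mem hK)).closure
  by_contra hyK
  obtain ⟨A, B, hA, hB, -, hAB⟩ := hE.exists_split hy (fun h => hyK (h ▸ hu)) (fun h => hyK (h ▸ hv))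
  have huB : u ∉ B := fun h => hA.ne (hAB ▸ ⟨hA.left_mem, h⟩ : u ∈ ({y} : Set X))
  have hvA : v ∉ A := fun h => hB.ne.symm (hAB ▸ ⟨h, hB.right_mem⟩ : v ∈ ({y} : Set X))
  obtain ⟨N₁, N₂, hN₁, hN₂, hN⟩ := t2_separation_nhds hE.ne
  obtain ⟨W₁, ⟨hW₁, hW₁c⟩, hW₁s⟩ := (LocallyPathConnectedSpace.path_connected_basis u).mem_iff.1
    (inter_mem (hB.isClosed.isOpen_compl.mem_nhds huB) hN₁)
  obtain ⟨W₂, ⟨hW₂, hW₂c⟩, hW₂s⟩ := (LocallyPathConnectedSpace.path_connected_basis v).mem_iff.1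
    (inter_mem (hA.isClosed.isOpen_compl.mem_nhds hvA) hN₂)
  obtain ⟨u', hu'W, K₁, hK₁, hu'⟩ := mem_closure_iff_nhds.1 hu W₁ hW₁
  obtain ⟨v', hv'W, K₂, hK₂, hv'⟩ := mem_closure_iff_nhds.1 hv W₂ hW₂
  obtain ⟨K, hK, h1, h2⟩ : ∃ K ∈ c, u' ∈ K ∧ v' ∈ K := by
    rcases hchain.total hK₁ hK₂ with h | h
    · exact ⟨K₂, hK₂, h hu', hv'⟩
    · exact ⟨K₁, hK₁, hu', h hv'⟩
  have g1 : gate K y ∈ W₁ ∪ A := (hc K hK).gate_mem_of_isPathConnected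
    (hW₁c.union hA.isPathConnected ⟨u, mem_of_mem_nhds hW₁, hA.left_mem⟩) (Or.inr hA.right_mem)
    ⟨u', Or.inl hu'W, h1⟩
  have g2 : gate K y ∈ W₂ ∪ B := (hc K hK).gate_mem_of_isPathConnected
    (hW₂c.union hB.isPathConnected ⟨v, mem_of_mem_nhds hW₂, hB.right_mem⟩) (Or.inr hB.left_mem)
    ⟨v', Or.inl hv'W, h2⟩
  have hgy : gate K y = y := by
    rcases g1 with g1 | g1 <;> rcases g2 with g2 | g2
    · exact (disjoint_left.1 hN (hW₁s g1).2 (hW₂s g2).2).elim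
    · exact ((hW₁s g1).1 g2).elim
    · exact ((hW₂s g2).1 g1).elim
    · exact (hAB ▸ ⟨g1, g2⟩ : gate K y ∈ ({y} : Set X))
  exact hyK (subset_closure ⟨K, hK, hgy ▸ (hc K hK).gate_mem y⟩)

theorem exists_dist_gate_lt [CompactSpace X] [PathConnectedSpace X] [LocallyPathConnectedSpace X]
    {c : Set (Set X)} (hc : ∀ K ∈ c, ArcClosed K) (hchain : IsChain (· ⊆ ·) c) (hne : c.Nonempty)
    {ε : ℝ} (hε : 0 < ε) : ∃ K ∈ c, ∀ p ∈ closure (⋃₀ c), dist p (gate K p) < ε := by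
  obtain ⟨δ, hδ, hW⟩ := exists_uniform_pathConnected (X := X) hε
  obtain ⟨K, hK, hd⟩ : ∃ K ∈ c, ∀ p ∈ closure (⋃₀ c), ∃ k ∈ K, dist p k < δ := by
    refine IsCompact.induction_on (p := fun S => ∃ K ∈ c, ∀ p ∈ S, ∃ k ∈ K, dist p k < δ)
      isClosed_closure.isCompact ?_ ?_ ?_ ?_
    · obtain ⟨K, hK⟩ := hne
      exact ⟨K, hK, fun p hp => hp.elim⟩
    · rintro s t hst ⟨K, hK, h⟩
      exact ⟨K, hK, fun p hp => h p (hst hp)⟩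
    · rintro s t ⟨K₁, hK₁, h₁⟩ ⟨K₂, hK₂, h₂⟩
      rcases hchain.total hK₁ hK₂ with h | h
      · refine ⟨K₂, hK₂, fun p hp => hp.elim (fun hp => ?_) (h₂ p)⟩
        obtain ⟨k, hk, hd⟩ := h₁ p hp
        exact ⟨k, h hk, hd⟩
      · refine ⟨K₁, hK₁, fun p hp => hp.elim (h₁ p) fun hp => ?_⟩
        obtain ⟨k, hk, hd⟩ := h₂ p hp
        exact ⟨k, h hk, hd⟩
    · intro x hx
      obtain ⟨k, hkb, K, hK, hk⟩ := mem_closure_iff_nhds.1 hx _ (ball_mem_nhds x (half_pos hδ))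
      refine ⟨ball x (δ / 2), mem_nhdsWithin_of_mem_nhds (ball_mem_nhds x (half_pos hδ)), K, hK,
        fun p hp => ⟨k, hk, ?_⟩⟩
      have h1 := mem_ball.1 hp
      have h2 := mem_ball'.1 hkb
      linarith [dist_triangle p x k]
  refine ⟨K, hK, fun p hp => ?_⟩
  obtain ⟨k, hk, hpk⟩ := hd p hp
  obtain ⟨W, hWc, h1, h2, hWb⟩ := hW p k hpk
  exact mem_ball'.1 (hWb ((hc K hK).gate_mem_of_isPathConnected hWc h1 ⟨k, h2, hk⟩))

end ArcClosed

end

/-- Every loop in `T` is null-homotopic in the ambient space. -/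
def NullLoops {X : Type*} [TopologicalSpace X] (T : Set X) : Prop :=
  ∀ (a : X) (γ : Path a a), range γ ⊆ T →
    Path.Homotopic.Quotient.mk γ = Path.Homotopic.Quotient.refl a

/-- Every path in `K` with endpoints in `K'` is homotopic to a path in `K'`. -/
def PathsDeform {X : Type*} [TopologicalSpace X] (K K' : Set X) : Prop :=
  ∀ x ∈ K', ∀ y ∈ K', ∀ γ : Path x y, range γ ⊆ K → ∃ γ' : Path x y, range γ' ⊆ K' ∧
    Path.Homotopic.Quotient.mk γ = Path.Homotopic.Quotient.mk γ'

theorem NullLoops.of_subset_simplyConnected {X : Type*} [TopologicalSpace X] {T V : Set X}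
    [SimplyConnectedSpace V] (h : T ⊆ V) : NullLoops T := by
  intro a γ hγ
  rw [← Path.Homotopic.Quotient.mk_refl]
  refine Path.mk_eq_of_range_subset_simplyConnected (V := V) γ (Path.refl a) (hγ.trans h) ?_
  rw [Path.refl_range, singleton_subset_iff]
  exact h (hγ ⟨0, γ.source⟩)

theorem PathsDeform.trans {X : Type*} [TopologicalSpace X] {K₀ K₁ K₂ : Set X}
    (h₂ : PathsDeform K₂ K₁) (h₁ : PathsDeform K₁ K₀) (h : K₀ ⊆ K₁) : PathsDeform K₂ K₀ := by
  intro x hx y hy γ hγ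
  obtain ⟨γ', hγ', e⟩ := h₂ x (h hx) y (h hy) γ hγ
  obtain ⟨γ'', hγ'', heq⟩ := h₁ x hx y hy γ' hγ'
  exact ⟨γ'', hγ'', e.trans heq⟩

/-- Points of a compact set in a branch at `f 0` are in the branch at `f s` for all small `s`. -/
theorem eventually_subset_branch {X : Type} [MetricSpace X] [LocallyPathConnectedSpace X] {a x : X} {f : ℝ → X}
    (hf : Continuous f) (h0 : f 0 = a)
    {S : Set X} (hS : IsCompact S) (hSb : S ⊆ branch a x) :
    ∀ᶠ s in 𝓝 (0 : ℝ), S ⊆ branch (f s) x := by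
  refine IsCompact.induction_on (p := fun S => ∀ᶠ s in 𝓝 (0 : ℝ), S ⊆ branch (f s) x) hS
    (Eventually.of_forall fun _ => empty_subset _) (fun s t hst h => h.mono fun _ h => hst.trans h)
    (fun s t hs ht => by filter_upwards [hs, ht] with r h1 h2 using union_subset h1 h2)
    fun p hp => ?_
  obtain ⟨γ, hγ⟩ := JoinedIn.exists_path (hSb hp)
  have hpa : p ≠ a := fun h => notMem_branch a x (h ▸ hSb hp)
  obtain ⟨W, hW, hWc, hWb⟩ := exists_pathConnected_nhds_subset_ball p (half_pos (dist_pos.2 hpa))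
  refine ⟨W, mem_nhdsWithin_of_mem_nhds hW, ?_⟩
  have hcl : IsClosed (range γ ∪ closedBall p (dist p a / 2)) :=
    (isCompact_range γ.continuous).isClosed.union isClosed_closedBall
  have hna : f 0 ∈ (range γ ∪ closedBall p (dist p a / 2))ᶜ := by
    rw [h0]
    rintro (h | h)
    · exact hγ h rfl
    · have := mem_closedBall'.1 h
      linarith [dist_pos.2 hpa]
  filter_upwards [hf.continuousAt.preimage_mem_nhds (hcl.isOpen_compl.mem_nhds hna)] with s hs
  rw [mem_preimage, mem_compl_iff, mem_union, not_or] at hs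
  intro q hq
  have h1 : JoinedIn {f s}ᶜ x p := ⟨γ, fun t h => hs.1 (h ▸ ⟨t, rfl⟩)⟩
  have h2 : JoinedIn {f s}ᶜ p q := (hWc.joinedIn p (mem_of_mem_nhds hW) q hq).mono
    fun w hw h => hs.2 (h ▸ ball_subset_closedBall (hWb hw))
  exact h1.trans h2

theorem ArcClosed.insert_branch_inter {X : Type} [MetricSpace X] [PathConnectedSpace X] {K : Set X}
    (hK : ArcClosed K) (x : X) :
    K ∩ insert (gate K x) (branch (gate K x) x) = {gate K x} := by
  refine subset_antisymm ?_ (singleton_subset_iff.2 ⟨hK.gate_mem x, Or.inl rfl⟩)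
  rintro y ⟨hyK, rfl | hy⟩
  · rfl
  · have hx : x ∈ branch (gate K x) x :=
      mem_pathComponentIn_self (JoinedIn.source_mem hy)
    exact (notMem_branch _ x (hK.gate_mem_of_isPathConnected (isPathConnected_pathComponentIn
      (pathComponentIn_subset hx)) hx ⟨y, hy, hyK⟩)).elim

namespace ArcClosed

variable {X : Type} [MetricSpace X] [PathConnectedSpace X] [LocallyPathConnectedSpace X]

theorem pathsDeform_union (hX : LocSimplyConnected X) {K K' : Set X} {a : X} (hK : ArcClosed K)
    (hK' : ArcClosed K') (ha : K ∩ K' = {a}) (hn : NullLoops K') : PathsDeform (K ∪ K') K := by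
  intro x hx y hy γ hγ
  have haK : a ∈ K := (ha.symm ▸ rfl : a ∈ K ∩ K').1
  have haK' : a ∈ K' := (ha.symm ▸ rfl : a ∈ K ∩ K').2
  obtain ⟨e, he⟩ := (hK.isPathConnected.joinedIn a haK x hx).exists_path
  obtain ⟨f, hf⟩ := (hK.isPathConnected.joinedIn a haK y hy).exists_path
  have hl : range ((e.trans γ).trans f.symm) ⊆ K ∪ K' :=
    Path.range_trans_subset (Path.range_trans_subset (he.trans subset_union_left) hγ)
      (by rw [Path.symm_range]; exact hf.trans subset_union_left)
  have hbot : (inclusionHom K' haK').range = ⊥ := by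
    rw [eq_bot_iff]
    rintro _ ⟨p, rfl⟩
    obtain ⟨δ, rfl⟩ := Path.Homotopic.Quotient.mk_surjective p
    exact hn a (δ.map continuous_subtype_val) (by rintro _ ⟨t, rfl⟩; exact (δ t).2)
  have hm := mk_mem_range_inclusionHom (K := K ∪ K') (Or.inl haK) _ hl
  rw [range_inclusionHom_union hX hK hK' ha haK haK', hbot, sup_bot_eq] at hm
  obtain ⟨p, hp⟩ := hm
  obtain ⟨δ, rfl⟩ := Path.Homotopic.Quotient.mk_surjective p
  have hp' : Path.Homotopic.Quotient.mk (δ.map continuous_subtype_val) =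
    Path.Homotopic.Quotient.mk ((e.trans γ).trans f.symm) := hp
  refine ⟨(e.symm.trans (δ.map continuous_subtype_val)).trans f, Path.range_trans_subset
    (Path.range_trans_subset (by rwa [Path.symm_range]) ?_) hf, ?_⟩
  · rintro _ ⟨t, rfl⟩
    exact (δ t).2
  · rw [Path.Homotopic.Quotient.mk_trans, Path.Homotopic.Quotient.mk_trans, hp',
      Path.Homotopic.Quotient.mk_trans, Path.Homotopic.Quotient.mk_trans,
      Path.Homotopic.Quotient.mk_symm, Path.Homotopic.Quotient.mk_symm]
    simp [← Path.Homotopic.Quotient.trans_assoc (Path.Homotopic.Quotient.mk e).symm]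

theorem pathsDeform_closure_sUnion [CompactSpace X] (hX : LocSimplyConnected X) {K₀ : Set X}
    {c : Set (Set X)} (hc : ∀ K ∈ c, ArcClosed K) (hchain : IsChain (· ⊆ ·) c)
    (hne : c.Nonempty) (hsub : ∀ K ∈ c, K₀ ⊆ K) (hdef : ∀ K ∈ c, PathsDeform K K₀) :
    PathsDeform (closure (⋃₀ c)) K₀ := by
  obtain ⟨ε, hε, hclose⟩ := hX.exists_mk_eq_of_dist_lt
  obtain ⟨K, hK, hd⟩ := exists_dist_gate_lt hc hchain hne hε
  intro x hx y hy γ hγ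
  have gx : x = gate K x := ((hc K hK).gate_eq_self (hsub K hK hx)).symm
  have gy : y = gate K y := ((hc K hK).gate_eq_self (hsub K hK hy)).symm
  obtain ⟨γ', hγ', e⟩ := hdef K hK x hx y hy ((γ.map (hc K hK).continuous_gate).cast gx gy)
    (by rintro _ ⟨t, rfl⟩; exact (hc K hK).gate_mem _)
  exact ⟨γ', hγ', (hclose x y _ _ fun t => hd _ (hγ ⟨t, rfl⟩)).trans e⟩

/-- A proper arc-closed subset extends, at one point, by an arc-closed set which is a maximal cyclic
set or lies in a prescribed neighbourhood. -/
theorem exists_attached [CompactSpace X] {K L : Set X} (hK : ArcClosed K) (hL : ArcClosed L)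
    (hKL : K ⊆ L) (hne : K ≠ L) (V : X → Set X) (hV : ∀ x, V x ∈ 𝓝 x) :
    ∃ a K', ArcClosed K' ∧ K' ⊆ L ∧ K ∩ K' = {a} ∧ K'.Nontrivial ∧
      (MaximalCyclic K' ∨ K' ⊆ V a) := by
  obtain ⟨x, hxL, hxK⟩ := exists_of_ssubset (hKL.ssubset_of_ne hne)
  set a := gate K x with ha
  have haK : a ∈ K := hK.gate_mem x
  have hxa : x ≠ a := fun h => hxK (h ▸ haK)
  have hxb : x ∈ branch a x := mem_pathComponentIn_self hxa
  set D := insert a (branch a x) ∩ L with hD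
  have hDa : a ∈ D := ⟨Or.inl rfl, hKL haK⟩
  have hDx : x ∈ D := ⟨Or.inr hxb, hxL⟩
  have hDA : ArcClosed D := (arcClosed_insert_branch a x).inter hL ⟨a, hDa⟩
  have hKD : K ∩ D ⊆ {a} := fun y hy => hK.insert_branch_inter x ▸ ⟨hy.1, hy.2.1⟩
  obtain ⟨E, hED, hE⟩ := hDA.isPathConnected.exists_isArc hDa hDx hxa.symm
  obtain ⟨f, hf, hi, h0, h1, him⟩ := hE.exists_continuous_param
  have hfD : ∀ s ∈ Icc (0 : ℝ) 1, f s ∈ D := fun s hs => hED (him ▸ mem_image_of_mem f hs)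
  by_cases hcase : ∃ δ₀ : ℝ, 0 < δ₀ ∧ ∀ s ∈ Ioo 0 δ₀, JoinedIn {f s}ᶜ (f 0) (f 1)
  · obtain ⟨δ₀, hδ₀, hns⟩ := hcase
    obtain ⟨C, hC, hC0, hCn⟩ := exists_cyclic_of_not_separated hf hi hδ₀ hns
    obtain ⟨T, hT, hCT⟩ := hC.exists_maximalCyclic (hCn.mono inter_subset_left)
    have hTD : T ⊆ D := hDA.subset_of_cyclicallyConnected hT.2.1 <| hCn.mono fun y hy =>
      ⟨hCT hy.1, by obtain ⟨s, hs, rfl⟩ := hy.2; exact hfD s ⟨hs.1.le, hs.2⟩⟩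
    refine ⟨a, T, hT.arcClosed, hTD.trans inter_subset_right, ?_, hT.nontrivial, Or.inl hT⟩
    exact subset_antisymm (fun y hy => hKD ⟨hy.1, hTD hy.2⟩)
      (singleton_subset_iff.2 ⟨haK, hCT (h0 ▸ hC0)⟩)
  · push Not at hcase
    have hcpt : IsCompact (D \ interior (V a)) :=
      (hDA.isClosed.sdiff isOpen_interior).isCompact
    have hsub : D \ interior (V a) ⊆ branch a x := by
      rintro y ⟨⟨rfl | hy, -⟩, hyV⟩
      · exact (hyV (mem_interior_iff_mem_nhds.2 (hV _))).elim
      · exact hy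
    obtain ⟨δ₀, hδ₀, hev⟩ := Metric.eventually_nhds_iff.1 (eventually_subset_branch hf h0 hcpt hsub)
    obtain ⟨s, ⟨hs0, hs1⟩, hs⟩ := hcase (min δ₀ 1) (lt_min hδ₀ one_pos)
    have hsI : s ∈ Icc (0 : ℝ) 1 := ⟨hs0.le, (hs1.trans_le (min_le_right _ _)).le⟩
    have hsb := hev (y := s) (by
      rw [Real.dist_0_eq_abs, abs_of_pos hs0]; exact hs1.trans_le (min_le_left _ _))
    rw [h0, h1] at hs
    have haK' : a ∈ D ∩ (branch (f s) x)ᶜ := ⟨hDa, fun h => hs (JoinedIn.symm h)⟩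
    refine ⟨a, D ∩ (branch (f s) x)ᶜ, hDA.inter (arcClosed_compl_branch _ _) ⟨a, haK'⟩,
      fun y hy => hy.1.2, ?_, ⟨a, haK', f s, ⟨hfD s hsI, notMem_branch _ _⟩, fun h => ?_⟩,
      Or.inr fun y hy => ?_⟩
    · exact subset_antisymm (fun y hy => hKD ⟨hy.1, hy.2.1⟩) (singleton_subset_iff.2 ⟨haK, haK'⟩)
    · exact hs0.ne (hi ⟨le_rfl, zero_le_one⟩ hsI (h0.trans h))
    · by_contra hyV
      exact hy.2 (hsb ⟨hy.1, fun h => hyV (interior_subset h)⟩)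

/-- Arc-closed sets with the same essential cyclic elements carry the same paths. -/
theorem pathsDeform [CompactSpace X] (hX : LocSimplyConnected X) {K₀ L : Set X}
    (hK₀ : ArcClosed K₀) (hL : ArcClosed L) (hsub : K₀ ⊆ L)
    (hnull : ∀ T, MaximalCyclic T → T ⊆ L → ¬ T ⊆ K₀ → NullLoops T) : PathsDeform L K₀ := by
  choose V hVn _ _ hVs using fun x : X => hX x Set.univ univ_mem
  obtain ⟨K, hK₀K, hmax⟩ := zorn_subset_nonempty
    {K | ArcClosed K ∧ K₀ ⊆ K ∧ K ⊆ L ∧ PathsDeform K K₀} (fun c hc hchain hne => by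
      refine ⟨closure (⋃₀ c), ⟨closure_sUnion (fun K hK => (hc hK).1) hchain hne, ?_, ?_, ?_⟩,
        fun K hK => (subset_sUnion_of_mem hK).trans subset_closure⟩
      · obtain ⟨K, hK⟩ := hne
        exact (hc hK).2.1.trans ((subset_sUnion_of_mem hK).trans subset_closure)
      · exact closure_minimal (sUnion_subset fun K hK => (hc hK).2.2.1) hL.isClosed
      · exact pathsDeform_closure_sUnion hX (fun K hK => (hc hK).1) hchain hne
          (fun K hK => (hc hK).2.1) fun K hK => (hc hK).2.2.2) K₀
    ⟨hK₀, Subset.rfl, hsub, fun x _ y _ γ hγ => ⟨γ, hγ, rfl⟩⟩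
  obtain ⟨hK, -, hKL, hdef⟩ := hmax.prop
  by_cases hne : K = L
  · exact hne ▸ hdef
  obtain ⟨a, K', hK', hK'L, hKK', hnt, hor⟩ := exists_attached hK hL hKL hne V hVn
  have hK'K : ¬ K' ⊆ K := fun h => by
    rw [inter_eq_self_of_subset_right h] at hKK'
    exact not_nontrivial_singleton (hKK' ▸ hnt)
  have hn : NullLoops K' := by
    rcases hor with hT | hV
    · exact hnull K' hT hK'L fun h => hK'K (h.trans hK₀K)
    · have := hVs a
      exact NullLoops.of_subset_simplyConnected hV
  exact (hK'K (subset_union_right.trans (hmax.le_of_ge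
    ⟨hK.union hK' hKK', hK₀K.trans subset_union_left, union_subset hKL hK'L,
      (pathsDeform_union hX hK hK' hKK' hn).trans hdef hK₀K⟩ subset_union_left))).elim

theorem fundamentalGroup_equiv [CompactSpace X] (hX : LocSimplyConnected X) {K₀ L : Set X}
    (hK₀ : ArcClosed K₀) (hL : ArcClosed L) (hsub : K₀ ⊆ L)
    (hnull : ∀ T, MaximalCyclic T → T ⊆ L → ¬ T ⊆ K₀ → NullLoops T) {x : X} (hx : x ∈ K₀) :
    Nonempty (FundamentalGroup L ⟨x, hsub hx⟩ ≃* FundamentalGroup K₀ ⟨x, hx⟩) := by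
  have h : (inclusionHom L (hsub hx)).range = (inclusionHom K₀ hx).range := by
    refine le_antisymm ?_ (range_inclusionHom_mono hx hsub)
    rintro _ ⟨p, rfl⟩
    obtain ⟨γ, rfl⟩ := Path.Homotopic.Quotient.mk_surjective p
    obtain ⟨γ', hγ', e⟩ := pathsDeform hX hK₀ hL hsub hnull x hx x hx
      (γ.map continuous_subtype_val) (by rintro _ ⟨t, rfl⟩; exact (γ t).2)
    rw [inclusionHom_mk, e]
    exact mk_mem_range_inclusionHom hx γ' hγ'
  exact ⟨(MonoidHom.ofInjective (hL.inclusionHom_injective (hsub hx))).trans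
    ((MulEquiv.subgroupCongr h).trans
      (MonoidHom.ofInjective (hK₀.inclusionHom_injective hx)).symm)⟩

end ArcClosed

section FreeProduct

open Monoid

variable {ι : Type*} (G : ι → Type*) [∀ i, Group (G i)]

open Classical in
theorem Monoid.CoprodI.nonempty_coprod_mulEquiv (p : ι → Prop) :
    Nonempty (Coprod (CoprodI fun i : {i // p i} => G i) (CoprodI fun i : {i // ¬ p i} => G i) ≃*
      CoprodI G) := by
  let f : Coprod (CoprodI fun i : {i // p i} => G i) (CoprodI fun i : {i // ¬ p i} => G i) →*
      CoprodI G :=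
    Coprod.lift (CoprodI.lift fun i => CoprodI.of) (CoprodI.lift fun i => CoprodI.of)
  let g : CoprodI G →*
      Coprod (CoprodI fun i : {i // p i} => G i) (CoprodI fun i : {i // ¬ p i} => G i) :=
    CoprodI.lift fun i => if h : p i
      then Coprod.inl.comp (CoprodI.of (M := fun i : {i // p i} => G i) (i := ⟨i, h⟩))
      else Coprod.inr.comp (CoprodI.of (M := fun i : {i // ¬ p i} => G i) (i := ⟨i, h⟩))
  refine ⟨f.toMulEquiv g (Coprod.hom_ext (CoprodI.ext_hom _ _ fun i => ?_)
    (CoprodI.ext_hom _ _ fun i => ?_)) (CoprodI.ext_hom _ _ fun i => ?_)⟩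
  · ext m
    simp [f, g, i.2]
  · ext m
    simp [f, g, i.2]
  · ext m
    by_cases h : p i <;> simp [f, g, h]

theorem Monoid.CoprodI.nonempty_mulEquiv_of_unique [Unique ι] :
    Nonempty (G default ≃* CoprodI G) := by
  refine ⟨(CoprodI.of (M := G) (i := default)).toMulEquiv
    (CoprodI.lift fun i => (Unique.eq_default i) ▸ MonoidHom.id (G i)) ?_ (CoprodI.ext_hom _ _ ?_)⟩
  · ext m
    simp
  · intro i
    obtain rfl := Unique.eq_default i
    ext m
    simp

theorem Monoid.CoprodI.subsingleton_of_isEmpty [IsEmpty ι] : Subsingleton (CoprodI G) :=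
  ⟨fun x y => by
    have h : MonoidHom.id (CoprodI G) = 1 := CoprodI.ext_hom _ _ fun i => isEmptyElim i
    exact (DFunLike.congr_fun h x).trans (DFunLike.congr_fun h y).symm⟩

end FreeProduct

theorem subsingleton_fundamentalGroup_singleton {X : Type*} [TopologicalSpace X] (x : X)
    (z : ({x} : Set X)) : Subsingleton (FundamentalGroup ({x} : Set X) z) := by
  have : Subsingleton (Path z z) := ⟨fun γ δ => Path.ext (Subsingleton.elim _ _)⟩
  exact ⟨fun p q => by
    obtain ⟨γ, rfl⟩ := Path.Homotopic.Quotient.mk_surjective p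
    obtain ⟨δ, rfl⟩ := Path.Homotopic.Quotient.mk_surjective q
    rw [Subsingleton.elim γ δ]⟩

section

variable {X : Type} [MetricSpace X] [CompactSpace X] [PathConnectedSpace X]
  [LocallyPathConnectedSpace X]

/-- The fundamental group of an arc-closed set is the free product of those of its cyclic elements,
as soon as finitely many of these carry all the essential loops. -/
theorem ArcClosed.fundamentalGroup_mulEquiv_coprodI (hX : LocSimplyConnected X) (n : ℕ) :
    ∀ {ι : Type} [Finite ι] (_ : Nat.card ι = n) {T : ι → Set X} (_ : Function.Injective T)
      (_ : ∀ i, MaximalCyclic (T i)) {L : Set X} (_ : ArcClosed L) (_ : ∀ i, T i ⊆ L)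
      (_ : ∀ T', MaximalCyclic T' → T' ⊆ L → (∀ i, T' ≠ T i) → NullLoops T')
      (pts : ∀ i, T i) (x : L),
      Nonempty (FundamentalGroup L x ≃*
        Monoid.CoprodI fun i => FundamentalGroup (T i) (pts i)) := by
  induction n using Nat.strong_induction_on with
  | _ n ih =>
  intro ι _ hcard T hinj hT L hL hTL hnull pts x
  have hLp : PathConnectedSpace L := isPathConnected_iff_pathConnectedSpace.1 hL.isPathConnected
  rcases isEmpty_or_nonempty ι with he | hne
  · obtain ⟨e⟩ := fundamentalGroup_equiv hX (ArcClosed.singleton x.1) hL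
      (singleton_subset_iff.2 x.2) (fun T' hT' hT'L _ => hnull T' hT' hT'L fun i => isEmptyElim i)
      (mem_singleton x.1)
    have h1 := subsingleton_fundamentalGroup_singleton x.1 ⟨x.1, mem_singleton x.1⟩
    have h2 := Monoid.CoprodI.subsingleton_of_isEmpty fun i => FundamentalGroup (T i) (pts i)
    have h3 := e.toEquiv.subsingleton
    exact ⟨⟨⟨fun _ => 1, fun _ => 1, fun _ => Subsingleton.elim _ _, fun _ => Subsingleton.elim _ _⟩,
      fun _ _ => Subsingleton.elim _ _⟩⟩
  rcases subsingleton_or_nontrivial ι with hs | hnt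
  · have : Unique ι := Classical.choice (unique_iff_subsingleton_and_nonempty ι |>.2 ⟨hs, hne⟩)
    obtain ⟨e⟩ := fundamentalGroup_equiv hX (hT default).arcClosed hL (hTL default)
      (fun T' hT' hT'L h => hnull T' hT' hT'L fun i hi => h (by
        rw [hi, Subsingleton.elim i default])) (pts default).2
    obtain ⟨e'⟩ :=
      Monoid.CoprodI.nonempty_mulEquiv_of_unique fun i => FundamentalGroup (T i) (pts i)
    exact ⟨((FundamentalGroup.fundamentalGroupMulEquivOfPathConnected _ _).trans e).trans e'⟩
  obtain ⟨i, j, hij⟩ := exists_pair_ne ι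
  obtain ⟨y, hyj, hyi⟩ : ∃ y ∈ T j, y ∉ T i := not_subset.1 fun h =>
    hij (hinj ((hT j).2.2 (T i) (hT i).2.1 h))
  set a := gate (T i) y with ha
  have hai : a ∈ T i := (hT i).arcClosed.gate_mem y
  have hya : y ≠ a := fun h => hyi (h ▸ hai)
  have hyb : y ∈ branch a y := mem_pathComponentIn_self hya
  set A := (branch a y)ᶜ ∩ L with hA
  set B := insert a (branch a y) ∩ L with hB
  have haA : a ∈ A := ⟨notMem_branch a y, hTL i hai⟩
  have haB : a ∈ B := ⟨Or.inl rfl, hTL i hai⟩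
  have hAA : ArcClosed A := (arcClosed_compl_branch a y).inter hL ⟨a, haA⟩
  have hBB : ArcClosed B := (arcClosed_insert_branch a y).inter hL ⟨a, haB⟩
  have hAB : A ∩ B = {a} := by
    refine subset_antisymm ?_ (singleton_subset_iff.2 ⟨haA, haB⟩)
    rintro z ⟨⟨h1, -⟩, ⟨h2 | h2, -⟩⟩
    · exact h2
    · exact (h1 h2).elim
  have hABL : A ∪ B = L := by
    refine subset_antisymm (union_subset inter_subset_right inter_subset_right) fun z hz => ?_
    by_cases h : z ∈ branch a y
    · exact Or.inr ⟨Or.inr h, hz⟩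
    · exact Or.inl ⟨h, hz⟩
  have hTB : ∀ k, ¬ T k ⊆ A → T k ⊆ B := by
    intro k hk z hz
    obtain ⟨w, hw, hwA⟩ := not_subset.1 hk
    have hwb : w ∈ branch a y := by_contra fun h => hwA ⟨h, hTL k hw⟩
    by_cases hza : z = a
    · exact hza ▸ haB
    · refine ⟨Or.inr ?_, hTL k hz⟩
      have hwa : w ≠ a := fun h => notMem_branch a y (h ▸ hwb)
      have hc := (hT k).2.1.isPathConnected_diff ⟨w, hw, hwa⟩
      exact JoinedIn.trans hwb
        ((hc.joinedIn w ⟨hw, hwa⟩ z ⟨hz, hza⟩).mono fun v hv => hv.2)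
  have hTAB : ∀ k, T k ⊆ A → ¬ T k ⊆ B := fun k h1 h2 =>
    not_nontrivial_singleton ((hT k).nontrivial.mono ((subset_inter h1 h2).trans hAB.subset))
  have hiA : T i ⊆ A := fun z hz => ⟨fun h => notMem_branch a y (by
    have hz' : z ∈ ({a} : Set X) := (hT i).arcClosed.insert_branch_inter y ▸ ⟨hz, Or.inr h⟩
    exact hz' ▸ h), hTL i hz⟩
  have hjA : ¬ T j ⊆ A := fun h => (h hyj).1 hyb
  obtain ⟨eA⟩ := ih (Nat.card {k // T k ⊆ A}) (hcard ▸ Finite.card_subtype_lt hjA) rfl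
    (T := fun k : {k // T k ⊆ A} => T k) (hinj.comp Subtype.val_injective) (fun k => hT k) hAA
    (fun k => k.2) (fun T' hT' hT'A h => hnull T' hT' (hT'A.trans inter_subset_right)
      fun k hk => h ⟨k, hk ▸ hT'A⟩ hk) (fun k => pts k) ⟨a, haA⟩
  obtain ⟨eB⟩ := ih (Nat.card {k // ¬ T k ⊆ A}) (hcard ▸ Finite.card_subtype_lt (not_not.2 hiA)) rfl
    (T := fun k : {k // ¬ T k ⊆ A} => T k) (hinj.comp Subtype.val_injective) (fun k => hT k) hBB
    (fun k => hTB k k.2) (fun T' hT' hT'B h => hnull T' hT' (hT'B.trans inter_subset_right)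
      fun k hk => h ⟨k, fun hkA => hTAB k hkA (hk ▸ hT'B)⟩ hk) (fun k => pts k) ⟨a, haB⟩
  obtain ⟨e⟩ := hAA.fundamentalGroup_union hX hBB hAB haA haB
  obtain ⟨e'⟩ := Monoid.CoprodI.nonempty_coprod_mulEquiv
    (fun k => FundamentalGroup (T k) (pts k)) fun k => T k ⊆ A
  clear_value A B
  subst hABL
  exact ⟨(FundamentalGroup.fundamentalGroupMulEquivOfPathConnected _ _).trans
    (e.trans ((eA.coprodCongr eB).trans e'))⟩

end

theorem LocSimplyConnected.locallyPathConnectedSpace {X : Type} [TopologicalSpace X]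
    (hX : LocSimplyConnected X) : LocallyPathConnectedSpace X := by
  refine ⟨fun x => ⟨fun U => ⟨fun hU => ?_, fun ⟨V, hV, hVU⟩ => mem_of_superset hV.1 hVU⟩⟩⟩
  obtain ⟨V, hV, hVU, -, hVs⟩ := hX x U hU
  exact ⟨V, ⟨hV, isPathConnected_iff_pathConnectedSpace.2 inferInstance⟩, hVU⟩

/-- Fundamental group formula: if `X` is a locally simply connected Peano space whose
maximal cyclic subsets are enumerated by `(T n)`, then for all sufficiently large `n`,
`π₁(X) ≅ π₁(T 0) * ⋯ * π₁(T (n-1))`. -/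
theorem fundamentalGroup_eq_free_product_of_maximalCyclic
    (X : Type) [MetricSpace X] [CompactSpace X] [ConnectedSpace X] [LocallyConnectedSpace X]
    (hls : LocSimplyConnected X)
    (T : ℕ → Set X) (hinj : Function.Injective T)
    (henum : Set.range T = {C : Set X | MaximalCyclic C}) (x₀ : X) :
    ∃ N : ℕ, ∀ n ≥ N, ∀ pts : (i : Fin n) → ↥(T i.val),
      Nonempty (FundamentalGroup X x₀ ≃*
        Monoid.CoprodI fun i : Fin n => FundamentalGroup ↥(T i.val) (pts i)) := by
  have := hls.locallyPathConnectedSpace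
  have : PathConnectedSpace X := pathConnectedSpace_iff_connectedSpace.2 inferInstance
  have hT : ∀ n, MaximalCyclic (T n) := fun n => henum.subset (mem_range_self n)
  obtain ⟨lam, hlam, hV⟩ := hls.exists_lebesgue
  obtain ⟨N, hN⟩ := (finite_setOf_large_maximalCyclic hinj hT hlam).bddAbove
  refine ⟨N + 1, fun n hn pts => ?_⟩
  have hnull : ∀ T', MaximalCyclic T' → T' ⊆ univ → (∀ i : Fin n, T' ≠ T i) → NullLoops T' := by
    intro T' hT' _ hne
    obtain ⟨m, rfl⟩ : T' ∈ range T := henum.symm.subset hT'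
    have hm : N < m := by
      by_contra! h
      exact hne ⟨m, by omega⟩ rfl
    obtain ⟨x, hx⟩ := hT'.nontrivial.nonempty
    obtain ⟨V, hVs, hVb⟩ := hV x
    refine NullLoops.of_subset_simplyConnected (V := V) fun y hy => hVb ?_
    by_contra hyb
    exact hm.not_ge (hN ⟨y, hy, x, hx, not_lt.1 hyb⟩)
  have : Nonempty X := ⟨x₀⟩
  obtain ⟨e⟩ := ArcClosed.fundamentalGroup_mulEquiv_coprodI hls _ rfl
    (hinj.comp Fin.val_injective) (fun i : Fin n => hT i) ArcClosed.univ
    (fun i => subset_univ _) hnull pts ⟨x₀, mem_univ x₀⟩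
  obtain ⟨e'⟩ : Nonempty (FundamentalGroup (univ : Set X) ⟨x₀, mem_univ x₀⟩ ≃*
      FundamentalGroup X x₀) :=
    ⟨MulEquiv.ofBijective (inclusionHom univ (mem_univ x₀))
      ⟨ArcClosed.univ.inclusionHom_injective _, fun p => by
        obtain ⟨γ, rfl⟩ := Path.Homotopic.Quotient.mk_surjective p
        exact mk_mem_range_inclusionHom _ γ (subset_univ _)⟩⟩
  exact ⟨e'.symm.trans e⟩
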